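/- arXiv:1501.01690 — 2 statements merged into one kernel-verified Lean document; each statement's English description precedes it below -/
import Mathlib

section
/- Suppose a is an action of a group Γ on a Polish space X by Borel automorphisms which has a paradoxical decomposition (equivalently, by Tarski's theorem, is nonamenable). Then there exists a 4-regular acyclic a-Lipschitz graph G on X and a comeager G-invariant Borel set A ⊆ X such that the induced graph G ↾ A is Borel. -/
open scoped Pointwise

/-- The families `A₁,…,Aₙ, B₁,…,B_m` together with group elements `α₁,…,αₙ, β₁,…,β_m` form a
paradoxical decomposition of the action of `Γ` on `X`. -/
def IsParadoxicalDecomposition {Γ X : Type*} [Group Γ] [MulAction Γ X]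
    {n m : ℕ} (A : Fin n → Set X) (B : Fin m → Set X) (α : Fin n → Γ) (β : Fin m → Γ) : Prop :=
  (∀ i j, i ≠ j → Disjoint (A i) (A j)) ∧
  (∀ i j, i ≠ j → Disjoint (B i) (B j)) ∧
  (∀ i j, Disjoint (A i) (B j)) ∧
  ((⋃ i, A i) ∪ (⋃ j, B j)) = Set.univ ∧
  (∀ i j, i ≠ j → Disjoint (α i • A i) (α j • A j)) ∧
  (∀ i j, i ≠ j → Disjoint (β i • B i) (β j • B j)) ∧
  (⋃ i, α i • A i) = Set.univ ∧
  (⋃ j, β j • B j) = Set.univ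

/-!
A paradoxical action expands: there is a finite `S ⊆ Γ` with `d * |F| ≤ |S • F|` for all finite `F`,
with any `d` after iterating the paradox. By Hall's theorem every point `x` can then be given
`d - 1` points `c i x` of `S • x`, all of them distinct. To do this in a Borel way on a comeager
invariant set, serve countably many sets of points one after the other, chosen by a Baire category
argument. Each of these sets consists of points that are far apart in the graph of overlapping
neighborhoods `S • x` and that are served with a pattern keeping Hall's condition on their orbits.
A finite set affected by several of them at once is large, and so its surplus of neighbors pays for
the loss. Outside the comeager set no measurability is needed and Hall's theorem suffices.

Joining each `x` to its children `c i x` gives a graph in which all degrees are right, except at the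
points without a parent, and which is acyclic except for at most one cycle per component. Shifting
the children of one branch along the orbit of another, as in Hilbert's hotel, first cuts the cycles
and then gives every parentless point one more child.
-/

section HilbertHotel

variable {X : Type*} {f : X → X} {R : Set X}

/-- The union of the forward orbits under `f` of the points of `R`. -/
def forwardOrbit (f : X → X) (R : Set X) : Set X := ⋃ n : ℕ, f^[n] '' R

open Classical in
/-- The Hilbert hotel map: every point of the forward orbit of `R` moves one step along `f`, and
all other points stay where they are. It vacates exactly `R` when `f` never returns to `R`. -/
noncomputable def hotelShift (f : X → X) (R : Set X) : X → X := (forwardOrbit f R).piecewise f id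

theorem subset_forwardOrbit : R ⊆ forwardOrbit f R := fun x hx =>
  Set.mem_iUnion.2 ⟨0, x, hx, rfl⟩

theorem apply_mem_forwardOrbit {x : X} (hx : x ∈ forwardOrbit f R) : f x ∈ forwardOrbit f R := by
  obtain ⟨n, r, hr, rfl⟩ := Set.mem_iUnion.1 hx
  exact Set.mem_iUnion.2 ⟨n + 1, r, hr, Function.iterate_succ_apply' f n r⟩

theorem hotelShift_of_mem {x : X} (hx : x ∈ forwardOrbit f R) : hotelShift f R x = f x := by
  classical exact Set.piecewise_eq_of_mem _ _ _ hx

theorem hotelShift_of_notMem {x : X} (hx : x ∉ forwardOrbit f R) : hotelShift f R x = x := by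
  classical exact Set.piecewise_eq_of_notMem _ _ _ hx

theorem hotelShift_eq_or_eq (f : X → X) (R : Set X) (x : X) :
    hotelShift f R x = f x ∨ hotelShift f R x = x :=
  (em (x ∈ forwardOrbit f R)).imp hotelShift_of_mem hotelShift_of_notMem

theorem hotelShift_mem_forwardOrbit_iff {x : X} :
    hotelShift f R x ∈ forwardOrbit f R ↔ x ∈ forwardOrbit f R := by
  by_cases hx : x ∈ forwardOrbit f R
  · simpa only [hotelShift_of_mem hx, hx, iff_true] using apply_mem_forwardOrbit hx
  · rw [hotelShift_of_notMem hx]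

theorem hotelShift_injective (hf : Function.Injective f) :
    Function.Injective (hotelShift f R) := by
  intro x y hxy
  have hiff : x ∈ forwardOrbit f R ↔ y ∈ forwardOrbit f R := by
    rw [← hotelShift_mem_forwardOrbit_iff, hxy, hotelShift_mem_forwardOrbit_iff]
  by_cases hx : x ∈ forwardOrbit f R
  · rw [hotelShift_of_mem hx, hotelShift_of_mem (hiff.1 hx)] at hxy
    exact hf hxy
  · rwa [hotelShift_of_notMem hx, hotelShift_of_notMem (mt hiff.2 hx)] at hxy

theorem range_hotelShift (hR : Disjoint R (Set.range f)) : Set.range (hotelShift f R) = Rᶜ := by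
  ext y
  constructor
  · rintro ⟨x, rfl⟩ hx
    have hx' := hotelShift_mem_forwardOrbit_iff.1 (subset_forwardOrbit (f := f) hx)
    rw [hotelShift_of_mem hx'] at hx
    exact hR.notMem_of_mem_left hx ⟨x, rfl⟩
  · intro hy
    by_cases hy' : y ∈ forwardOrbit f R
    · obtain ⟨n, r, hr, rfl⟩ := Set.mem_iUnion.1 hy'
      cases n with
      | zero => exact absurd hr hy
      | succ n =>
        refine ⟨f^[n] r, ?_⟩
        rw [hotelShift_of_mem (Set.mem_iUnion.2 ⟨n, r, hr, rfl⟩), Function.iterate_succ_apply']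
    · exact ⟨y, hotelShift_of_notMem hy'⟩

end HilbertHotel

section FunctionalForest

open Relation

variable {X : Type*} {D : X → X → Prop}

/-- Deleting the edge from `p` to its child `x` separates `x` and its descendants from `p`. -/
theorem isAcyclic_fromRel (hD : Relator.LeftUnique D) (hcyc : ∀ x, ¬TransGen D x x) :
    (SimpleGraph.fromRel D).IsAcyclic := by
  have not_reachable {p x : X} (hpx : D p x) :
      ¬(SimpleGraph.fromRel D \ SimpleGraph.fromEdgeSet {s(p, x)}).Reachable p x := by
    rintro ⟨w⟩
    have descendant_of_adj {u v : X}
        (huv : (SimpleGraph.fromRel D \ SimpleGraph.fromEdgeSet {s(p, x)}).Adj u v)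
        (hv : ReflTransGen D x v) : ReflTransGen D x u := by
      simp only [SimpleGraph.sdiff_adj, SimpleGraph.fromRel_adj, SimpleGraph.fromEdgeSet_adj,
        Set.mem_singleton_iff, not_and_not_right] at huv
      obtain ⟨⟨hne, huv | hvu⟩, hedge⟩ := huv
      · rcases hv.cases_tail with rfl | ⟨v', hv', hv'v⟩
        · exact absurd (hedge (by rw [hD huv hpx])) hne
        · rwa [hD huv hv'v]
      · exact hv.tail hvu
    have descendant_of_walk {u v : X}
        (w : (SimpleGraph.fromRel D \ SimpleGraph.fromEdgeSet {s(p, x)}).Walk u v)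
        (hv : ReflTransGen D x v) : ReflTransGen D x u := by
      induction w with
      | nil => exact hv
      | cons h _ ih => exact descendant_of_adj h (ih hv)
    exact hcyc x (TransGen.tail' (descendant_of_walk w .refl) hpx)
  rw [SimpleGraph.isAcyclic_iff_forall_adj_isBridge]
  intro v w hvw
  rw [SimpleGraph.isBridge_iff]
  rcases hvw.2 with h | h
  · exact not_reachable h
  · rw [Sym2.eq_swap]
    exact fun hr => not_reachable h hr.symm

theorem ncard_neighborSet_fromRel (hD : Relator.LeftUnique D) (hcyc : ∀ x, ¬TransGen D x x)
    {x : X} (hfin : {y | D x y}.Finite) :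
    ((SimpleGraph.fromRel D).neighborSet x).ncard = {y | D x y}.ncard + {y | D y x}.ncard := by
  have hne {u v : X} (h : D u v) : u ≠ v := by
    rintro rfl
    exact hcyc _ (.single h)
  have hunion : (SimpleGraph.fromRel D).neighborSet x = {y | D x y} ∪ {y | D y x} := by
    ext y
    simp only [SimpleGraph.mem_neighborSet, SimpleGraph.fromRel_adj, Set.mem_union,
      Set.mem_ofPred_eq, and_iff_right_iff_imp]
    exact fun h => h.elim hne fun h => (hne h).symm
  have hparent : {y | D y x}.Finite := Set.Subsingleton.finite fun _ h _ h' => hD h h'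
  rw [hunion, Set.ncard_union_eq _ hfin hparent]
  exact Set.disjoint_left.2 fun y h h' => hcyc x (.tail (.single h) h')

end FunctionalForest

section ChildRelation

open Relation

variable {X ι : Type*} {c : ι → X → X} {i₀ i₁ : ι} {R : Set X}

/-- `childRel c y x` says that `x` is a child of `y`, that is, one of the points `c i y`. -/
def childRel (c : ι → X → X) (y x : X) : Prop := ∃ i, c i y = x

/-- The points without a parent for `childRel c`. -/
def roots (c : ι → X → X) : Set X := {x | ∀ y, ¬childRel c y x}

/-- The points that lie on a cycle of `childRel c`. -/
def cyclicPoints (c : ι → X → X) : Set X := {x | TransGen (childRel c) x x}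

theorem childRel_apply (c : ι → X → X) (i : ι) (x : X) : childRel c x (c i x) := ⟨i, rfl⟩

theorem leftUnique_childRel (hc : Function.Injective2 c) : Relator.LeftUnique (childRel c) := by
  rintro y y' _ ⟨i, rfl⟩ ⟨j, hj⟩
  exact (hc hj).2.symm

theorem finite_setOf_childRel [Finite ι] (c : ι → X → X) (x : X) : {y | childRel c x y}.Finite :=
  Set.finite_range fun i => c i x

theorem ncard_childRel (hc : Function.Injective2 c) (x : X) :
    {y | childRel c x y}.ncard = Nat.card ι :=
  Set.ncard_range_of_injective (hc.left x)

theorem roots_eq_compl_iUnion_range (c : ι → X → X) : roots c = (⋃ i, Set.range (c i))ᶜ := by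
  ext x
  simp only [roots, childRel, Set.mem_ofPred_eq, Set.mem_compl_iff, Set.mem_iUnion, Set.mem_range,
    not_exists]
  exact forall_comm

theorem exists_mem_cyclicPoints_apply_eq {z : X} (hz : z ∈ cyclicPoints c) :
    ∃ i, ∃ y ∈ cyclicPoints c, c i y = z := by
  obtain ⟨y, hzy, i, hi⟩ := TransGen.tail'_iff.1 hz
  exact ⟨i, y, TransGen.head' ⟨i, hi⟩ hzy, hi⟩

theorem exists_apply_mem_cyclicPoints {z : X} (hz : z ∈ cyclicPoints c) :
    ∃ i, c i z ∈ cyclicPoints c := by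
  obtain ⟨_, ⟨i, rfl⟩, hi⟩ := TransGen.head'_iff.1 hz
  exact ⟨i, TransGen.tail' hi ⟨i, rfl⟩⟩

theorem exists_iterate_eq_of_transGen_childRel {f : X → X} (hf : ∀ i y, f (c i y) = y) {x y : X}
    (h : TransGen (childRel c) x y) : ∃ n > 0, f^[n] y = x := by
  induction h with
  | single h =>
    obtain ⟨i, rfl⟩ := h
    exact ⟨1, one_pos, hf i x⟩
  | tail _ h ih =>
    obtain ⟨i, rfl⟩ := h
    obtain ⟨n, -, hn⟩ := ih
    exact ⟨n + 1, n.succ_pos, by rw [Function.iterate_succ_apply, hf, hn]⟩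

/-- The parent map is injective on its periodic points, so only one child of a point can be one. -/
theorem eq_of_apply_mem_cyclicPoints (hc : Function.Injective2 c) {z : X} {i j : ι}
    (hi : c i z ∈ cyclicPoints c) (hj : c j z ∈ cyclicPoints c) : i = j := by
  have : Nonempty (ι × X) := ⟨(i, z)⟩
  obtain ⟨g, hg⟩ := hc.uncurry.hasLeftInverse
  have parent_apply (l : ι) (y : X) : (g (c l y)).2 = y := congrArg Prod.snd (hg (l, y))
  have cyclic_subset : cyclicPoints c ⊆ Function.periodicPts fun x => (g x).2 := fun x hx =>
    exists_iterate_eq_of_transGen_childRel parent_apply hx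
  have happly : c i z = c j z :=
    (Function.bijOn_periodicPts _).injOn (cyclic_subset hi) (cyclic_subset hj)
      ((parent_apply i z).trans (parent_apply j z).symm)
  exact (hc happly).1

theorem cyclicPoints_eq_iUnion (c : ι → X → X) : cyclicPoints c =
    ⋃ (i : ι) (w : List ι), {x | c i (w.foldr c x) = x} := by
  have exists_word {x y : X} : TransGen (childRel c) x y ↔
      ∃ (i : ι) (w : List ι), c i (w.foldr c x) = y := by
    constructor
    · intro h
      induction h with
      | single h => exact h.imp fun i hi => ⟨[], hi⟩
      | tail _ h ih =>
        obtain ⟨i, w, rfl⟩ := ih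
        exact h.imp fun j hj => ⟨i :: w, hj⟩
    · rintro ⟨i, w, rfl⟩
      induction w generalizing i with
      | nil => exact .single (childRel_apply c i x)
      | cons j w ih => exact (ih j).tail (childRel_apply c i _)
  ext x
  simp only [cyclicPoints, exists_word, Set.mem_ofPred_eq, Set.mem_iUnion]

/-- The index of a child of `z` that lies on a cycle, and `i₁` if there is no such child. -/
noncomputable def cycleIndex (c : ι → X → X) (i₁ : ι) (z : X) : ι :=
  open Classical in if h : ∃ i, c i z ∈ cyclicPoints c then h.choose else i₁

theorem cycleIndex_eq_iff (hc : Function.Injective2 c) {z : X} {i : ι} :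
    cycleIndex c i₁ z = i ↔
      c i z ∈ cyclicPoints c ∨ i₁ = i ∧ ∀ j, c j z ∉ cyclicPoints c := by
  unfold cycleIndex
  split_ifs with h
  · constructor
    · rintro rfl
      exact Or.inl h.choose_spec
    · rintro (hi | ⟨-, hall⟩)
      · exact eq_of_apply_mem_cyclicPoints hc h.choose_spec hi
      · exact absurd h.choose_spec (hall _)
  · simp only [not_exists] at h
    simp only [h, false_or, not_false_eq_true, implies_true, and_true]

open Classical in
/-- Relabel the branches at each point so that branch `i₁` follows the cycle through the point. -/
noncomputable def alignCycles (c : ι → X → X) (i₁ : ι) : ι → X → X :=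
  fun i x => c (Equiv.swap i₁ (cycleIndex c i₁ x) i) x

theorem alignCycles_self (x : X) : alignCycles c i₁ i₁ x = c (cycleIndex c i₁ x) x := by
  classical rw [alignCycles, Equiv.swap_apply_left]

theorem alignCycles_injective2 (hc : Function.Injective2 c) :
    Function.Injective2 (alignCycles c i₁) := by
  intro i j x y h
  obtain ⟨hij, rfl⟩ := hc h
  exact ⟨Equiv.injective _ hij, rfl⟩

theorem childRel_alignCycles : childRel (alignCycles c i₁) = childRel c := by
  classical
  ext y x
  exact ((Equiv.swap i₁ (cycleIndex c i₁ y)).surjective.exists (p := fun i => c i y = x)).symm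

theorem cyclicPoints_alignCycles : cyclicPoints (alignCycles c i₁) = cyclicPoints c := by
  simp only [cyclicPoints, childRel_alignCycles]

theorem image_alignCycles_cyclicPoints (hc : Function.Injective2 c) :
    alignCycles c i₁ i₁ '' cyclicPoints (alignCycles c i₁) = cyclicPoints (alignCycles c i₁) := by
  rw [cyclicPoints_alignCycles]
  ext z
  constructor
  · rintro ⟨y, hy, rfl⟩
    obtain ⟨i, hi⟩ := exists_apply_mem_cyclicPoints hy
    rwa [alignCycles_self, (cycleIndex_eq_iff hc).2 (Or.inl hi)]
  · intro hz
    obtain ⟨i, y, hy, rfl⟩ := exists_mem_cyclicPoints_apply_eq hz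
    exact ⟨y, hy, by rw [alignCycles_self, (cycleIndex_eq_iff hc).2 (Or.inl hz)]⟩

open Classical in
/-- Precompose branch `i₁` with the Hilbert hotel map of `R` along branch `i₀`, so that the points
of `c i₁ '' R` lose their parent. -/
noncomputable def reroute (c : ι → X → X) (i₀ i₁ : ι) (R : Set X) : ι → X → X :=
  Function.update c i₁ (c i₁ ∘ hotelShift (c i₀) R)

theorem reroute_self : reroute c i₀ i₁ R i₁ = c i₁ ∘ hotelShift (c i₀) R := by
  classical exact Function.update_self ..

theorem reroute_of_ne {i : ι} (hi : i ≠ i₁) : reroute c i₀ i₁ R i = c i := by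
  classical exact Function.update_of_ne hi ..

theorem reroute_injective2 (hc : Function.Injective2 c) :
    Function.Injective2 (reroute c i₀ i₁ R) := by
  have hshift : Function.Injective (hotelShift (c i₀) R) := hotelShift_injective (hc.right i₀)
  intro i j x y h
  rcases eq_or_ne i i₁ with hi | hi <;> rcases eq_or_ne j i₁ with hj | hj
  · rw [hi, hj, reroute_self] at h
    exact ⟨hi.trans hj.symm, hshift (hc h).2⟩
  · rw [hi, reroute_self, reroute_of_ne hj] at h
    exact absurd (hc h).1.symm hj
  · rw [hj, reroute_self, reroute_of_ne hi] at h
    exact absurd (hc h).1 hi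
  · rw [reroute_of_ne hi, reroute_of_ne hj] at h
    exact hc h

theorem childRel_of_reroute {y x : X} (h : childRel (reroute c i₀ i₁ R) y x) :
    childRel c y x ∨ Comp (childRel c) (childRel c) y x := by
  obtain ⟨i, rfl⟩ := h
  rcases eq_or_ne i i₁ with rfl | hi
  · rw [reroute_self, Function.comp_apply]
    rcases hotelShift_eq_or_eq (c i₀) R y with h | h <;> rw [h]
    · exact Or.inr ⟨c i₀ y, childRel_apply c i₀ y, childRel_apply c i _⟩
    · exact Or.inl (childRel_apply c i y)
  · rw [reroute_of_ne hi]
    exact Or.inl (childRel_apply c i y)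

theorem transGen_childRel_of_reroute {y x : X} (h : childRel (reroute c i₀ i₁ R) y x) :
    TransGen (childRel c) y x := by
  rcases childRel_of_reroute h with h | ⟨z, hyz, hzx⟩
  exacts [.single h, .tail (.single hyz) hzx]

theorem roots_reroute (hc : Function.Injective2 c) (hR : Disjoint R (Set.range (c i₀))) :
    roots (reroute c i₀ i₁ R) = roots c ∪ c i₁ '' R := by
  have range_reroute_self : Set.range (reroute c i₀ i₁ R i₁) = c i₁ '' Rᶜ := by
    rw [reroute_self, Set.range_comp, range_hotelShift hR]
  ext x
  simp only [roots, childRel, Set.mem_union, Set.mem_ofPred_eq, Set.mem_image, not_exists]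
  constructor
  · intro hx
    by_contra! hcon
    obtain ⟨⟨y, i, rfl⟩, hxR⟩ := hcon
    rcases eq_or_ne i i₁ with rfl | hi
    · obtain ⟨y', hy'⟩ := range_reroute_self.ge ⟨y, fun hy => hxR y hy rfl, rfl⟩
      exact hx y' i hy'
    · exact hx y i (congrFun (reroute_of_ne hi) y)
  · rintro hx y i hi
    rcases eq_or_ne i i₁ with rfl | hne
    · obtain ⟨y', hy', rfl⟩ := range_reroute_self.le ⟨y, hi⟩
      rcases hx with hx | ⟨y'', hy'', hx⟩
      · exact hx y' i rfl
      · exact hy' ((hc hx).2 ▸ hy'')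
    · rw [reroute_of_ne hne] at hi
      rcases hx with hx | ⟨y', -, hx⟩
      · exact hx y i hi
      · exact hne (hc (hi.trans hx.symm)).1

theorem cyclicPoints_reroute_eq_empty (hc : Function.Injective2 c) (hi : i₀ ≠ i₁)
    (hZ : c i₁ '' cyclicPoints c = cyclicPoints c) :
    cyclicPoints (reroute c i₀ i₁ (cyclicPoints c)) = ∅ := by
  have hdisj : Disjoint (cyclicPoints c) (Set.range (c i₀)) := by
    rw [← hZ, Set.disjoint_left]
    rintro _ ⟨z, -, rfl⟩ ⟨y, hy⟩
    exact hi (hc hy).1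
  refine Set.eq_empty_of_forall_notMem fun x hx => ?_
  have hxZ : x ∈ cyclicPoints c := TransGen.closed (fun _ _ => transGen_childRel_of_reroute) _ _ hx
  have hroot : x ∈ roots (reroute c i₀ i₁ (cyclicPoints c)) := by
    rw [roots_reroute hc hdisj, hZ]
    exact Or.inr hxZ
  obtain ⟨i, y, -, hy⟩ := exists_mem_cyclicPoints_apply_eq hx
  exact hroot y ⟨i, hy⟩

/-- A relabelled and rerouted version of `c` all of whose cycles have been turned into roots. -/
noncomputable def unwind (c : ι → X → X) (i₀ i₁ : ι) : ι → X → X :=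
  reroute (alignCycles c i₁) i₀ i₁ (cyclicPoints (alignCycles c i₁))

theorem unwind_injective2 (hc : Function.Injective2 c) : Function.Injective2 (unwind c i₀ i₁) :=
  reroute_injective2 (alignCycles_injective2 hc)

theorem cyclicPoints_unwind (hc : Function.Injective2 c) (hi : i₀ ≠ i₁) :
    cyclicPoints (unwind c i₀ i₁) = ∅ :=
  cyclicPoints_reroute_eq_empty (alignCycles_injective2 hc) hi (image_alignCycles_cyclicPoints hc)

/-- Rerouting at the roots vacates the `i₁`-children of the roots, which become additional children
of their former parents. This gives every root one child more than the other points have, which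
makes up for its missing parent. -/
def forestRel (c : ι → X → X) (i₀ i₁ : ι) (y x : X) : Prop :=
  childRel (reroute c i₀ i₁ (roots c)) y x ∨ y ∈ roots c ∧ c i₁ y = x

theorem disjoint_roots_range (c : ι → X → X) (i : ι) : Disjoint (roots c) (Set.range (c i)) := by
  rw [Set.disjoint_left]
  rintro _ hx ⟨y, rfl⟩
  exact hx y (childRel_apply c i y)

theorem not_childRel_reroute_apply (hc : Function.Injective2 c) {y : X} (hy : y ∈ roots c)
    (x : X) : ¬childRel (reroute c i₀ i₁ (roots c)) x (c i₁ y) := by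
  have hroot : c i₁ y ∈ roots (reroute c i₀ i₁ (roots c)) := by
    rw [roots_reroute hc (disjoint_roots_range c i₀)]
    exact Or.inr ⟨y, hy, rfl⟩
  exact hroot x

theorem leftUnique_forestRel (hc : Function.Injective2 c) :
    Relator.LeftUnique (forestRel c i₀ i₁) := by
  rintro y y' x (h | ⟨hy, h⟩) (h' | ⟨hy', h'⟩)
  · exact leftUnique_childRel (reroute_injective2 hc) h h'
  · exact absurd (h' ▸ h) (not_childRel_reroute_apply hc hy' y)
  · exact absurd (h ▸ h') (not_childRel_reroute_apply hc hy y')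
  · exact (hc (h.trans h'.symm)).2

theorem not_transGen_forestRel (hcyc : cyclicPoints c = ∅) (x : X) :
    ¬TransGen (forestRel c i₀ i₁) x x := by
  intro h
  have hx : x ∈ cyclicPoints c := by
    refine TransGen.closed ?_ _ _ h
    rintro y x (h | ⟨-, h⟩)
    exacts [transGen_childRel_of_reroute h, .single ⟨i₁, h⟩]
  rwa [hcyc] at hx

theorem exists_forestRel_iff (hc : Function.Injective2 c) {x : X} :
    (∃ y, forestRel c i₀ i₁ y x) ↔ x ∉ roots c := by
  have hroot : x ∈ roots (reroute c i₀ i₁ (roots c)) ↔ x ∈ roots c ∨ x ∈ c i₁ '' roots c := by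
    rw [roots_reroute hc (disjoint_roots_range c i₀), Set.mem_union]
  have himage : x ∈ c i₁ '' roots c → x ∉ roots c := by
    rintro ⟨y, -, rfl⟩ hx
    exact hx y (childRel_apply c i₁ y)
  have hchild : (∃ y, childRel (reroute c i₀ i₁ (roots c)) y x) ↔
      x ∉ roots (reroute c i₀ i₁ (roots c)) := not_forall_not.symm
  simp only [forestRel, exists_or]
  rw [hchild, hroot, ← Set.mem_image]
  tauto

open Classical in
theorem ncard_forestRel [Finite ι] (hc : Function.Injective2 c) (x : X) :
    {y | forestRel c i₀ i₁ x y}.ncard = Nat.card ι + if x ∈ roots c then 1 else 0 := by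
  split_ifs with hx
  · have hinsert : {y | forestRel c i₀ i₁ x y} =
        insert (c i₁ x) {y | childRel (reroute c i₀ i₁ (roots c)) x y} := by
      ext y
      simp only [forestRel, Set.mem_ofPred_eq, Set.mem_insert_iff, hx, true_and]
      rw [or_comm, eq_comm]
    have hnotMem : c i₁ x ∉ {y | childRel (reroute c i₀ i₁ (roots c)) x y} :=
      not_childRel_reroute_apply hc hx x
    rw [hinsert, Set.ncard_insert_of_notMem hnotMem (finite_setOf_childRel _ x),
      ncard_childRel (reroute_injective2 hc)]
  · simp only [forestRel, hx, false_and, or_false, add_zero]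
    exact ncard_childRel (reroute_injective2 hc) x

open Classical in
theorem ncard_setOf_forestRel (hc : Function.Injective2 c) (x : X) :
    {y | forestRel c i₀ i₁ y x}.ncard = if x ∈ roots c then 0 else 1 := by
  have hexists : (∃ y, forestRel c i₀ i₁ y x) ↔ x ∉ roots c := exists_forestRel_iff hc
  split_ifs with hx
  · have hempty : {y | forestRel c i₀ i₁ y x} = ∅ :=
      Set.eq_empty_of_forall_notMem fun y hy => hexists.1 ⟨y, hy⟩ hx
    rw [hempty, Set.ncard_empty]
  · obtain ⟨y, hy⟩ := hexists.2 hx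
    exact Set.ncard_eq_one.2 ⟨y, Set.eq_singleton_iff_unique_mem.2
      ⟨hy, fun _ h => leftUnique_forestRel hc h hy⟩⟩

theorem ncard_neighborSet_forestRel [Finite ι] (hc : Function.Injective2 c)
    (hcyc : cyclicPoints c = ∅) (x : X) :
    ((SimpleGraph.fromRel (forestRel c i₀ i₁)).neighborSet x).ncard = Nat.card ι + 1 := by
  classical
  have hfin : {y | forestRel c i₀ i₁ x y}.Finite :=
    ((finite_setOf_childRel (reroute c i₀ i₁ (roots c)) x).union
      (Set.finite_singleton (c i₁ x))).subset fun y hy => hy.imp_right fun h => h.2.symm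
  rw [ncard_neighborSet_fromRel (leftUnique_forestRel hc) (not_transGen_forestRel hcyc) hfin,
    ncard_forestRel hc, ncard_setOf_forestRel hc]
  split_ifs <;> rfl

end ChildRelation

section LipschitzRelation

variable {Γ X ι : Type*} [Group Γ] [MulAction Γ X] {r s : X → X → Prop}

variable (Γ) in
/-- A relation on `X` is Lipschitz for the action of `Γ` if finitely many elements of `Γ` suffice to
move every point to all of its relatives. -/
def IsLipschitzRel (r : X → X → Prop) : Prop :=
  ∃ S : Finset Γ, ∀ x y, r x y → ∃ γ ∈ S, γ • x = y

theorem IsLipschitzRel.mono (hs : IsLipschitzRel Γ s) (h : ∀ x y, r x y → s x y) :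
    IsLipschitzRel Γ r :=
  hs.imp fun _ hS x y hxy => hS x y (h x y hxy)

theorem IsLipschitzRel.or (hr : IsLipschitzRel Γ r) (hs : IsLipschitzRel Γ s) :
    IsLipschitzRel Γ fun x y => r x y ∨ s x y := by
  classical
  obtain ⟨S, hS⟩ := hr
  obtain ⟨T, hT⟩ := hs
  refine ⟨S ∪ T, ?_⟩
  rintro x y (h | h)
  · exact (hS x y h).imp fun _ h => h.imp_left (Finset.mem_union_left T)
  · exact (hT x y h).imp fun _ h => h.imp_left (Finset.mem_union_right S)

theorem IsLipschitzRel.comp (hr : IsLipschitzRel Γ r) (hs : IsLipschitzRel Γ s) :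
    IsLipschitzRel Γ (Relation.Comp r s) := by
  classical
  obtain ⟨S, hS⟩ := hr
  obtain ⟨T, hT⟩ := hs
  refine ⟨T * S, ?_⟩
  rintro x z ⟨y, hxy, hyz⟩
  obtain ⟨γ, hγ, rfl⟩ := hS x y hxy
  obtain ⟨δ, hδ, rfl⟩ := hT _ z hyz
  exact ⟨δ * γ, Finset.mul_mem_mul hδ hγ, mul_smul δ γ x⟩

theorem IsLipschitzRel.flip (hr : IsLipschitzRel Γ r) : IsLipschitzRel Γ (flip r) := by
  classical
  obtain ⟨S, hS⟩ := hr
  refine ⟨S⁻¹, fun x y hyx => ?_⟩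
  obtain ⟨γ, hγ, rfl⟩ := hS y x hyx
  exact ⟨γ⁻¹, Finset.inv_mem_inv hγ, inv_smul_smul γ y⟩

theorem IsLipschitzRel.fromRel (hr : IsLipschitzRel Γ r) :
    IsLipschitzRel Γ (SimpleGraph.fromRel r).Adj :=
  (hr.or hr.flip).mono fun _ _ h => h.2

theorem IsLipschitzRel.reroute {c : ι → X → X} {i₀ i₁ : ι} {R : Set X}
    (hc : IsLipschitzRel Γ (childRel c)) : IsLipschitzRel Γ (childRel (reroute c i₀ i₁ R)) :=
  (hc.or (hc.comp hc)).mono fun _ _ => childRel_of_reroute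

theorem IsLipschitzRel.alignCycles {c : ι → X → X} {i₁ : ι} (hc : IsLipschitzRel Γ (childRel c)) :
    IsLipschitzRel Γ (childRel (alignCycles c i₁)) := by
  rwa [childRel_alignCycles]

theorem IsLipschitzRel.unwind {c : ι → X → X} {i₀ i₁ : ι} (hc : IsLipschitzRel Γ (childRel c)) :
    IsLipschitzRel Γ (childRel (unwind c i₀ i₁)) :=
  hc.alignCycles.reroute

theorem IsLipschitzRel.forestRel {c : ι → X → X} {i₀ i₁ : ι} (hc : IsLipschitzRel Γ (childRel c)) :
    IsLipschitzRel Γ (forestRel c i₀ i₁) :=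
  (hc.reroute.or hc).mono fun _ _ h => h.imp_right fun h => ⟨i₁, h.2⟩

end LipschitzRelation

section MeasurableForest

open MeasurableSpace

theorem measurableEq_of_countablySeparated (X : Type*) [MeasurableSpace X]
    [CountablySeparated X] : MeasurableEq X := by
  obtain ⟨f, hf, hinj⟩ := measurable_injection_nat_bool_of_countablySeparated X
  have hdiag : {p : X × X | f p.1 = f p.2} = Set.diagonal X := by
    ext p
    exact hinj.eq_iff
  exact ⟨hdiag ▸ measurableSet_eq_fun (hf.comp measurable_fst) (hf.comp measurable_snd)⟩

variable {Γ X ι : Type*} [Group Γ] [MulAction Γ X] [MeasurableSpace X] [MeasurableConstSMul Γ X]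
  [MeasurableEq X] {f : X → X} {c : ι → X → X} {i₀ i₁ : ι} {R : Set X}

theorem IsLipschitzRel.measurableSet_image {r : X → X → Prop} (hr : IsLipschitzRel Γ r)
    (hf : Measurable f) (hrf : ∀ x, r x (f x)) (hR : MeasurableSet R) :
    MeasurableSet (f '' R) := by
  obtain ⟨S, hS⟩ := hr
  have himage : f '' R = ⋃ γ ∈ S, {x | γ⁻¹ • x ∈ R ∧ f (γ⁻¹ • x) = x} := by
    ext x
    simp only [Set.mem_image, Set.mem_iUnion, Set.mem_ofPred_eq, exists_prop]
    constructor
    · rintro ⟨y, hy, rfl⟩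
      obtain ⟨γ, hγ, hγy⟩ := hS y (f y) (hrf y)
      rw [← hγy]
      exact ⟨γ, hγ, by rwa [inv_smul_smul], by rw [inv_smul_smul, hγy]⟩
    · rintro ⟨γ, -, hR, hx⟩
      exact ⟨_, hR, hx⟩
  rw [himage]
  refine S.measurableSet_biUnion fun γ _ => ?_
  exact (measurable_const_smul γ⁻¹ hR).inter
    (measurableSet_eq_fun (hf.comp (measurable_const_smul γ⁻¹)) measurable_id)

theorem IsLipschitzRel.measurableSet_forwardOrbit {r : X → X → Prop} (hr : IsLipschitzRel Γ r)
    (hf : Measurable f) (hrf : ∀ x, r x (f x)) (hR : MeasurableSet R) :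
    MeasurableSet (forwardOrbit f R) := by
  refine MeasurableSet.iUnion fun n => ?_
  induction n with
  | zero => rwa [Function.iterate_zero, Set.image_id]
  | succ n ih =>
    rw [Function.iterate_succ', Set.image_comp]
    exact hr.measurableSet_image hf hrf ih

theorem IsLipschitzRel.measurable_reroute (hL : IsLipschitzRel Γ (childRel c))
    (hc : ∀ i, Measurable (c i)) (hR : MeasurableSet R) (i : ι) :
    Measurable (_root_.reroute c i₀ i₁ R i) := by
  classical
  rcases eq_or_ne i i₁ with rfl | hi
  · rw [reroute_self]
    refine (hc i).comp (Measurable.piecewise ?_ (hc i₀) measurable_id)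
    exact hL.measurableSet_forwardOrbit (hc i₀) (childRel_apply c i₀) hR
  · rw [reroute_of_ne hi]
    exact hc i

theorem IsLipschitzRel.measurableSet_roots [Countable ι] (hL : IsLipschitzRel Γ (childRel c))
    (hc : ∀ i, Measurable (c i)) : MeasurableSet (roots c) := by
  rw [roots_eq_compl_iUnion_range]
  refine (MeasurableSet.iUnion fun i => ?_).compl
  rw [← Set.image_univ]
  exact hL.measurableSet_image (hc i) (childRel_apply c i) .univ

theorem measurableSet_cyclicPoints [Countable ι] (hc : ∀ i, Measurable (c i)) :
    MeasurableSet (cyclicPoints c) := by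
  have measurable_word (w : List ι) : Measurable fun x => w.foldr c x := by
    induction w with
    | nil => exact measurable_id
    | cons i w ih => exact (hc i).comp ih
  rw [cyclicPoints_eq_iUnion]
  exact .iUnion fun i => .iUnion fun w =>
    measurableSet_eq_fun ((hc i).comp (measurable_word w)) measurable_id

theorem measurable_alignCycles [Countable ι] (hinj : Function.Injective2 c)
    (hc : ∀ i, Measurable (c i)) (i : ι) : Measurable (alignCycles c i₁ i) := by
  classical
  have measurableSet_cycleIndex_eq (j : ι) : MeasurableSet {x | cycleIndex c i₁ x = j} := by
    simp only [cycleIndex_eq_iff hinj]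
    have hcyc (l : ι) : MeasurableSet {x | c l x ∈ cyclicPoints c} :=
      hc l (measurableSet_cyclicPoints hc)
    exact measurableSet_setOfPred.2 ((measurableSet_setOfPred.1 (hcyc j)).or
      (measurable_const.and (.forall fun l => (measurableSet_setOfPred.1 (hcyc l)).not)))
  intro B hB
  have hpre : alignCycles c i₁ i ⁻¹' B =
      ⋃ j, {x | cycleIndex c i₁ x = j} ∩ c (Equiv.swap i₁ j i) ⁻¹' B := by
    ext x
    simp [alignCycles]
  rw [hpre]
  exact .iUnion fun j => (measurableSet_cycleIndex_eq j).inter (hc _ hB)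

theorem IsLipschitzRel.measurable_unwind [Countable ι] (hL : IsLipschitzRel Γ (childRel c))
    (hinj : Function.Injective2 c) (hc : ∀ i, Measurable (c i)) (i : ι) :
    Measurable (_root_.unwind c i₀ i₁ i) :=
  hL.alignCycles.measurable_reroute (measurable_alignCycles hinj hc)
    (measurableSet_cyclicPoints (measurable_alignCycles hinj hc)) i

theorem measurableSet_childRel [Countable ι] (hc : ∀ i, Measurable (c i)) :
    MeasurableSet {p : X × X | childRel c p.1 p.2} :=
  measurableSet_setOfPred.2 (.exists fun i => .eq ((hc i).comp measurable_fst) measurable_snd)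

theorem IsLipschitzRel.measurableSet_forestRel [Countable ι] (hL : IsLipschitzRel Γ (childRel c))
    (hc : ∀ i, Measurable (c i)) :
    MeasurableSet {p : X × X | _root_.forestRel c i₀ i₁ p.1 p.2} := by
  have hroots : MeasurableSet (roots c) := hL.measurableSet_roots hc
  exact (measurableSet_childRel (hL.measurable_reroute hc hroots)).union
    ((measurable_fst hroots).inter
      (measurableSet_eq_fun ((hc i₁).comp measurable_fst) measurable_snd))

theorem measurableSet_adj_fromRel {D : X → X → Prop} (hD : MeasurableSet {p : X × X | D p.1 p.2}) :
    MeasurableSet {p : X × X | (SimpleGraph.fromRel D).Adj p.1 p.2} :=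
  (measurableSet_eq_fun measurable_fst measurable_snd).compl.inter
    (hD.union (measurable_swap hD))

theorem exists_measurable_isAcyclic_regular [Finite ι] [Nontrivial ι]
    (hinj : Function.Injective2 c) (hc : ∀ i, Measurable (c i))
    (hL : IsLipschitzRel Γ (childRel c)) :
    ∃ G : SimpleGraph X, (∀ x, (G.neighborSet x).ncard = Nat.card ι + 1) ∧ G.IsAcyclic ∧
      IsLipschitzRel Γ G.Adj ∧ MeasurableSet {p : X × X | G.Adj p.1 p.2} := by
  obtain ⟨i₀, i₁, hi⟩ := exists_pair_ne ι
  have hinj' : Function.Injective2 (unwind c i₀ i₁) := unwind_injective2 hinj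
  have hcyc : cyclicPoints (unwind c i₀ i₁) = ∅ := cyclicPoints_unwind hinj hi
  refine ⟨SimpleGraph.fromRel (forestRel (unwind c i₀ i₁) i₀ i₁),
    ncard_neighborSet_forestRel hinj' hcyc, ?_, hL.unwind.forestRel.fromRel, ?_⟩
  · exact isAcyclic_fromRel (leftUnique_forestRel hinj') (not_transGen_forestRel hcyc)
  · exact measurableSet_adj_fromRel
      (hL.unwind.measurableSet_forestRel (hL.measurable_unwind hinj hc))

end MeasurableForest

section TraceSpace

open MeasurableSpace MeasureTheory

variable {Γ X ι : Type*} [Group Γ] [MulAction Γ X] [MeasurableSpace X] {A B : Set X}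

/-- The σ-algebra of all sets whose trace on `A` is measurable. Nothing is required outside `A`, so
a map is measurable for it as soon as its restriction to `A` is. -/
@[reducible] def traceSpace (A : Set X) : MeasurableSpace X :=
  MeasurableSpace.map ((↑) : A → X) inferInstance

theorem measurableSet_traceSpace (hA : MeasurableSet A) :
    MeasurableSet[traceSpace A] B ↔ MeasurableSet (A ∩ B) := by
  rw [← Subtype.image_preimage_coe]
  exact ((MeasurableEmbedding.subtype_coe hA).measurableSet_image).symm

theorem le_traceSpace (A : Set X) : ‹MeasurableSpace X› ≤ traceSpace A :=
  fun _ hB => measurable_subtype_coe hB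

theorem measurableConstSMul_traceSpace [MeasurableConstSMul Γ X] (hA : MeasurableSet A)
    (hinv : ∀ (γ : Γ) (x : X), γ • x ∈ A ↔ x ∈ A) :
    @MeasurableConstSMul Γ X _ (traceSpace A) := by
  refine @MeasurableConstSMul.mk Γ X _ (traceSpace A) fun γ B hB => ?_
  rw [measurableSet_traceSpace hA] at hB ⊢
  convert measurable_const_smul γ hB using 1
  ext x
  simp only [Set.mem_inter_iff, Set.mem_preimage, hinv]

theorem measurableSet_inter_of_traceSpace (hA : MeasurableSet A) {T : Set (X × X)}
    (hT : MeasurableSet[(traceSpace A).prod (traceSpace A)] T) : MeasurableSet (A ×ˢ A ∩ T) := by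
  have hval := MeasurableEmbedding.subtype_coe hA
  have measurable_val : @Measurable A X inferInstance (traceSpace A) (↑) := fun _ hB => hB
  have hpre : MeasurableSet (Prod.map ((↑) : A → X) ((↑) : A → X) ⁻¹' T) :=
    (@Measurable.prodMap _ _ _ _ _ (traceSpace A) _ (traceSpace A) _ _
      measurable_val measurable_val) hT
  have himage : A ×ˢ A ∩ T =
      Prod.map ((↑) : A → X) ((↑) : A → X) '' (Prod.map ((↑) : A → X) ((↑) : A → X) ⁻¹' T) := by
    rw [Set.image_preimage_eq_range_inter, Set.range_prodMap, Subtype.range_coe]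
  rw [himage]
  exact (hval.prodMap hval).measurableSet_image.2 hpre

theorem exists_isAcyclic_regular_measurableSet_inter [CountablySeparated X]
    [MeasurableConstSMul Γ X] [Finite ι] [Nontrivial ι] (hA : MeasurableSet A)
    (hinv : ∀ (γ : Γ) (x : X), γ • x ∈ A ↔ x ∈ A) {c : ι → X → X} (hinj : Function.Injective2 c)
    (hc : ∀ i B, MeasurableSet B → MeasurableSet (A ∩ c i ⁻¹' B))
    (hL : IsLipschitzRel Γ (childRel c)) :
    ∃ G : SimpleGraph X, (∀ x, (G.neighborSet x).ncard = Nat.card ι + 1) ∧ G.IsAcyclic ∧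
      IsLipschitzRel Γ G.Adj ∧ MeasurableSet (A ×ˢ A ∩ {p | G.Adj p.1 p.2}) := by
  have apply_mem_iff (i : ι) (x : X) : c i x ∈ A ↔ x ∈ A := by
    obtain ⟨S, hS⟩ := hL
    obtain ⟨γ, -, hγ⟩ := hS x (c i x) (childRel_apply c i x)
    rw [← hγ, hinv]
  have hc' (i : ι) : @Measurable X X (traceSpace A) (traceSpace A) (c i) := by
    intro B hB
    rw [measurableSet_traceSpace hA] at hB ⊢
    convert hc i _ hB using 1
    ext x
    simp only [Set.mem_inter_iff, Set.mem_preimage, apply_mem_iff, and_self_left]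
  have hsep : @MeasurableEq X (traceSpace A) := @measurableEq_of_countablySeparated X (traceSpace A)
    (CountablySeparated.mono (le_traceSpace A))
  obtain ⟨G, hdeg, hacyc, hlip, hmeas⟩ := @exists_measurable_isAcyclic_regular Γ X ι _ _
    (traceSpace A) (measurableConstSMul_traceSpace hA hinv) hsep c _ _ hinj hc' hL
  exact ⟨G, hdeg, hacyc, hlip, measurableSet_inter_of_traceSpace hA hmeas⟩

end TraceSpace

section HallCondition

open Finset

variable {X Y ι : Type*} {N : X → Finset Y} {D A : Set X} {R : Set Y} {F : Finset X} {q n C : ℕ}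
  {ε : ℝ}

open Classical in
/-- The neighbors of `F` in the bipartite graph with neighborhoods `N x` that are not in the set
`R` of used points. -/
noncomputable def freeNbrs (N : X → Finset Y) (R : Set Y) (F : Finset X) : Finset Y :=
  {y ∈ F.biUnion N | y ∉ R}

/-- The Hall condition for giving every point outside the set `D` of served points `q` unused
neighbors. -/
def HallCondition (q : ℕ) (N : X → Finset Y) (D : Set X) (R : Set Y) : Prop :=
  ∀ F : Finset X, Disjoint (F : Set X) D → q * #F ≤ #(freeNbrs N R F)

/-- `F` is connected for the relation of having a common neighbor. -/
def IsLinked (N : X → Finset Y) (F : Finset X) : Prop :=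
  ∀ F' ⊂ F, F'.Nonempty → ∃ x ∈ F', ∃ y ∈ F, y ∉ F' ∧ ¬Disjoint (N x) (N y)

/-- The Hall condition of `HallCondition` with an additional margin of `ε * #F` for all linked sets
`F` with at least `n` elements. -/
def HallSurplus (q : ℕ) (ε : ℝ) (n : ℕ) (N : X → Finset Y) (D : Set X) (R : Set Y) : Prop :=
  ∀ F : Finset X, IsLinked N F → Disjoint (F : Set X) D → n ≤ #F →
    (q + ε) * #F ≤ #(freeNbrs N R F)

/-- The graph that joins points of `X` with a common neighbor. -/
def overlapGraph (N : X → Finset Y) : SimpleGraph X :=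
  SimpleGraph.fromRel fun x y => ¬Disjoint (N x) (N y)

theorem mem_freeNbrs {y : Y} : y ∈ freeNbrs N R F ↔ (∃ x ∈ F, y ∈ N x) ∧ y ∉ R := by
  classical rw [freeNbrs, mem_filter, mem_biUnion]

theorem HallCondition.of_succ (h : HallCondition (q + 1) N D R) : HallCondition q N D R :=
  fun F hF => (Nat.mul_le_mul_right _ q.le_succ).trans (h F hF)

theorem hallCondition_of_injective2 [Fintype ι] {φ : ι → X → Y} (hinj : Function.Injective2 φ)
    (hφ : ∀ i x, φ i x ∈ N x) : HallCondition (Fintype.card ι) N ∅ ∅ := by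
  intro F _
  rw [← card_univ, ← card_product]
  refine card_le_card_of_injOn (Function.uncurry φ) (fun p hp => ?_) hinj.uncurry.injOn
  exact mem_freeNbrs.2 ⟨⟨p.2, (mem_product.1 hp).2, hφ _ _⟩, Set.notMem_empty _⟩

theorem freeNbrs_union_disjoint [DecidableEq X] {F F' : Finset X}
    (h : ∀ x ∈ F, ∀ y ∈ F', Disjoint (N x) (N y)) :
    #(freeNbrs N R (F ∪ F')) = #(freeNbrs N R F) + #(freeNbrs N R F') := by
  classical
  rw [freeNbrs, union_biUnion, filter_union, card_union_of_disjoint]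
  · rfl
  · refine disjoint_filter_filter ?_
    exact disjoint_biUnion_left _ _ _ |>.2 fun x hx =>
      disjoint_biUnion_right _ _ _ |>.2 fun y hy => h x hx y hy

theorem hallCondition_of_isLinked
    (h : ∀ F, IsLinked N F → Disjoint (F : Set X) D → q * #F ≤ #(freeNbrs N R F)) :
    HallCondition q N D R := by
  classical
  intro F
  induction F using Finset.strongInduction with
  | H F ih =>
    intro hFD
    by_cases hF : IsLinked N F
    · exact h F hF hFD
    · simp only [IsLinked, not_forall, not_exists, not_and, not_not] at hF
      obtain ⟨F', hF', hne, hdisj⟩ := hF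
      have hsub : F' ⊆ F := hF'.subset
      have hrest : F \ F' ⊂ F := sdiff_ssubset hsub hne
      have hcard : #F' + #(F \ F') = #F := by rw [add_comm, card_sdiff_add_card_eq_card hsub]
      have hfree : #(freeNbrs N R F) = #(freeNbrs N R F') + #(freeNbrs N R (F \ F')) := by
        rw [← freeNbrs_union_disjoint, union_sdiff_of_subset hsub]
        intro x hx y hy
        exact hdisj x hx y (mem_sdiff.1 hy).1 (mem_sdiff.1 hy).2
      rw [hfree, ← hcard, mul_add]
      exact add_le_add (ih F' hF' (hFD.mono_left (coe_subset.2 hsub)))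
        (ih _ hrest (hFD.mono_left (coe_subset.2 hrest.subset)))

theorem edist_overlapGraph_le_one {x y : X} (h : ¬Disjoint (N x) (N y)) :
    (overlapGraph N).edist x y ≤ 1 := by
  rw [SimpleGraph.edist_le_one_iff_adj_or_eq, overlapGraph, SimpleGraph.fromRel_adj]
  tauto

open Classical in
theorem IsLinked.forall_edist_le_or_lt_card (hF : IsLinked N F) {x : X} (hx : x ∈ F) (j : ℕ) :
    (∀ y ∈ F, (overlapGraph N).edist x y ≤ j) ∨ j < #{y ∈ F | (overlapGraph N).edist x y ≤ j} := by
  induction j with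
  | zero => exact Or.inr (card_pos.2 ⟨x, mem_filter.2 ⟨hx, by simp⟩⟩)
  | succ j ih =>
    have hmono : (j : ℕ∞) ≤ (j + 1 : ℕ) := by exact_mod_cast j.le_succ
    by_cases hall : ∀ y ∈ F, (overlapGraph N).edist x y ≤ j
    · exact Or.inl fun y hy => (hall y hy).trans hmono
    · have hss : {y ∈ F | (overlapGraph N).edist x y ≤ j} ⊂ F := by
        rw [filter_ssubset]
        simpa only [not_forall, exists_prop] using hall
      obtain ⟨u, hu, v, hvF, hv, huv⟩ := hF _ hss ⟨x, mem_filter.2 ⟨hx, by simp⟩⟩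
      have hxv : (overlapGraph N).edist x v ≤ (j + 1 : ℕ) := by
        push_cast
        exact SimpleGraph.edist_triangle.trans
          (add_le_add (mem_filter.1 hu).2 (edist_overlapGraph_le_one huv))
      refine Or.inr (lt_of_le_of_lt (Nat.succ_le_of_lt (ih.resolve_left hall)) (card_lt_card ?_))
      refine Finset.ssubset_iff_subset_ne.2 ⟨fun y hy => ?_, fun heq => hv ?_⟩
      · exact mem_filter.2 ⟨(mem_filter.1 hy).1, (mem_filter.1 hy).2.trans hmono⟩
      · rw [heq]
        exact mem_filter.2 ⟨hvF, hxv⟩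

theorem IsLinked.reachable (hF : IsLinked N F) {x y : X} (hx : x ∈ F) (hy : y ∈ F) :
    (overlapGraph N).Reachable x y := by
  classical
  rcases hF.forall_edist_le_or_lt_card hx #F with h | h
  · exact SimpleGraph.reachable_of_edist_ne_top
      (ne_top_of_le_ne_top (ENat.natCast_ne_top _) (h y hy))
  · exact absurd (card_filter_le F _) h.not_ge

/-- The balls of radius `C` in `F` around neighbors of the points of `P` are disjoint, and each of
them has at least `C` points because `F` is linked. -/
theorem IsLinked.mul_card_le (hF : IsLinked N F) {P : Finset X}
    (hsep : ∀ a ∈ P, ∀ b ∈ P, a ≠ b → (2 * C + 2 : ℕ) < (overlapGraph N).edist a b)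
    (htouch : ∀ a ∈ P, ∃ x ∈ F, ¬Disjoint (N a) (N x)) (hP : 1 < #P) : C * #P ≤ #F := by
  classical
  choose! p hpF hp using htouch
  have edist_le {a b y : X} (ha : a ∈ P) (hb : b ∈ P)
      (hay : (overlapGraph N).edist (p a) y ≤ C) (hby : (overlapGraph N).edist (p b) y ≤ C) :
      (overlapGraph N).edist a b ≤ (2 * C + 2 : ℕ) := calc
    _ ≤ (overlapGraph N).edist a (p a) + (overlapGraph N).edist (p a) y +
          ((overlapGraph N).edist y (p b) + (overlapGraph N).edist (p b) b) :=
        SimpleGraph.edist_triangle.trans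
          (add_le_add SimpleGraph.edist_triangle SimpleGraph.edist_triangle)
    _ ≤ 1 + C + (C + 1) := by
        rw [SimpleGraph.edist_comm (u := y), SimpleGraph.edist_comm (v := b)]
        gcongr
        exacts [edist_overlapGraph_le_one (hp a ha), edist_overlapGraph_le_one (hp b hb)]
    _ = (2 * C + 2 : ℕ) := by
        push_cast
        ring
  let ball (a : X) : Finset X := {y ∈ F | (overlapGraph N).edist (p a) y ≤ C}
  have card_ball {a : X} (ha : a ∈ P) : C ≤ #(ball a) := by
    rcases hF.forall_edist_le_or_lt_card (hpF a ha) C with hall | hlt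
    · obtain ⟨b, hb, hba⟩ := exists_mem_ne hP a
      exact absurd (edist_le ha hb (hall _ (hpF b hb)) (by simp)) (hsep a ha b hb hba.symm).not_ge
    · exact hlt.le
  have disjoint_ball : (P : Set X).PairwiseDisjoint ball := by
    intro a ha b hb hab
    refine disjoint_left.2 fun y hya hyb => ?_
    exact (hsep a ha b hb hab).not_ge (edist_le ha hb (mem_filter.1 hya).2 (mem_filter.1 hyb).2)
  calc C * #P = ∑ _ ∈ P, C := by rw [sum_const, smul_eq_mul, mul_comm]
    _ ≤ ∑ a ∈ P, #(ball a) := sum_le_sum fun _ ha => card_ball ha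
    _ = #(P.biUnion ball) := (card_biUnion disjoint_ball).symm
    _ ≤ #F := card_le_card (biUnion_subset.2 fun _ _ => filter_subset _ F)

open Classical in
theorem exists_freeNbrs_subset_union_biUnion {m : X → Finset Y} (hm : ∀ a ∈ A, m a ⊆ N a) :
    ∃ P : Finset X, ↑P ⊆ A ∧ (∀ a ∈ P, ∃ x ∈ F, ¬Disjoint (N a) (N x)) ∧
      freeNbrs N R F ⊆ freeNbrs N (R ∪ ⋃ a ∈ A, m a) F ∪ P.biUnion m := by
  let lost : Finset Y := {y ∈ freeNbrs N R F | ∃ a ∈ A, y ∈ m a}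
  have hlost (y : lost) : ∃ a ∈ A, ↑y ∈ m a := (mem_filter.1 y.2).2
  choose f hfA hf using hlost
  refine ⟨univ.image f, ?_, ?_, fun y hy => ?_⟩
  · rw [coe_image, Set.image_subset_iff]
    exact fun y _ => hfA y
  · intro a ha
    obtain ⟨y, -, rfl⟩ := mem_image.1 ha
    obtain ⟨x, hx, hyx⟩ := (mem_freeNbrs.1 (mem_filter.1 y.2).1).1
    exact ⟨x, hx, not_disjoint_iff.2 ⟨y, hm _ (hfA y) (hf y), hyx⟩⟩
  · by_cases hy' : y ∈ lost
    · exact mem_union_right _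
        (mem_biUnion.2 ⟨f ⟨y, hy'⟩, mem_image_of_mem f (mem_univ _), hf ⟨y, hy'⟩⟩)
    · refine mem_union_left _ (mem_freeNbrs.2 ⟨(mem_freeNbrs.1 hy).1, ?_⟩)
      rintro (hR | hA)
      · exact (mem_freeNbrs.1 hy).2 hR
      · simp only [Set.mem_iUnion, exists_prop] at hA
        exact hy' (mem_filter.2 ⟨hy, hA⟩)

theorem HallSurplus.iUnion (hsurplus : HallSurplus q ε n N D R) {m : X → Finset Y}
    (hm : ∀ a ∈ A, m a ⊆ N a) (hmq : ∀ a ∈ A, #(m a) ≤ q)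
    (hsep : ∀ a ∈ A, ∀ b ∈ A, a ≠ b → (2 * C + 2 : ℕ) < (overlapGraph N).edist a b)
    (hn : n ≤ C) (hε : 0 ≤ ε) (hC : 2 * q ≤ ε * C) :
    HallSurplus q (ε / 2) C N (D ∪ A) (R ∪ ⋃ a ∈ A, m a) := by
  classical
  intro F hF hFD hCF
  obtain ⟨P, hPA, htouch, hsub⟩ := exists_freeNbrs_subset_union_biUnion (R := R) (F := F) hm
  have hCP : C * #P ≤ #F := by
    rcases le_or_gt #P 1 with hP | hP
    · nlinarith
    · exact hF.mul_card_le (fun a ha b hb => hsep a (hPA ha) b (hPA hb)) htouch hP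
  have hqP : q * #P ≤ ε / 2 * #F := calc
    (q * #P : ℝ) ≤ ε / 2 * (C * #P : ℕ) := by
        push_cast
        nlinarith [(Nat.cast_nonneg #P : (0 : ℝ) ≤ #P)]
    _ ≤ ε / 2 * #F := by gcongr
  have hcard : #(freeNbrs N R F) ≤ #(freeNbrs N (R ∪ ⋃ a ∈ A, m a) F) + q * #P := calc
    _ ≤ _ := card_le_card hsub
    _ ≤ _ := card_union_le _ _
    _ ≤ _ := by
      rw [mul_comm q]
      gcongr
      exact card_biUnion_le_card_mul _ _ _ fun a ha => hmq a (hPA ha)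
  have hcard' : (#(freeNbrs N R F) : ℝ) ≤ #(freeNbrs N (R ∪ ⋃ a ∈ A, m a) F) + q * #P := by
    exact_mod_cast hcard
  linarith [hsurplus F hF (hFD.mono_right Set.subset_union_left) (hn.trans hCF)]

theorem HallCondition.iUnion (hall : HallCondition q N D R) (hsurplus : HallSurplus q ε n N D R)
    {m : X → Finset Y} (hm : ∀ a ∈ A, m a ⊆ N a) (hmq : ∀ a ∈ A, #(m a) ≤ q)
    (hok : ∀ a ∈ A, ∀ F : Finset X, Disjoint (F : Set X) (insert a D) →
      (∀ x ∈ F, (overlapGraph N).Reachable a x) → q * #F ≤ #(freeNbrs N (R ∪ m a) F))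
    (hsep : ∀ a ∈ A, ∀ b ∈ A, a ≠ b → (2 * C + 2 : ℕ) < (overlapGraph N).edist a b)
    (hn : n ≤ C) (hε : 0 ≤ ε) (hC : 2 * q ≤ ε * C) :
    HallCondition q N (D ∪ A) (R ∪ ⋃ a ∈ A, m a) := by
  classical
  refine hallCondition_of_isLinked fun F hF hFD => ?_
  obtain ⟨P, hPA, htouch, hsub⟩ := exists_freeNbrs_subset_union_biUnion (R := R) (F := F) hm
  obtain hP | ⟨a, rfl⟩ | hP : P = ∅ ∨ (∃ a, P = {a}) ∨ 1 < #P := by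
    rcases Nat.lt_trichotomy #P 1 with h | h | h
    exacts [Or.inl (card_eq_zero.1 (by lia)), Or.inr (Or.inl (card_eq_one.1 h)),
      Or.inr (Or.inr h)]
  · rw [hP, biUnion_empty, union_empty] at hsub
    exact (hall F (hFD.mono_right Set.subset_union_left)).trans (card_le_card hsub)
  · have ha : a ∈ A := hPA (mem_singleton_self a)
    obtain ⟨x, hx, hax⟩ := htouch a (mem_singleton_self a)
    have hreach : (overlapGraph N).Reachable a x := SimpleGraph.reachable_of_edist_ne_top
      (ne_top_of_le_ne_top ENat.one_ne_top (edist_overlapGraph_le_one hax))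
    have haF : Disjoint (F : Set X) (insert a D) :=
      hFD.mono_right (Set.insert_subset (Or.inr ha) Set.subset_union_left)
    refine (hok a ha F haF fun y hy => hreach.trans (hF.reachable hx hy)).trans (card_le_card ?_)
    intro y hy
    obtain ⟨hyF, hyR⟩ := mem_freeNbrs.1 hy
    rw [singleton_biUnion] at hsub
    refine (mem_union.1 (hsub (mem_freeNbrs.2 ⟨hyF, fun h => hyR (Or.inl h)⟩))).resolve_right ?_
    exact fun h => hyR (Or.inr h)
  · have hCF : C ≤ #F := by
      have := hF.mul_card_le (fun a ha b hb => hsep a (hPA ha) b (hPA hb)) htouch hP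
      nlinarith
    have hmargin := hsurplus.iUnion hm hmq hsep hn hε hC F hF hFD hCF
    have : (q * #F : ℝ) ≤ #(freeNbrs N (R ∪ ⋃ a ∈ A, m a) F) := by
      nlinarith [(Nat.cast_nonneg #F : (0 : ℝ) ≤ #F)]
    exact_mod_cast this

theorem HallCondition.exists_matching [Fintype ι] (hall : HallCondition (Fintype.card ι) N D R) :
    ∃ φ : ι → {x // x ∉ D} → Y, Function.Injective2 φ ∧
      ∀ (i : ι) (x : {x // x ∉ D}), φ i x ∈ N x ∧ φ i x ∉ R := by
  classical
  let free (p : ι × {x // x ∉ D}) : Finset Y := {y ∈ N p.2 | y ∉ R}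
  have card_le (s : Finset (ι × {x // x ∉ D})) : #s ≤ #(s.biUnion free) := by
    let F : Finset X := s.image fun p => (p.2 : X)
    have hFD : Disjoint (F : Set X) D := by
      refine Set.disjoint_left.2 fun x hx => ?_
      obtain ⟨p, -, rfl⟩ := mem_image.1 hx
      exact p.2.2
    calc #s ≤ #((univ : Finset ι) ×ˢ F) := by
          refine card_le_card_of_injOn (Prod.map id Subtype.val) (fun p hp => ?_)
            (Function.injective_id.prodMap Subtype.val_injective).injOn
          exact mem_product.2 ⟨mem_univ _, mem_image_of_mem _ hp⟩
      _ = Fintype.card ι * #F := by rw [card_product, card_univ]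
      _ ≤ #(freeNbrs N R F) := hall F hFD
      _ ≤ #(s.biUnion free) := by
          refine card_le_card fun y hy => ?_
          obtain ⟨⟨x, hx, hyx⟩, hyR⟩ := mem_freeNbrs.1 hy
          obtain ⟨p, hp, rfl⟩ := mem_image.1 hx
          exact mem_biUnion.2 ⟨p, hp, mem_filter.2 ⟨hyx, hyR⟩⟩
  obtain ⟨φ, hinj, hφ⟩ := (all_card_le_biUnion_card_iff_exists_injective free).1 card_le
  refine ⟨fun i x => φ (i, x), fun i j x y h => Prod.mk.inj (hinj h), fun i x => ?_⟩
  exact mem_filter.1 (hφ (i, x))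

/-- Serve `a` with the points that it receives in a matching of all points outside `D`. -/
theorem HallCondition.exists_insert [Fintype ι] (hall : HallCondition (Fintype.card ι) N D R)
    {a : X} (ha : a ∉ D) : ∃ τ : ι → Y, Function.Injective τ ∧ (∀ i, τ i ∈ N a ∧ τ i ∉ R) ∧
      HallCondition (Fintype.card ι) N (insert a D) (R ∪ Set.range τ) := by
  classical
  obtain ⟨φ, hinj, hφ⟩ := hall.exists_matching
  refine ⟨fun i => φ i ⟨a, ha⟩, hinj.left ⟨a, ha⟩, fun i => hφ i ⟨a, ha⟩, fun F hF => ?_⟩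
  have notMem {x : X} (hx : x ∈ F) : x ∉ insert a D := Set.disjoint_left.1 hF hx
  let G : Finset {x // x ∉ D} := F.subtype fun x => x ∉ D
  have hG : #G = #F := by
    rw [card_subtype, filter_true_of_mem fun x hx => ?_]
    exact fun h => notMem hx (Set.mem_insert_of_mem a h)
  rw [← hG, ← card_univ, ← card_product]
  refine card_le_card_of_injOn (Function.uncurry φ) (fun p hp => ?_) hinj.uncurry.injOn
  have hpF : ↑p.2 ∈ F := mem_subtype.1 (mem_product.1 hp).2
  refine mem_freeNbrs.2 ⟨⟨p.2, hpF, (hφ _ _).1⟩, ?_⟩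
  rintro (hR | ⟨i, hi⟩)
  · exact (hφ _ _).2 hR
  · exact notMem hpF (Or.inl (congrArg Subtype.val (hinj hi).2).symm)

end HallCondition

section OrbitFinset

open Finset

variable {Γ X ι : Type*} [Group Γ] [MulAction Γ X] {S T : Finset Γ} {D R : Set X} {τ : ι → Γ}

open Classical in
/-- The points of the orbit of `x` that are reached from `x` by an element of `S`. -/
noncomputable def orbitFinset (S : Finset Γ) (x : X) : Finset X := S.image (· • x)

theorem mem_orbitFinset {x y : X} : y ∈ orbitFinset S x ↔ ∃ γ ∈ S, γ • x = y := by
  classical rw [orbitFinset, mem_image]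

open Classical in
theorem orbitFinset_insert (γ : Γ) (T : Finset Γ) (x : X) :
    orbitFinset (insert γ T) x = insert (γ • x) (orbitFinset T x) :=
  image_insert ..

theorem isLipschitzRel_edist_le (S : Finset Γ) (L : ℕ) :
    IsLipschitzRel Γ fun x y : X => (overlapGraph (orbitFinset S)).edist x y ≤ L := by
  have hid : IsLipschitzRel Γ (@Eq X) := ⟨{1}, fun x y h => ⟨1, mem_singleton_self 1, by simpa⟩⟩
  have hmem : IsLipschitzRel Γ fun x y : X => y ∈ orbitFinset S x :=
    ⟨S, fun x y h => mem_orbitFinset.1 h⟩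
  have hadj : IsLipschitzRel Γ (overlapGraph (orbitFinset (X := X) S)).Adj := by
    refine ((hmem.comp hmem.flip).mono fun x y h => ?_).fromRel
    exact not_disjoint_iff.1 h
  induction L with
  | zero => exact hid.mono fun x y h => by simpa using h
  | succ L ih =>
    refine (hid.or (hadj.comp ih)).mono fun x y h => ?_
    obtain ⟨w, hw⟩ := SimpleGraph.exists_walk_of_edist_ne_top
      (ne_top_of_le_ne_top (ENat.natCast_ne_top _) h)
    cases w with
    | nil => exact Or.inl rfl
    | @cons _ z _ hxz w =>
      rw [← hw, SimpleGraph.Walk.length_cons, Nat.cast_le, Nat.succ_le_succ_iff] at h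
      exact Or.inr ⟨z, hxz, (SimpleGraph.edist_le w).trans (by exact_mod_cast h)⟩

theorem exists_smul_eq_of_reachable {x y : X}
    (h : (overlapGraph (orbitFinset S)).Reachable x y) : ∃ γ : Γ, γ • x = y := by
  obtain ⟨w⟩ := h
  obtain ⟨E, hE⟩ := isLipschitzRel_edist_le (X := X) S w.length
  exact (hE x y (SimpleGraph.edist_le w)).imp fun _ h => h.2

theorem exists_eq_orbitFinset {a : X} {F : Finset X}
    (hF : ∀ x ∈ F, (overlapGraph (orbitFinset S)).Reachable a x) :
    ∃ T : Finset Γ, F = orbitFinset T a := by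
  classical
  choose! g hg using fun x hx => exists_smul_eq_of_reachable (hF x hx)
  refine ⟨F.image g, ?_⟩
  rw [orbitFinset, image_image]
  exact (image_id.symm.trans (image_congr fun x hx => (hg x hx).symm))

open Classical in
theorem freeNbrs_orbitFinset (a : X) : freeNbrs (orbitFinset S) R (orbitFinset T a) =
    orbitFinset {γ ∈ S * T | γ • a ∉ R} a := by
  ext y
  simp only [mem_freeNbrs, mem_orbitFinset, mem_filter, mem_mul]
  constructor
  · rintro ⟨⟨_, ⟨t, ht, rfl⟩, s, hs, rfl⟩, hR⟩
    exact ⟨s * t, ⟨⟨s, hs, t, ht, rfl⟩, by rwa [mul_smul]⟩, mul_smul s t a⟩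
  · rintro ⟨_, ⟨⟨s, hs, t, ht, rfl⟩, hR⟩, rfl⟩
    exact ⟨⟨t • a, ⟨t, ht, rfl⟩, s, hs, (mul_smul s t a).symm⟩, hR⟩

theorem measurable_card_orbitFinset_filter [MeasurableSpace X] [MeasurableConstSMul Γ X]
    [MeasurableEq X] {p : Γ → X → Prop} [∀ γ a, Decidable (p γ a)] (hp : ∀ γ, Measurable (p γ))
    (T : Finset Γ) : Measurable fun a => #(orbitFinset {γ ∈ T | p γ a} a) := by
  classical
  induction T using Finset.induction_on with
  | empty => simp [orbitFinset]
  | insert γ T _ ih =>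
    have hmem (a : X) : γ • a ∉ orbitFinset {δ ∈ T | p δ a} a ↔
        ∀ δ : T, p δ a → δ.1 • a ≠ γ • a := by
      simp only [mem_orbitFinset, mem_filter, Subtype.forall]
      push Not
      exact forall_congr' fun δ => and_imp
    have card_insert_eq (a : X) : #(orbitFinset {δ ∈ insert γ T | p δ a} a) =
        #(orbitFinset {δ ∈ T | p δ a} a) +
          if p γ a ∧ γ • a ∉ orbitFinset {δ ∈ T | p δ a} a then 1 else 0 := by
      rw [filter_insert]
      by_cases hpa : p γ a
      · rw [if_pos hpa, orbitFinset_insert]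
        by_cases hγa : γ • a ∈ orbitFinset {δ ∈ T | p δ a} a
        · rw [insert_eq_of_mem hγa, if_neg fun h => h.2 hγa, add_zero]
        · rw [card_insert_of_notMem hγa, if_pos ⟨hpa, hγa⟩]
      · rw [if_neg hpa, if_neg fun h => hpa h.1, add_zero]
    simp only [card_insert_eq]
    refine ih.add (Measurable.ite ?_ measurable_const measurable_const)
    simp only [hmem]
    refine measurableSet_setOfPred.2 ((hp γ).and (.forall fun δ => (hp δ).imp ?_))
    exact (Measurable.eq (measurable_const_smul δ.1) (measurable_const_smul γ)).not

end OrbitFinset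

section SafePattern

open Finset

variable {Γ X ι : Type*} [Group Γ] [MulAction Γ X] [Fintype ι] {S : Finset Γ} {D R : Set X}
  {τ : ι → Γ} {a : X}

/-- Serving `a` with the points `τ i • a` is possible and preserves the Hall condition on the orbit
of `a`, where `D` is the set of served points and `R` the set of used points. -/
structure IsSafePattern (S : Finset Γ) (D R : Set X) (τ : ι → Γ) (a : X) : Prop where
  mem : ∀ i, τ i ∈ S
  notMem : ∀ i, τ i • a ∉ R
  injective : Function.Injective fun i => τ i • a
  hall : ∀ T : Finset Γ, (∀ γ ∈ T, γ • a ∉ insert a D) →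
    Fintype.card ι * #(orbitFinset T a) ≤
      #(freeNbrs (orbitFinset S) (R ∪ Set.range fun i => τ i • a) (orbitFinset T a))

theorem HallCondition.exists_isSafePattern
    (hall : HallCondition (Fintype.card ι) (orbitFinset S) D R) (ha : a ∉ D) :
    ∃ τ : ι → Γ, IsSafePattern S D R τ a := by
  obtain ⟨φ, hinj, hφ, hall'⟩ := hall.exists_insert ha
  choose τ hτS hτ using fun i => mem_orbitFinset.1 (hφ i).1
  obtain rfl : (fun i => τ i • a) = φ := funext hτ
  refine ⟨τ, hτS, fun i => (hφ i).2, hinj, fun T hT => hall' _ (Set.disjoint_left.2 ?_)⟩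
  rintro x hx
  obtain ⟨γ, hγ, rfl⟩ := mem_orbitFinset.1 (mem_coe.1 hx)
  exact hT γ hγ

theorem IsSafePattern.card_le_card_freeNbrs (h : IsSafePattern S D R τ a) {F : Finset X}
    (hFD : Disjoint (F : Set X) (insert a D))
    (hF : ∀ x ∈ F, (overlapGraph (orbitFinset S)).Reachable a x) :
    Fintype.card ι * #F ≤
      #(freeNbrs (orbitFinset S) (R ∪ Set.range fun i => τ i • a) F) := by
  obtain ⟨T, rfl⟩ := exists_eq_orbitFinset hF
  exact h.hall T fun γ hγ =>
    Set.disjoint_left.1 hFD (mem_coe.2 (mem_orbitFinset.2 ⟨γ, hγ, rfl⟩))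

open Classical in
theorem isSafePattern_iff : IsSafePattern S D R τ a ↔
    (∀ i, τ i ∈ S ∧ τ i • a ∉ R) ∧ (∀ i j, τ i • a = τ j • a → i = j) ∧
      ∀ T : Finset Γ, (∀ γ : T, γ.1 • a ≠ a ∧ γ.1 • a ∉ D) →
        Fintype.card ι * #(orbitFinset T a) ≤
          #(orbitFinset {γ ∈ S * T | γ • a ∉ R ∧ ∀ i, τ i • a ≠ γ • a} a) := by
  constructor
  · rintro ⟨hS, hR, hinj, hall⟩
    refine ⟨fun i => ⟨hS i, hR i⟩, fun i j h => hinj h, fun T hT => ?_⟩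
    simpa [freeNbrs_orbitFinset] using hall T fun γ hγ => not_or.2 (hT ⟨γ, hγ⟩)
  · rintro ⟨hSR, hinj, hall⟩
    refine ⟨fun i => (hSR i).1, fun i => (hSR i).2, fun i j h => hinj i j h, fun T hT => ?_⟩
    simpa [freeNbrs_orbitFinset] using hall T fun γ => not_or.1 (hT γ γ.2)

theorem measurableSet_isSafePattern [Countable Γ] [MeasurableSpace X] [MeasurableConstSMul Γ X]
    [MeasurableEq X] (hD : MeasurableSet D) (hR : MeasurableSet R) (τ : ι → Γ) :
    MeasurableSet {a | IsSafePattern S D R τ a} := by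
  classical
  have hsmul (γ : Γ) : Measurable fun a : X => γ • a := measurable_const_smul γ
  have hset {B : Set X} (hB : MeasurableSet B) (γ : Γ) : Measurable fun a => γ • a ∈ B :=
    measurableSet_setOfPred.1 (hsmul γ hB)
  have hcard (T : Finset Γ) : Measurable fun a : X => #(orbitFinset T a) := by
    simpa only [filter_true] using
      measurable_card_orbitFinset_filter (p := fun _ _ => True) (fun _ => measurable_const) T
  simp only [isSafePattern_iff]
  refine measurableSet_setOfPred.2 (.and (.forall fun i => ?_) (.and ?_ ?_))
  · exact measurable_const.and (hset hR _).not
  · exact .forall fun i => .forall fun j =>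
      ((hsmul (τ i)).eq (hsmul (τ j))).imp measurable_const
  · refine .forall fun T => .imp (.forall fun γ => ?_) ?_
    · exact ((hsmul γ).eq measurable_id).not.and (hset hD γ).not
    · refine .le' ((hcard T).const_mul _) (measurable_card_orbitFinset_filter (fun γ => ?_) _)
      exact (hset hR γ).not.and (.forall fun i => ((hsmul (τ i)).eq (hsmul γ)).not)

end SafePattern

section PartialMatching

variable {Γ X ι : Type*} {S : Finset Γ} {M : (ι → Γ) → Set X} {A : Set X} {τ : ι → Γ} {x : X}

/-- The points served by `M`, where `M τ` is the set of points `x` served with the points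
`τ i • x`. -/
def matched (M : (ι → Γ) → Set X) : Set X := ⋃ τ, M τ

/-- The partial matching `M` extended by serving the points `a` of `A` with the points `τ i • a`. -/
def servePattern (M : (ι → Γ) → Set X) (A : Set X) (τ σ : ι → Γ) : Set X :=
  M σ ∪ {x | x ∈ A ∧ σ = τ}

theorem mem_matched : x ∈ matched M ↔ ∃ τ, x ∈ M τ := Set.mem_iUnion

theorem le_servePattern (M : (ι → Γ) → Set X) (A : Set X) (τ : ι → Γ) : M ≤ servePattern M A τ :=
  fun _ => Set.subset_union_left

theorem matched_servePattern : matched (servePattern M A τ) = matched M ∪ A := by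
  ext x
  simp only [mem_matched, servePattern, Set.mem_union, Set.mem_ofPred_eq, exists_or,
    exists_eq_right]

variable [Group Γ] [MulAction Γ X]

/-- The points used by `M`, where `M τ` is the set of points `x` served with the points
`τ i • x`. -/
def used (M : (ι → Γ) → Set X) : Set X := ⋃ (τ) (i), τ i • M τ

/-- `M` describes a measurable partial matching of some points `x` with disjoint families of points
of `S • x`. Here `M τ` is the set of points `x` that are served with the points `τ i • x`. -/
structure IsPartialMatching [MeasurableSpace X] (S : Finset Γ) (M : (ι → Γ) → Set X) : Prop where
  measurableSet : ∀ τ, MeasurableSet (M τ)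
  mem : ∀ {τ x}, x ∈ M τ → ∀ i, τ i ∈ S
  pattern_unique : ∀ {σ τ x}, x ∈ M σ → x ∈ M τ → σ = τ
  injective : ∀ {σ τ x y i j}, x ∈ M σ → y ∈ M τ → σ i • x = τ j • y → i = j ∧ x = y

theorem mem_used : x ∈ used M ↔ ∃ τ i, ∃ y ∈ M τ, τ i • y = x := by
  simp only [used, Set.mem_iUnion, Set.mem_smul_set]

theorem used_servePattern :
    used (servePattern M A τ) = used M ∪ ⋃ a ∈ A, Set.range fun i => τ i • a := by
  ext x
  simp only [mem_used, servePattern, Set.mem_union, Set.mem_ofPred_eq, Set.mem_iUnion,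
    Set.mem_range, or_and_right, exists_or]
  refine or_congr_right ⟨?_, ?_⟩
  · rintro ⟨_, i, y, ⟨hy, rfl⟩, hyx⟩
    exact ⟨y, hy, i, hyx⟩
  · rintro ⟨y, hy, i, hyx⟩
    exact ⟨τ, i, y, ⟨hy, rfl⟩, hyx⟩

namespace IsPartialMatching

variable [MeasurableSpace X]

theorem measurableSet_matched [Countable Γ] [Finite ι] (hM : IsPartialMatching S M) :
    MeasurableSet (matched M) :=
  .iUnion hM.measurableSet

theorem measurableSet_used [MeasurableConstSMul Γ X] [Countable Γ] [Finite ι]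
    (hM : IsPartialMatching S M) : MeasurableSet (used M) :=
  .iUnion fun τ => .iUnion fun i => (hM.measurableSet τ).const_smul (τ i)

theorem iUnion {M : ℕ → (ι → Γ) → Set X} (hM : ∀ n, IsPartialMatching S (M n))
    (hmono : Monotone M) : IsPartialMatching S fun τ => ⋃ n, M n τ := by
  have common_stage {σ τ : ι → Γ} {x y : X} (hx : x ∈ ⋃ n, M n σ) (hy : y ∈ ⋃ n, M n τ) :
      ∃ n, x ∈ M n σ ∧ y ∈ M n τ := by
    obtain ⟨k, hk⟩ := Set.mem_iUnion.1 hx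
    obtain ⟨l, hl⟩ := Set.mem_iUnion.1 hy
    exact ⟨max k l, hmono (le_max_left k l) σ hk, hmono (le_max_right k l) τ hl⟩
  refine ⟨fun τ => .iUnion fun n => (hM n).measurableSet τ, fun hx => ?_, fun hx hy => ?_,
    fun hx hy => ?_⟩
  · obtain ⟨n, hn⟩ := Set.mem_iUnion.1 hx
    exact (hM n).mem hn
  · obtain ⟨n, hx, hy⟩ := common_stage hx hy
    exact (hM n).pattern_unique hx hy
  · obtain ⟨n, hx, hy⟩ := common_stage hx hy
    exact (hM n).injective hx hy

protected theorem servePattern (hM : IsPartialMatching S M) (hA : MeasurableSet A)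
    (hAM : Disjoint (matched M) A) (hτS : A.Nonempty → ∀ i, τ i ∈ S)
    (hτ : ∀ a ∈ A, ∀ i, τ i • a ∉ used M)
    (hinj : ∀ a ∈ A, ∀ b ∈ A, ∀ i j, τ i • a = τ j • b → i = j ∧ a = b) :
    IsPartialMatching S (servePattern M A τ) := by
  have notMem {σ : ι → Γ} {x : X} (hx : x ∈ M σ) : x ∉ A :=
    Set.disjoint_left.1 hAM (mem_matched.2 ⟨σ, hx⟩)
  have smul_mem_used {σ : ι → Γ} {x : X} (hx : x ∈ M σ) (i : ι) : σ i • x ∈ used M :=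
    mem_used.2 ⟨σ, i, x, hx, rfl⟩
  refine ⟨fun σ => (hM.measurableSet σ).union (hA.inter (.const (σ = τ))), ?_, ?_, ?_⟩
  · rintro σ x (hx | ⟨hx, rfl⟩)
    exacts [hM.mem hx, hτS ⟨x, hx⟩]
  · rintro σ τ' x (hx | ⟨hx, hσ⟩) (hx' | ⟨hx', hτ'⟩)
    · exact hM.pattern_unique hx hx'
    · exact absurd hx' (notMem hx)
    · exact absurd hx (notMem hx')
    · exact hσ.trans hτ'.symm
  · rintro σ τ' x y i j (hx | ⟨hx, rfl⟩) (hy | ⟨hy, rfl⟩) h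
    · exact hM.injective hx hy h
    · exact absurd (h ▸ smul_mem_used hx i) (hτ y hy j)
    · exact absurd (h ▸ smul_mem_used hy j) (hτ x hx i)
    · exact hinj x hx y hy i j h

end IsPartialMatching

/-- A partial matching that satisfies the Hall condition, with a surplus for large linked sets, for
serving the remaining points with `S`-neighbors that are not used yet. -/
structure IsExtendable [MeasurableSpace X] [Fintype ι] (S : Finset Γ) (M : (ι → Γ) → Set X) : Prop
    extends IsPartialMatching S M where
  hall : HallCondition (Fintype.card ι) (orbitFinset S) (matched M) (used M)
  surplus : ∃ ε : ℝ, 0 < ε ∧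
    ∃ n, HallSurplus (Fintype.card ι) ε n (orbitFinset S) (matched M) (used M)

/-- Serving points that are far apart in the overlap graph does not spoil the Hall condition: a
finite set that is affected by several of them is so large that its surplus pays for the loss. -/
theorem IsExtendable.exists_servePattern [MeasurableSpace X] [Fintype ι] (hM : IsExtendable S M) :
    ∃ L : ℕ, ∀ (A : Set X) (τ : ι → Γ), MeasurableSet A → Disjoint (matched M) A →
      (∀ a ∈ A, IsSafePattern S (matched M) (used M) τ a) →
      (∀ a ∈ A, ∀ b ∈ A, a ≠ b → L < (overlapGraph (orbitFinset S)).edist a b) →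
      IsExtendable S (servePattern M A τ) := by
  classical
  obtain ⟨ε, hε, n, hsurplus⟩ := hM.surplus
  obtain ⟨C₀, hC₀⟩ := exists_nat_ge (2 * Fintype.card ι / ε)
  obtain ⟨C, hn, hC⟩ : ∃ C : ℕ, n ≤ C ∧ 2 * Fintype.card ι ≤ ε * C := by
    refine ⟨max n C₀, le_max_left n C₀, ?_⟩
    rw [div_le_iff₀' hε] at hC₀
    exact hC₀.trans (by gcongr; exact le_max_right n C₀)
  refine ⟨2 * C + 2, fun A τ hA hAM hsafe hsep => ?_⟩
  let m (a : X) : Finset X := Finset.univ.image fun i => τ i • a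
  have coe_m (a : X) : (m a : Set X) = Set.range fun i => τ i • a := by
    rw [Finset.coe_image, Finset.coe_univ, Set.image_univ]
  have hm (a : X) (ha : a ∈ A) : m a ⊆ orbitFinset S a := fun y hy => by
    obtain ⟨i, -, rfl⟩ := Finset.mem_image.1 hy
    exact mem_orbitFinset.2 ⟨τ i, (hsafe a ha).mem i, rfl⟩
  have hmq (a : X) (_ : a ∈ A) : (m a).card ≤ Fintype.card ι := Finset.card_image_le
  refine ⟨hM.toIsPartialMatching.servePattern hA hAM (fun ⟨a, ha⟩ => (hsafe a ha).mem)
    (fun a ha => (hsafe a ha).notMem) fun a ha b hb i j h => ?_, ?_, ε / 2, half_pos hε, C, ?_⟩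
  · obtain rfl : a = b := by
      by_contra hab
      have hoverlap : ¬Disjoint (orbitFinset S a) (orbitFinset S b) := Finset.not_disjoint_iff.2
        ⟨τ i • a, mem_orbitFinset.2 ⟨_, (hsafe a ha).mem i, rfl⟩,
          mem_orbitFinset.2 ⟨_, (hsafe b hb).mem j, h.symm⟩⟩
      refine (hsep a ha b hb hab).not_ge ((edist_overlapGraph_le_one hoverlap).trans ?_)
      exact_mod_cast Nat.le_add_left 1 (2 * C + 1)
    exact ⟨(hsafe a ha).injective h, rfl⟩
  · simp only [matched_servePattern, used_servePattern, ← coe_m]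
    refine hM.hall.iUnion hsurplus hm hmq (fun a ha F hFD hF => ?_) hsep hn hε.le hC
    rw [coe_m]
    exact (hsafe a ha).card_le_card_freeNbrs hFD hF
  · simp only [matched_servePattern, used_servePattern, ← coe_m]
    exact hsurplus.iUnion hm hmq hsep hn hε.le hC

end PartialMatching

section GenericMatching

open MeasurableSpace

variable {Γ X ι : Type*} [Group Γ] [MulAction Γ X] [MeasurableSpace X] [MeasurableConstSMul Γ X]
  [CountablySeparated X] {S : Finset Γ} {M : (ι → Γ) → Set X}

/-- Code the points by 0-1 sequences and cut the space into pieces on which all points have the same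
first `n` digits while each `γ • x` with `γ ∈ E` is either `x` or has other first digits. -/
theorem exists_countable_cover_smul_eq (E : Finset Γ) : ∃ 𝓑 : Set (Set X), 𝓑.Countable ∧
    ⋃₀ 𝓑 = Set.univ ∧ (∀ B ∈ 𝓑, MeasurableSet B) ∧
      ∀ B ∈ 𝓑, ∀ γ ∈ E, ∀ x ∈ B, γ • x ∈ B → γ • x = x := by
  have := measurableEq_of_countablySeparated X
  obtain ⟨f, hf, hinj⟩ := measurable_injection_nat_bool_of_countablySeparated X
  let digits (n : ℕ) (x : X) (k : Fin n) : Bool := f x k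
  have measurable_digits (n : ℕ) : Measurable (digits n) :=
    measurable_pi_lambda _ fun k => (measurable_pi_apply _).comp hf
  let piece (v : Σ n, Fin n → Bool) : Set X :=
    {x | digits v.1 x = v.2 ∧ ∀ γ : E, γ.1 • x = x ∨ digits v.1 (γ.1 • x) ≠ digits v.1 x}
  refine ⟨Set.range piece, Set.countable_range piece, ?_, ?_, ?_⟩
  · refine Set.eq_univ_of_forall fun x => ?_
    have hsep (γ : E) : ∃ n, γ.1 • x = x ∨ f (γ.1 • x) n ≠ f x n := by
      by_contra! h
      exact (h 0).1 (hinj (funext fun n => (h n).2))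
    choose k hk using hsep
    obtain ⟨N, hN⟩ := (Set.finite_range k).bddAbove
    refine Set.mem_sUnion.2 ⟨piece ⟨N + 1, digits (N + 1) x⟩, ⟨_, rfl⟩, rfl, fun γ =>
      (hk γ).imp_right fun h heq => h ?_⟩
    exact congrFun heq ⟨k γ, Nat.lt_succ_of_le (hN ⟨γ, rfl⟩)⟩
  · rintro _ ⟨⟨n, v⟩, rfl⟩
    refine measurableSet_setOfPred.2 (.and ((measurable_digits n).eq measurable_const)
      (.forall fun γ => ?_))
    have hγ : Measurable fun x : X => γ.1 • x := measurable_const_smul γ.1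
    exact (hγ.eq measurable_id).or (((measurable_digits n).comp hγ).eq (measurable_digits n)).not
  · rintro _ ⟨v, rfl⟩ γ hγ x hx hγx
    exact (hx.2 ⟨γ, hγ⟩).resolve_right fun h => h (hγx.1.trans hx.1.symm)

theorem IsExtendable.exists_le_not_isMeagre [TopologicalSpace X] [Countable Γ] [Fintype ι]
    (hM : IsExtendable S M) {U : Set X} (hU : ¬IsMeagre U) (γ : Γ) :
    ∃ M' ≥ M, IsExtendable S M' ∧ ¬IsMeagre (U ∩ {x | γ • x ∈ matched M'}) := by
  have := measurableEq_of_countablySeparated X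
  by_cases hmeagre : IsMeagre (U ∩ {x | γ • x ∈ matched M})
  swap
  · exact ⟨M, le_rfl, hM, hmeagre⟩
  obtain ⟨L, hL⟩ := hM.exists_servePattern
  obtain ⟨E, hE⟩ := isLipschitzRel_edist_le (X := X) S L
  obtain ⟨𝓑, hcount, hcover, hmeas, hdiscrete⟩ := exists_countable_cover_smul_eq (X := X) E
  have := hcount.to_subtype
  let safe (p : (ι → Γ) × 𝓑) : Set X :=
    {a | a ∉ matched M ∧ IsSafePattern S (matched M) (used M) p.1 a ∧ a ∈ p.2.1}
  obtain ⟨⟨τ, B, hB⟩, hp⟩ : ∃ p, ¬IsMeagre (U ∩ {x | γ • x ∈ safe p}) := by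
    by_contra! hall
    refine hU ((hmeagre.union (isMeagre_iUnion hall)).mono fun x hx => ?_)
    by_cases hmatched : γ • x ∈ matched M
    · exact Or.inl ⟨hx, hmatched⟩
    · obtain ⟨τ, hτ⟩ := hM.hall.exists_isSafePattern hmatched
      obtain ⟨B, hB, hxB⟩ := hcover.ge (Set.mem_univ (γ • x))
      exact Or.inr (Set.mem_iUnion.2 ⟨(τ, ⟨B, hB⟩), hx, hmatched, hτ, hxB⟩)
  refine ⟨servePattern M (safe (τ, ⟨B, hB⟩)) τ, le_servePattern _ _ _, hL _ τ ?_ ?_ ?_ ?_, ?_⟩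
  · exact hM.measurableSet_matched.compl.inter
      ((measurableSet_isSafePattern hM.measurableSet_matched hM.measurableSet_used τ).inter
        (hmeas B hB))
  · exact Set.disjoint_right.2 fun a ha => ha.1
  · exact fun a ha => ha.2.1
  · rintro a ⟨-, -, ha⟩ b ⟨-, -, hb⟩ hab
    by_contra! hle
    obtain ⟨γ, hγ, rfl⟩ := hE a b hle
    exact hab (hdiscrete B hB γ hγ a ha hb).symm
  · rw [matched_servePattern]
    exact fun h => hp (h.mono (Set.inter_subset_inter_right U fun x => Or.inr))

end GenericMatching

section ComeagerMatching

open TopologicalSpace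

variable {Γ X ι : Type*} [MeasurableSpace X] {S : Finset Γ} {M : (ι → Γ) → Set X} {A B : Set X}

theorem mem_residual_of_forall_not_isMeagre_inter [TopologicalSpace X] [BorelSpace X]
    {b : Set (Set X)} (hb : IsTopologicalBasis b) (hB : MeasurableSet B)
    (h : ∀ U ∈ b, U.Nonempty → ¬IsMeagre (U ∩ B)) : B ∈ residual X := by
  obtain ⟨V, hV, hBV⟩ := hB.compl.baireMeasurableSet.residualEq_isOpen
  rcases V.eq_empty_or_nonempty with rfl | ⟨x, hx⟩
  · filter_upwards [hBV.mem_iff] with y hy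
    exact not_not.1 hy.1
  · obtain ⟨U, hU, hxU, hUV⟩ := hb.exists_subset_of_mem_open hx hV
    refine absurd ?_ (h U hU ⟨x, hxU⟩)
    filter_upwards [hBV.mem_iff] with y hy hyUB
    exact hy.2 (hUV hyUB.1) hyUB.2

variable [Group Γ] [MulAction Γ X]

theorem isExtendable_empty [Fintype ι]
    (hS : HallCondition (Fintype.card ι + 1) (orbitFinset S) (∅ : Set X) ∅) :
    IsExtendable S fun _ : ι → Γ => (∅ : Set X) := by
  have matched_empty : matched (fun _ : ι → Γ => (∅ : Set X)) = ∅ := Set.iUnion_empty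
  have used_empty : used (fun _ : ι → Γ => (∅ : Set X)) = ∅ := by
    simp only [used, Set.smul_set_empty, Set.iUnion_empty]
  refine ⟨⟨fun _ => .empty, ?_, ?_, ?_⟩, ?_, 1, one_pos, 0, ?_⟩
  · exact fun h => h.elim
  · exact fun h => h.elim
  · exact fun h => h.elim
  · rw [matched_empty, used_empty]
    exact hS.of_succ
  · rw [matched_empty, used_empty]
    exact fun F _ hF _ => by exact_mod_cast hS F hF

theorem IsPartialMatching.exists_injective2 [MeasurableConstSMul Γ X] [Countable Γ] [Fintype ι]
    (hM : IsPartialMatching S M)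
    (hS : HallCondition (Fintype.card ι) (orbitFinset S) (∅ : Set X) ∅) (hA : MeasurableSet A)
    (hinv : ∀ (γ : Γ) x, γ • x ∈ A ↔ x ∈ A) (hAM : A ⊆ matched M) :
    ∃ c : ι → X → X, Function.Injective2 c ∧ (∀ i x, c i x ∈ orbitFinset S x) ∧
      ∀ i B, MeasurableSet B → MeasurableSet (A ∩ c i ⁻¹' B) := by
  classical
  choose! pattern hpattern using fun x (hx : x ∈ A) => mem_matched.1 (hAM hx)
  obtain ⟨φ, hφinj, hφ⟩ := hS.exists_matching
  let c (i : ι) (x : X) : X := if x ∈ A then pattern x i • x else φ i ⟨x, id⟩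
  have c_of_mem {x : X} (hx : x ∈ A) (i : ι) : c i x = pattern x i • x := if_pos hx
  have c_of_notMem {x : X} (hx : x ∉ A) (i : ι) : c i x = φ i ⟨x, id⟩ := if_neg hx
  have hcS (i : ι) (x : X) : c i x ∈ orbitFinset S x := by
    by_cases hx : x ∈ A
    · exact c_of_mem hx i ▸ mem_orbitFinset.2 ⟨_, hM.mem (hpattern x hx) i, rfl⟩
    · exact c_of_notMem hx i ▸ (hφ i _).1
  have hcA (i : ι) (x : X) : c i x ∈ A ↔ x ∈ A := by
    obtain ⟨γ, -, hγ⟩ := mem_orbitFinset.1 (hcS i x)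
    exact hγ ▸ hinv γ x
  refine ⟨c, fun i j x y h => ?_, hcS, fun i B hB => ?_⟩
  · have hxy : x ∈ A ↔ y ∈ A := by rw [← hcA i, h, hcA]
    by_cases hx : x ∈ A
    · rw [c_of_mem hx, c_of_mem (hxy.1 hx)] at h
      exact hM.injective (hpattern x hx) (hpattern y (hxy.1 hx)) h
    · rw [c_of_notMem hx, c_of_notMem (mt hxy.2 hx)] at h
      exact (hφinj h).imp_right Subtype.mk.inj
  · have hpieces : A ∩ c i ⁻¹' B = ⋃ τ, A ∩ M τ ∩ (τ i • ·) ⁻¹' B := by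
      ext x
      simp only [Set.mem_iUnion, Set.mem_inter_iff, Set.mem_preimage]
      constructor
      · rintro ⟨hx, hB⟩
        exact ⟨pattern x, ⟨hx, hpattern x hx⟩, c_of_mem hx i ▸ hB⟩
      · rintro ⟨τ, ⟨hx, hτ⟩, hB⟩
        refine ⟨hx, ?_⟩
        rwa [c_of_mem hx, hM.pattern_unique (hpattern x hx) hτ]
    rw [hpieces]
    exact .iUnion fun τ => (hA.inter (hM.measurableSet τ)).inter
      (hB.preimage (measurable_const_smul (τ i)))

variable [TopologicalSpace X] [BorelSpace X] [T0Space X] [SecondCountableTopology X] [BaireSpace X]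
  [MeasurableConstSMul Γ X] [Countable Γ] [Fintype ι]

/-- Genericity: countably many extensions, one for each basic open set and each group element, make
the matching defined on a comeager set. -/
theorem IsExtendable.exists_isPartialMatching_residual (hM : IsExtendable S M) :
    ∃ M' : (ι → Γ) → Set X, IsPartialMatching S M' ∧
      ∀ γ : Γ, {x | γ • x ∈ matched M'} ∈ residual X := by
  let _ := Encodable.ofCountable (countableBasis X × Γ)
  let task (p : countableBasis X × Γ) : Order.Cofinal {M : (ι → Γ) → Set X // IsExtendable S M} :=
    { carrier := {M | ¬IsMeagre (p.1.1 ∩ {x | p.2 • x ∈ matched M.1})}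
      isCofinal := fun M => by
        obtain ⟨M', hle, hM', hmeagre⟩ := M.2.exists_le_not_isMeagre
          (not_isMeagre_of_isOpen (isOpen_of_mem_countableBasis p.1.2)
            (nonempty_of_mem_countableBasis p.1.2)) p.2
        exact ⟨⟨M', hM'⟩, hmeagre, hle⟩ }
  let start : {M : (ι → Γ) → Set X // IsExtendable S M} := ⟨M, hM⟩
  let stage := Order.sequenceOfCofinals start task
  have hmono : Monotone fun n => (stage n).1 := Order.sequenceOfCofinals.monotone start task
  have hlimit := IsPartialMatching.iUnion (fun n => (stage n).2.toIsPartialMatching) hmono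
  refine ⟨fun τ => ⋃ n, (stage n).1 τ, hlimit, fun γ => ?_⟩
  refine mem_residual_of_forall_not_isMeagre_inter (isBasis_countableBasis X)
    (hlimit.measurableSet_matched.preimage (measurable_const_smul γ)) fun U hU _ hmeagre => ?_
  have hstage := Order.sequenceOfCofinals.encode_mem start task (⟨U, hU⟩, γ)
  refine hstage (hmeagre.mono (Set.inter_subset_inter_right U fun x hx => ?_))
  obtain ⟨τ, hτ⟩ := mem_matched.1 hx
  exact mem_matched.2 ⟨τ, Set.mem_iUnion.2 ⟨_, hτ⟩⟩

theorem exists_injective2_mem_residual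
    (hS : HallCondition (Fintype.card ι + 1) (orbitFinset S) (∅ : Set X) ∅) :
    ∃ (A : Set X) (c : ι → X → X), MeasurableSet A ∧ A ∈ residual X ∧
      (∀ (γ : Γ) x, γ • x ∈ A ↔ x ∈ A) ∧ Function.Injective2 c ∧
        (∀ i x, c i x ∈ orbitFinset S x) ∧
          ∀ i B, MeasurableSet B → MeasurableSet (A ∩ c i ⁻¹' B) := by
  obtain ⟨M, hM, hresidual⟩ := (isExtendable_empty hS).exists_isPartialMatching_residual
  let A : Set X := ⋂ γ : Γ, {x | γ • x ∈ matched M}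
  have hA : MeasurableSet A := .iInter fun γ =>
    hM.measurableSet_matched.preimage (measurable_const_smul γ)
  have hinv (γ : Γ) (x : X) : γ • x ∈ A ↔ x ∈ A := by
    simp only [A, Set.mem_iInter, Set.mem_ofPred_eq, ← mul_smul]
    exact (Equiv.mulRight γ).forall_congr fun _ => Iff.rfl
  have hAM : A ⊆ matched M := fun x hx => one_smul Γ x ▸ Set.mem_iInter.1 hx 1
  obtain ⟨c, hc⟩ := hM.exists_injective2 hS.of_succ hA hinv hAM
  exact ⟨A, c, hA, countable_iInter_mem.2 hresidual, hinv, hc⟩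

end ComeagerMatching

section Paradox

variable {Γ X κ : Type*} {f g : X → X}

theorem injective2_iterate (hf : Function.Injective f) (hg : Function.Injective g)
    (hfg : Disjoint (Set.range f) (Set.range g)) : Function.Injective2 fun n x => f^[n] (g x) := by
  have of_le {m n : ℕ} {x y : X} (hmn : m ≤ n) (h : f^[m] (g x) = f^[n] (g y)) :
      m = n ∧ x = y := by
    obtain ⟨k, rfl⟩ := Nat.exists_eq_add_of_le hmn
    rw [Function.iterate_add_apply] at h
    replace h := hf.iterate m h
    cases k with
    | zero => exact ⟨rfl, hg h⟩
    | succ k =>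
      rw [Function.iterate_succ_apply'] at h
      exact (Set.disjoint_left.1 hfg ⟨_, rfl⟩ ⟨x, h⟩).elim
  intro m n x y h
  rcases le_total m n with hmn | hnm
  · exact of_le hmn h
  · exact (of_le hnm h.symm).imp Eq.symm Eq.symm

variable [Group Γ] [MulAction Γ X]

theorem exists_injective_isLipschitzRel [Finite κ] {A : κ → Set X} {α : κ → Γ}
    (hA : ∀ i j, i ≠ j → Disjoint (A i) (A j)) (hcover : ⋃ i, α i • A i = Set.univ) :
    ∃ f : X → X, Function.Injective f ∧ Set.range f ⊆ ⋃ i, A i ∧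
      IsLipschitzRel Γ fun x y => f x = y := by
  have hmem (x : X) : ∃ i, (α i)⁻¹ • x ∈ A i := by
    simpa only [Set.mem_iUnion, Set.mem_smul_set_iff_inv_smul_mem] using hcover.ge (Set.mem_univ x)
  choose i hi using hmem
  refine ⟨fun x => (α (i x))⁻¹ • x, fun x y hxy => ?_, ?_, (Set.finite_range α⁻¹).toFinset, ?_⟩
  · replace hxy : (α (i x))⁻¹ • x = (α (i y))⁻¹ • y := hxy
    have hixy : i x = i y := by
      by_contra hne
      exact Set.disjoint_left.1 (hA _ _ hne) (hi x) (hxy ▸ hi y)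
    rw [hixy] at hxy
    exact smul_left_cancel _ hxy
  · rintro _ ⟨x, rfl⟩
    exact Set.mem_iUnion.2 ⟨i x, hi x⟩
  · exact fun x y h => ⟨_, (Set.Finite.mem_toFinset _).2 ⟨i x, rfl⟩, h⟩

theorem IsLipschitzRel.exists_lt_iterate (hf : IsLipschitzRel Γ fun x y => f x = y)
    (hg : IsLipschitzRel Γ fun x y => g x = y) (q : ℕ) :
    IsLipschitzRel Γ fun x y => ∃ n < q, f^[n] (g x) = y := by
  induction q with
  | zero => exact ⟨∅, by simp⟩
  | succ q ih =>
    refine (hg.or (ih.comp hf)).mono ?_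
    rintro x _ ⟨_ | n, hn, rfl⟩
    · exact Or.inl rfl
    · exact Or.inr ⟨_, ⟨n, Nat.lt_of_succ_lt_succ hn, rfl⟩, (f.iterate_succ_apply' n (g x)).symm⟩

theorem IsParadoxicalDecomposition.exists_hallCondition {n m : ℕ} {A : Fin n → Set X}
    {B : Fin m → Set X} {α : Fin n → Γ} {β : Fin m → Γ} (h : IsParadoxicalDecomposition A B α β)
    (q : ℕ) : ∃ S : Finset Γ, HallCondition q (orbitFinset S) (∅ : Set X) ∅ := by
  obtain ⟨hA, hB, hAB, -, -, -, hα, hβ⟩ := h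
  obtain ⟨f, hf, hfA, hfL⟩ := exists_injective_isLipschitzRel hA hα
  obtain ⟨g, hg, hgB, hgL⟩ := exists_injective_isLipschitzRel hB hβ
  have hfg : Disjoint (Set.range f) (Set.range g) := by
    refine .mono hfA hgB ?_
    simpa only [Set.disjoint_iUnion_left, Set.disjoint_iUnion_right] using fun j i => hAB i j
  have hinj := injective2_iterate hf hg hfg
  obtain ⟨S, hS⟩ := hfL.exists_lt_iterate hgL q
  refine ⟨S, ?_⟩
  rw [← Fintype.card_fin q]
  exact hallCondition_of_injective2 (φ := fun (i : Fin q) x => f^[i] (g x))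
    (fun i j x y h => (hinj h).imp_left Fin.ext)
    fun i x => mem_orbitFinset.2 (hS x _ ⟨i, i.2, rfl⟩)

end Paradox

section Assembly

variable {Γ X ι : Type*} [Group Γ] [MulAction Γ X]

theorem countable_subgroupClosure (S : Finset Γ) : Countable (Subgroup.closure (S : Set Γ)) := by
  have : Countable (FreeGroup S) := by
    unfold FreeGroup
    infer_instance
  have := (FreeGroup.lift ((↑) : S → Γ)).rangeRestrict_surjective.countable
  rw [FreeGroup.closure_eq_range]
  exact this

theorem IsLipschitzRel.of_subgroup {Δ : Subgroup Γ} {r : X → X → Prop} (hr : IsLipschitzRel Δ r) :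
    IsLipschitzRel Γ r := by
  obtain ⟨S, hS⟩ := hr
  refine ⟨S.map (Function.Embedding.subtype _), fun x y hxy => ?_⟩
  obtain ⟨γ, hγ, rfl⟩ := hS x y hxy
  exact ⟨γ, Finset.mem_map_of_mem _ hγ, rfl⟩

open Classical in
theorem orbitFinset_subgroupClosure (S : Finset Γ) :
    orbitFinset (X := X) (S.subtype (· ∈ Subgroup.closure (S : Set Γ))) = orbitFinset S := by
  ext x y
  simp only [mem_orbitFinset, Finset.mem_subtype, Subtype.exists]
  constructor
  · rintro ⟨γ, -, hγ, rfl⟩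
    exact ⟨γ, hγ, rfl⟩
  · rintro ⟨γ, hγ, rfl⟩
    exact ⟨γ, Subgroup.subset_closure hγ, hγ, rfl⟩

variable [TopologicalSpace X] [MeasurableSpace X] [BorelSpace X] [T0Space X]
  [SecondCountableTopology X] [BaireSpace X] [MeasurableConstSMul Γ X] [Fintype ι] [Nontrivial ι]
  {S : Finset Γ}

theorem HallCondition.exists_regular_isAcyclic [Countable Γ]
    (hS : HallCondition (Fintype.card ι + 1) (orbitFinset S) (∅ : Set X) ∅) :
    ∃ G : SimpleGraph X, (∀ x, (G.neighborSet x).ncard = Fintype.card ι + 1) ∧ G.IsAcyclic ∧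
      IsLipschitzRel Γ G.Adj ∧ ∃ A : Set X, MeasurableSet A ∧ A ∈ residual X ∧
        (∀ x y, G.Adj x y → (x ∈ A ↔ y ∈ A)) ∧
          MeasurableSet {p : X × X | p.1 ∈ A ∧ p.2 ∈ A ∧ G.Adj p.1 p.2} := by
  obtain ⟨A, c, hA, hres, hinv, hinj, hcS, hc⟩ := exists_injective2_mem_residual hS
  have hL : IsLipschitzRel Γ (childRel c) :=
    ⟨S, fun x y ⟨i, hi⟩ => mem_orbitFinset.1 (hi ▸ hcS i x)⟩
  obtain ⟨G, hdeg, hacyc, ⟨T, hT⟩, hmeas⟩ :=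
    exists_isAcyclic_regular_measurableSet_inter hA hinv hinj hc hL
  refine ⟨G, fun x => by rw [hdeg, Nat.card_eq_fintype_card], hacyc, ⟨T, hT⟩, A, hA, hres,
    fun x y hxy => ?_, ?_⟩
  · obtain ⟨γ, -, rfl⟩ := hT x y hxy
    exact (hinv γ x).symm
  · convert hmeas using 1
    ext p
    exact (and_assoc (a := p.1 ∈ A)).symm

end Assembly

theorem four_regular_tree_general {Γ X : Type*} [Group Γ] [TopologicalSpace X] [T0Space X]
    [SecondCountableTopology X] [BaireSpace X] [MeasurableSpace X] [BorelSpace X] [MulAction Γ X]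
    (hBorelAction : ∀ γ : Γ, Measurable (fun x : X => γ • x))
    (hpara : ∃ (n m : ℕ) (A : Fin n → Set X) (B : Fin m → Set X) (α : Fin n → Γ)
      (β : Fin m → Γ), IsParadoxicalDecomposition A B α β) {d : ℕ} (hd : 3 ≤ d) :
    ∃ G : SimpleGraph X, (∀ x : X, (G.neighborSet x).ncard = d) ∧ G.IsAcyclic ∧
      (∃ S : Finset Γ, ∀ x y : X, G.Adj x y → ∃ γ ∈ S, γ • x = y) ∧
      ∃ A : Set X, MeasurableSet A ∧ A ∈ residual X ∧
        (∀ x y : X, G.Adj x y → (x ∈ A ↔ y ∈ A)) ∧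
        MeasurableSet {p : X × X | p.1 ∈ A ∧ p.2 ∈ A ∧ G.Adj p.1 p.2} := by
  classical
  obtain ⟨n, m, A, B, α, β, hparadox⟩ := hpara
  obtain ⟨k, rfl⟩ := Nat.exists_eq_add_of_le' hd
  obtain ⟨S, hS⟩ := hparadox.exists_hallCondition (Fintype.card (Fin (k + 2)) + 1)
  let Δ := Subgroup.closure (S : Set Γ)
  have : Countable Δ := countable_subgroupClosure S
  have : MeasurableConstSMul Δ X := ⟨fun γ => hBorelAction γ⟩
  rw [← orbitFinset_subgroupClosure] at hS
  obtain ⟨G, hdeg, hacyc, hlip, hA⟩ := hS.exists_regular_isAcyclic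
  exact ⟨G, fun x => by rw [hdeg, Fintype.card_fin], hacyc, hlip.of_subgroup, hA⟩

/-- **Lemma (Marks–Unger).** If `a` is a nonamenable (equivalently, paradoxical) action of a
group `Γ` on a Polish space `X` by Borel automorphisms, then there is a `4`-regular acyclic
`a`-Lipschitz graph `G` on `X` and a comeager `G`-invariant Borel set `A ⊆ X` such that the
induced graph `G ↾ A` is Borel. -/
theorem four_regular_tree {Γ X : Type*} [Group Γ] [TopologicalSpace X] [PolishSpace X]
    [MeasurableSpace X] [BorelSpace X] [MulAction Γ X]
    (hBorelAction : ∀ γ : Γ, Measurable (fun x : X => γ • x))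
    (hpara : ∃ (n m : ℕ) (A : Fin n → Set X) (B : Fin m → Set X) (α : Fin n → Γ)
      (β : Fin m → Γ), IsParadoxicalDecomposition A B α β) :
    ∃ G : SimpleGraph X,
      -- `G` is `4`-regular
      (∀ x : X, (G.neighborSet x).ncard = 4) ∧
      -- `G` is acyclic
      G.IsAcyclic ∧
      -- `G` is `a`-Lipschitz
      (∃ S : Finset Γ, ∀ x y : X, G.Adj x y → ∃ γ ∈ S, γ • x = y) ∧
      -- there is a comeager `G`-invariant Borel set `A` on which `G` is Borel
      ∃ A : Set X, MeasurableSet A ∧ A ∈ residual X ∧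
        (∀ x y : X, G.Adj x y → (x ∈ A ↔ y ∈ A)) ∧
        MeasurableSet {p : X × X | p.1 ∈ A ∧ p.2 ∈ A ∧ G.Adj p.1 p.2} := by
  exact four_regular_tree_general hBorelAction hpara (by norm_num)
end

section
/- Suppose G is an acyclic 4-regular Borel graph on a comeager Borel subset C of a Polish space X. Then there is a G-invariant comeager Borel set A ⊆ C and a free Borel action of the free group F₂ = ⟨a, b⟩ on A which generates G ↾ A; that is, there are Borel automorphisms f₁, f₂ of A with f₁(x) ≠ f₂(x) for all x ∈ A, generating a free action of F₂, such that the edges of G ↾ A are exactly the pairs {x, f₁(x)} and {x, f₂(x)} for x ∈ A. -/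
/-!
Enumerate the neighbours of every vertex in a Borel way, so that a permutation of the index set
labels the edges at a vertex. For `4`-regular graphs the labels are `a, a⁻¹, b, b⁻¹`, and if the two
directions of every edge carry inverse labels, then moving along the edges with a fixed label is a
bijection. The action obtained in this way is free because a reduced word traces a geodesic in a
tree.

Such a labelling is built in countably many steps, keeping its domain `D` scattered: points of `D`
at distance at most `4` are connected inside `D`, and the components of a thickening of `D` have
bounded diameter. To add a sufficiently sparse Borel set `A` to the domain, add the whole component
of each `y ∈ A` in the thickening of `D`, one sphere around `y` at a time. A new vertex `x` is then
constrained by at most two labelled vertices: its neighbour towards `y` and one vertex of `D`. Two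
constraints can always be met, as there are at least three labels. The space is a countable union of
Borel sets of any given sparseness, so one of them is nonmeager in a given open set, even after
pulling it back along a fixed path. Meeting countably many such requirements yields a labelling
whose domain has comeager preimages along all paths, and hence contains a comeager invariant set.
-/

namespace TreeLabelling

open Set MeasureTheory TopologicalSpace SimpleGraph

/-- The induced graph on `K`, kept on the full vertex type so that connectivity inside `K` is
reachability in `G ↾ K`, with every vertex (even outside `K`) connected to itself. -/
def restrict {V : Type*} (G : SimpleGraph V) (K : Set V) : SimpleGraph V :=
  (G.induce K).spanningCoe

local infixl:80 " ↾ " => restrict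

section Restriction

variable {V : Type*} {G : SimpleGraph V} {K L : Set V} {u v : V}

theorem restrict_adj : (G ↾ K).Adj u v ↔ G.Adj u v ∧ u ∈ K ∧ v ∈ K := by
  simp [restrict]

theorem restrict_le : G ↾ K ≤ G := spanningCoe_induce_le G K

theorem restrict_mono (h : K ⊆ L) : G ↾ K ≤ G ↾ L := by
  intro u v huv
  rw [restrict_adj] at huv ⊢
  exact ⟨huv.1, h huv.2.1, h huv.2.2⟩

theorem reachable_restrict_of_support_subset (w : G.Walk u v) (hw : ∀ z ∈ w.support, z ∈ K) :
    (G ↾ K).Reachable u v :=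
  (w.transfer (G ↾ K) fun e he => by
    induction e with
    | _ a b =>
      exact restrict_adj.2 ⟨w.adj_of_mem_edges he, hw a (w.fst_mem_support_of_mem_edges he),
        hw b (w.snd_mem_support_of_mem_edges he)⟩).reachable

end Restriction

section Acyclic

variable {V : Type*} {G H : SimpleGraph V} {K : Set V} {u v u' v' x y p q : V}

theorem adj_of_le_of_reachable (hG : G.IsAcyclic) (hle : H ≤ G) (huv : G.Adj u v)
    (hr : H.Reachable u v) : H.Adj u v := by
  by_contra hnot
  refine isBridge_iff.1 (isAcyclic_iff_forall_adj_isBridge.1 hG huv) (hr.mono fun a b hab => ?_)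
  refine (deleteEdges_adj).2 ⟨hle hab, fun he => hnot ?_⟩
  rwa [← mem_edgeSet, ← mem_singleton_iff.1 he, mem_edgeSet]

theorem eq_of_boundary_reachable (hG : G.IsAcyclic) (hu : u ∈ K) (hu' : u' ∉ K)
    (hv' : v' ∉ K) (huu' : G.Adj u u') (hvv' : G.Adj v v') (hin : (G ↾ K).Reachable u v)
    (hout : (G ↾ Kᶜ).Reachable u' v') : u = v := by
  let H : SimpleGraph V := G ↾ K ⊔ G ↾ Kᶜ ⊔ edge v v'
  have hle : H ≤ G := sup_le (sup_le restrict_le restrict_le) ((edge_le_iff _).2 (Or.inr hvv'))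
  have hstep : H.Adj v v' := Or.inr (by simp [edge_adj, hvv'.ne])
  have hreach : H.Reachable u u' :=
    ((hin.mono (le_sup_left.trans le_sup_left)).trans hstep.reachable).trans
      (hout.symm.mono (le_sup_right.trans le_sup_left))
  rcases adj_of_le_of_reachable hG hle huu' hreach with (h | h) | h
  · exact absurd (restrict_adj.1 h).2.2 hu'
  · exact absurd hu (restrict_adj.1 h).2.1
  · rcases ((edge_adj ..).1 h).1 with ⟨h, -⟩ | ⟨h, -⟩
    · exact h
    · exact absurd (h ▸ hu) hv'

theorem reachable_restrict_compl_singleton_of_dist_lt (hyp : G.Reachable y p)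
    (hlt : G.dist y p < G.dist y x) : (G ↾ {x}ᶜ).Reachable y p := by
  classical
  obtain ⟨w, hw⟩ := hyp.exists_walk_length_eq_dist
  refine reachable_restrict_of_support_subset w fun z hz hzx => ?_
  have hyz : G.dist y z ≤ w.length := (dist_le _).trans (w.length_takeUntil_le_length hz)
  rw [mem_singleton_iff.1 hzx] at hyz
  omega

theorem eq_of_adj_of_reachable_compl_singleton (hG : G.IsAcyclic) (hp : G.Adj p x)
    (hq : G.Adj q x) (hpq : (G ↾ {x}ᶜ).Reachable p q) : p = q :=
  eq_of_boundary_reachable hG hp.ne (by simp) (by simp) hp hq hpq .rfl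

theorem not_adj_of_common_adj (hG : G.IsAcyclic) (hup : G.Adj u p) (hpx : G.Adj p x) :
    ¬G.Adj u x := fun hux =>
  hup.ne (eq_of_adj_of_reachable_compl_singleton hG hux hpx
    (restrict_adj.2 ⟨hup, hux.ne, hpx.ne⟩).reachable)

theorem eq_of_common_adj (hG : G.IsAcyclic) (hux : u ≠ x) (hup : G.Adj u p) (hpx : G.Adj p x)
    (huq : G.Adj u q) (hqx : G.Adj q x) : p = q :=
  eq_of_adj_of_reachable_compl_singleton hG hpx hqx
    ((restrict_adj.2 ⟨hup.symm, hpx.ne, hux⟩).reachable.trans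
      (restrict_adj.2 ⟨huq, hux, hqx.ne⟩).reachable)

theorem eq_of_adj_of_dist_lt (hG : G.IsAcyclic) (hyx : G.Reachable y x) (hp : G.Adj p x)
    (hq : G.Adj q x) (hpx : G.dist y p < G.dist y x) (hqx : G.dist y q < G.dist y x) : p = q :=
  eq_of_adj_of_reachable_compl_singleton hG hp hq <|
    (reachable_restrict_compl_singleton_of_dist_lt (hyx.trans hp.symm.reachable) hpx).symm.trans
      (reachable_restrict_compl_singleton_of_dist_lt (hyx.trans hq.symm.reachable) hqx)

theorem mem_of_reachable_restrict_of_dist_lt (hG : G.IsAcyclic) (hyx : (G ↾ K).Reachable y x)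
    (hp : G.Adj p x) (hpx : G.dist y p < G.dist y x) : p ∈ K := by
  have hyp : (G ↾ {x}ᶜ).Reachable y p := reachable_restrict_compl_singleton_of_dist_lt
    ((hyx.mono restrict_le).trans hp.symm.reachable) hpx
  have hpx' : (G ↾ {x}ᶜ ⊔ G ↾ K).Reachable p x :=
    (hyp.symm.mono le_sup_left).trans (hyx.mono le_sup_right)
  rcases adj_of_le_of_reachable hG (sup_le restrict_le restrict_le) hp hpx' with h | h
  · exact absurd rfl (restrict_adj.1 h).2.2
  · exact (restrict_adj.1 h).2.1

end Acyclic

section Scattered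

variable {V : Type*} {G : SimpleGraph V} {D A : Set V} {r s b k l m : ℕ} {u v w y z : V}

theorem edist_le_of_le_of_le (huv : G.edist u v ≤ k) (hvw : G.edist v w ≤ l)
    (hm : k + l ≤ m := by omega) : G.edist u w ≤ m :=
  (G.edist_triangle.trans (add_le_add huv hvw)).trans (mod_cast hm)

/-- The set of vertices at distance at most `r` from `D`. -/
def thickening (G : SimpleGraph V) (r : ℕ) (D : Set V) : Set V :=
  {u | ∃ d ∈ D, G.edist u d ≤ r}

/-- The vertex `y` together with its component in the `r`-thickening of `D`. -/
def hull (G : SimpleGraph V) (r : ℕ) (D : Set V) (y : V) : Set V :=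
  {z | (G ↾ thickening G r D).Reachable y z}

/-- `D` is `r`-scattered if its components are at distance more than `r` from each other and the
components of its `r`-thickening have uniformly bounded diameter. -/
structure IsScattered (G : SimpleGraph V) (r : ℕ) (D : Set V) : Prop where
  reachable : ∀ u ∈ D, ∀ v ∈ D, G.edist u v ≤ r → (G ↾ D).Reachable u v
  bounded : ∃ b : ℕ, ∀ u v, (G ↾ thickening G r D).Reachable u v → G.edist u v ≤ b

/-- Distinct points of `A` are at distance more than `s`. -/
def IsSparse (G : SimpleGraph V) (s : ℕ) (A : Set V) : Prop :=
  ∀ u ∈ A, ∀ v ∈ A, G.edist u v ≤ s → u = v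

theorem isScattered_empty (G : SimpleGraph V) (r : ℕ) : IsScattered G r ∅ where
  reachable := by simp
  bounded := by
    refine ⟨0, fun u v huv => ?_⟩
    have hbot : G ↾ thickening G r ∅ = ⊥ := by
      ext u v
      simp [restrict_adj, thickening]
    rw [hbot, reachable_bot] at huv
    simp [huv]

theorem thickening_union : thickening G r (D ∪ A) = thickening G r D ∪ thickening G r A := by
  ext u
  simp only [thickening, mem_union, mem_ofPred_eq, or_and_right, exists_or]

theorem reachable_restrict_thickening (hv : v ∈ D) (huv : G.edist u v ≤ r) :
    (G ↾ thickening G r D).Reachable u v := by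
  classical
  obtain ⟨p, hp⟩ := exists_walk_of_edist_ne_top (ne_top_of_le_ne_top (ENat.natCast_ne_top r) huv)
  refine reachable_restrict_of_support_subset p fun z hz => ⟨v, hv, ?_⟩
  calc G.edist z v ≤ (p.dropUntil z hz).length := edist_le _
    _ ≤ p.length := mod_cast p.length_dropUntil_le_length hz
    _ ≤ r := hp.trans_le huv

theorem mem_hull_self : y ∈ hull G r D y := .rfl

theorem mem_hull_of_edist_le (hv : v ∈ hull G r D y) (hu : u ∈ D) (huv : G.edist u v ≤ r) :
    u ∈ hull G r D y :=
  hv.trans (reachable_restrict_thickening hu (edist_comm.trans_le huv))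

theorem reachable_restrict_hull (hz : z ∈ hull G r D y) : (G ↾ hull G r D y).Reachable y z := by
  have hz' := (reachable_iff_reflTransGen _ _).1 hz
  induction hz' with
  | refl => rfl
  | @tail v z hyv hvz ih =>
    have hv : v ∈ hull G r D y := (reachable_iff_reflTransGen _ _).2 hyv
    exact (ih hv).trans (restrict_adj.2 ⟨(restrict_adj.1 hvz).1, hv, hz⟩).reachable

theorem IsSparse.anti (hA : IsSparse G s A) (h : k ≤ s) : IsSparse G k A :=
  fun u hu v hv huv => hA u hu v hv (huv.trans (mod_cast h))

theorem IsSparse.eq_of_edist_le_of_mem_hull (hA : IsSparse G (2 * b + r) A)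
    (hb : ∀ u v, (G ↾ thickening G r D).Reachable u v → G.edist u v ≤ b) (hy : y ∈ A) (hz : z ∈ A)
    (hu : u ∈ hull G r D y) (hv : v ∈ hull G r D z) (huv : G.edist u v ≤ r) : y = z :=
  hA y hy z hz (edist_le_of_le_of_le (edist_le_of_le_of_le (hb y u hu) huv le_rfl)
    (edist_comm.trans_le (hb z v hv)))

theorem reachable_restrict_union_hulls
    (hD : ∀ u ∈ D, ∀ v ∈ D, G.edist u v ≤ r → (G ↾ D).Reachable u v)
    (hb : ∀ u v, (G ↾ thickening G r D).Reachable u v → G.edist u v ≤ b)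
    (hA : IsSparse G (2 * b + r) A) (hu : u ∈ D ∪ ⋃ y ∈ A, hull G r D y)
    (hv : v ∈ D ∪ ⋃ y ∈ A, hull G r D y) (huv : G.edist u v ≤ r) :
    (G ↾ (D ∪ ⋃ y ∈ A, hull G r D y)).Reachable u v := by
  have mem_hull : ∀ y ∈ A, ∀ u ∈ D ∪ ⋃ y ∈ A, hull G r D y, ∀ v ∈ hull G r D y,
      G.edist u v ≤ r → u ∈ hull G r D y := by
    rintro y hy u (hu | hu) v hv huv
    · exact mem_hull_of_edist_le hv hu huv
    · obtain ⟨y', hy', hu⟩ := mem_iUnion₂.1 hu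
      exact hA.eq_of_edist_le_of_mem_hull hb hy' hy hu hv huv ▸ hu
  have of_mem_hull : ∀ y ∈ A, u ∈ hull G r D y → v ∈ hull G r D y →
      (G ↾ (D ∪ ⋃ y ∈ A, hull G r D y)).Reachable u v := fun y hy hu hv =>
    ((reachable_restrict_hull hu).symm.trans (reachable_restrict_hull hv)).mono
      (restrict_mono (subset_union_of_subset_right (subset_biUnion_of_mem hy) D))
  have hvu : G.edist v u ≤ r := edist_comm.trans_le huv
  rcases id hu with huD | huA
  · rcases id hv with hvD | hvA
    · exact (hD u huD v hvD huv).mono (restrict_mono subset_union_left)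
    · obtain ⟨y, hy, hvy⟩ := mem_iUnion₂.1 hvA
      exact of_mem_hull y hy (mem_hull y hy u hu v hvy huv) hvy
  · obtain ⟨y, hy, huy⟩ := mem_iUnion₂.1 huA
    exact of_mem_hull y hy huy (mem_hull y hy v hv u huy hvu)

theorem exists_edist_le_of_mem_thickening_iUnion_hull
    (hb : ∀ u v, (G ↾ thickening G r D).Reachable u v → G.edist u v ≤ b)
    (hv : v ∈ thickening G r (⋃ y ∈ A, hull G r D y)) :
    ∃ y ∈ A, G.edist y v ≤ (b + r : ℕ) := by
  obtain ⟨d, hd, hvd⟩ := hv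
  obtain ⟨y, hy, hyd⟩ := mem_iUnion₂.1 hd
  exact ⟨y, hy, edist_le_of_le_of_le (hb y d hyd) (edist_comm.trans_le hvd)⟩

theorem adj_thickening_or_exists_edist_le
    (hb : ∀ u v, (G ↾ thickening G r D).Reachable u v → G.edist u v ≤ b)
    (huv : (G ↾ thickening G r (D ∪ ⋃ y ∈ A, hull G r D y)).Adj u v) :
    (G ↾ thickening G r D).Adj u v ∨
      ∃ y ∈ A, G.edist y u ≤ (b + r + 1 : ℕ) ∧ G.edist y v ≤ (b + r + 1 : ℕ) := by
  obtain ⟨hadj, hu, hv⟩ := restrict_adj.1 huv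
  have hone : G.edist u v ≤ (1 : ℕ) := (edist_eq_one_iff_adj.2 hadj).le
  rw [thickening_union] at hu hv
  rcases hu with hu | hu
  · rcases hv with hv | hv
    · exact Or.inl (restrict_adj.2 ⟨hadj, hu, hv⟩)
    · obtain ⟨y, hy, hyv⟩ := exists_edist_le_of_mem_thickening_iUnion_hull hb hv
      exact Or.inr ⟨y, hy, edist_le_of_le_of_le hyv (edist_comm.trans_le hone),
        hyv.trans (by norm_cast; omega)⟩
  · obtain ⟨y, hy, hyu⟩ := exists_edist_le_of_mem_thickening_iUnion_hull hb hu
    exact Or.inr ⟨y, hy, hyu.trans (by norm_cast; omega), edist_le_of_le_of_le hyu hone⟩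

theorem edist_le_of_reachable_thickening_union_hulls
    (hb : ∀ u v, (G ↾ thickening G r D).Reachable u v → G.edist u v ≤ b)
    (hA : IsSparse G (3 * b + 2 * r + 2) A)
    (huv : (G ↾ thickening G r (D ∪ ⋃ y ∈ A, hull G r D y)).Reachable u v) :
    G.edist u v ≤ (4 * b + 2 * r + 2 : ℕ) := by
  -- By sparseness, a path in the thickening comes close to at most one point of `A`.
  suffices h : (G ↾ thickening G r D).Reachable u v ∨ ∃ y ∈ A, G.edist u y ≤ (2 * b + r + 1 : ℕ) ∧
      ∃ w, G.edist y w ≤ (b + r + 1 : ℕ) ∧ (G ↾ thickening G r D).Reachable w v by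
    rcases h with h | ⟨y, -, huy, w, hyw, hwv⟩
    · exact (hb u v h).trans (by norm_cast; omega)
    · exact edist_le_of_le_of_le (edist_le_of_le_of_le huy hyw le_rfl) (hb w v hwv)
  rw [reachable_iff_reflTransGen] at huv
  induction huv with
  | refl => exact Or.inl .rfl
  | @tail v v' _ hvv' ih =>
    rcases adj_thickening_or_exists_edist_le hb hvv' with hstep | ⟨y, hy, hyv, hyv'⟩
    · exact ih.imp (·.trans hstep.reachable) fun ⟨y, hy, huy, w, hyw, hwv⟩ =>
        ⟨y, hy, huy, w, hyw, hwv.trans hstep.reachable⟩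
    · refine Or.inr ⟨y, hy, ?_, v', hyv', .rfl⟩
      rcases ih with huv | ⟨y₀, hy₀, huy₀, w, hyw, hwv⟩
      · exact edist_le_of_le_of_le (hb u v huv) (edist_comm.trans_le hyv)
      · have hy₀v := edist_le_of_le_of_le hyw (hb w v hwv) le_rfl
        have hyy₀ := edist_le_of_le_of_le hy₀v (edist_comm.trans_le hyv) (m := 3 * b + 2 * r + 2)
        exact hA y₀ hy₀ y hy hyy₀ ▸ huy₀

theorem IsScattered.exists_union_hulls (hD : IsScattered G r D) :
    ∃ s, ∀ A, IsSparse G s A → IsScattered G r (D ∪ ⋃ y ∈ A, hull G r D y) ∧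
      ∀ y ∈ A, ∀ z ∈ A, ∀ u ∈ hull G r D y, ∀ v ∈ hull G r D z, G.edist u v ≤ r → y = z := by
  obtain ⟨b, hb⟩ := hD.bounded
  refine ⟨3 * b + 2 * r + 2, fun A hA => ?_⟩
  have hA' : IsSparse G (2 * b + r) A := hA.anti (by omega)
  refine ⟨⟨fun u hu v hv huv => ?_, 4 * b + 2 * r + 2, fun u v => ?_⟩, ?_⟩
  · exact reachable_restrict_union_hulls hD.reachable hb hA' hu hv huv
  · exact edist_le_of_reachable_thickening_union_hulls hb hA
  · exact fun y hy z hz u hu v hv => hA'.eq_of_edist_le_of_mem_hull hb hy hz hu hv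

end Scattered

section Labelling

variable {V ι : Type*} {G : SimpleGraph V} {n : ι → V → V} {τ : ι → ι}
  {ℓ : V → Part (Equiv.Perm ι)} {f : V → Equiv.Perm ι} {T : Set V} {σ : Equiv.Perm ι} {l : ι}
  {x y u : V}

/-- `n` lists the neighbours of every vertex of `G` without repetition; values of `n` that are
not neighbours of `x` are equal to `x`. -/
structure IsNeighborEnum (G : SimpleGraph V) (n : ι → V → V) : Prop where
  adj_or_eq : ∀ x i, G.Adj x (n i x) ∨ n i x = x
  existsUnique : ∀ x y, G.Adj x y → ∃! i, n i x = y

/-- The domain of a partial labelling. -/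
def labelled (ℓ : V → Part (Equiv.Perm ι)) : Set V :=
  {x | (ℓ x).Dom}

/-- A partial labelling `ℓ` assigns to some vertices `x` a permutation `σ`, which gives the edge
from `x` to its neighbour `n i x` the label `σ i`. `EdgeLabel G n ℓ x y l` says that `x` is labelled
and that `l` is the label of the edge from `x` to `y`. -/
def EdgeLabel (G : SimpleGraph V) (n : ι → V → V) (ℓ : V → Part (Equiv.Perm ι)) (x y : V) (l : ι) :
    Prop :=
  G.Adj x y ∧ ∃ σ ∈ ℓ x, ∃ i, n i x = y ∧ σ i = l

/-- The two directions of an edge carry labels exchanged by `τ`, and the labels of the edges into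
an unlabelled vertex are distinct, so that it can still be labelled. -/
structure IsCoherent (G : SimpleGraph V) (n : ι → V → V) (τ : ι → ι)
    (ℓ : V → Part (Equiv.Perm ι)) : Prop where
  reverse : ∀ x y l l', EdgeLabel G n ℓ x y l → EdgeLabel G n ℓ y x l' → l' = τ l
  target : ∀ x x' y l, y ∉ labelled ℓ → EdgeLabel G n ℓ x y l → EdgeLabel G n ℓ x' y l → x = x'

/-- The constraints that the labels at `u` impose on a permutation `σ` labelling `x`. -/
def AdmissibleFrom (G : SimpleGraph V) (n : ι → V → V) (τ : ι → ι) (ℓ : V → Part (Equiv.Perm ι))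
    (u x : V) (σ : Equiv.Perm ι) : Prop :=
  ∀ i l, G.Adj x (n i x) → (n i x = u → EdgeLabel G n ℓ u x l → σ i = τ l) ∧
    (n i x ∉ labelled ℓ → EdgeLabel G n ℓ u (n i x) l → σ i ≠ l)

/-- `u` is labelled and is adjacent to `x` or has an unlabelled common neighbour with `x`; only
such vertices constrain the labels at `x`. -/
def Influences (G : SimpleGraph V) (ℓ : V → Part (Equiv.Perm ι)) (u x : V) : Prop :=
  u ∈ labelled ℓ ∧ (G.Adj u x ∨ ∃ m ∉ labelled ℓ, G.Adj u m ∧ G.Adj m x)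

theorem mem_labelled : x ∈ labelled ℓ ↔ ∃ σ, σ ∈ ℓ x :=
  Part.dom_iff_mem

theorem EdgeLabel.left_mem (h : EdgeLabel G n ℓ x y l) : x ∈ labelled ℓ :=
  mem_labelled.2 (h.2.imp fun _ hσ => hσ.1)

theorem EdgeLabel.unique (hn : IsNeighborEnum G n) {l' : ι} (h : EdgeLabel G n ℓ x y l)
    (h' : EdgeLabel G n ℓ x y l') : l = l' := by
  obtain ⟨hxy, σ, hσ, i, hi, rfl⟩ := h
  obtain ⟨-, σ', hσ', i', hi', rfl⟩ := h'
  rw [Part.mem_unique hσ hσ', (hn.existsUnique x y hxy).unique hi hi']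

theorem exists_edgeLabel (hn : IsNeighborEnum G n) (hx : x ∈ labelled ℓ) (hxy : G.Adj x y) :
    ∃ l, EdgeLabel G n ℓ x y l := by
  obtain ⟨σ, hσ⟩ := mem_labelled.1 hx
  obtain ⟨i, hi, -⟩ := hn.existsUnique x y hxy
  exact ⟨σ i, hxy, σ, hσ, i, hi, rfl⟩

theorem admissibleFrom_of_not_influences (h : ¬Influences G ℓ u x) :
    AdmissibleFrom G n τ ℓ u x σ := by
  refine fun i l hadj => ⟨fun _ hul => ?_, fun hi hul => ?_⟩
  · exact absurd ⟨hul.left_mem, Or.inl hul.1⟩ h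
  · exact absurd ⟨hul.left_mem, Or.inr ⟨_, hi, hul.1, hadj.symm⟩⟩ h

theorem exists_admissibleFrom (hG : G.IsAcyclic) (hn : IsNeighborEnum G n)
    (hx : x ∉ labelled ℓ) (hu : Influences G ℓ u x) :
    ∃ i, ∃ S : Set ι, (∀ σ : Equiv.Perm ι, σ i ∈ S → AdmissibleFrom G n τ ℓ u x σ) ∧
      ((n i x = u ∧ ∃ l, EdgeLabel G n ℓ u x l ∧ S = {τ l}) ∨
        (n i x ∉ labelled ℓ ∧ ∃ l, S = {l}ᶜ)) := by
  obtain ⟨hudom, hux | ⟨m, hm, hum, hmx⟩⟩ := hu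
  · obtain ⟨i, hi, huniq⟩ := hn.existsUnique x u hux.symm
    obtain ⟨l, hl⟩ := exists_edgeLabel hn hudom hux
    refine ⟨i, {τ l}, fun σ hσ j l' hadj => ⟨fun hj hl' => ?_, fun _ hl' => ?_⟩,
      Or.inl ⟨hi, l, hl, rfl⟩⟩
    · rw [huniq j hj, ← hl.unique hn hl']
      exact hσ
    · exact absurd hux (not_adj_of_common_adj hG hl'.1 hadj.symm)
  · obtain ⟨i, rfl, huniq⟩ := hn.existsUnique x m hmx.symm
    obtain ⟨l, hl⟩ := exists_edgeLabel hn hudom hum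
    refine ⟨i, {l}ᶜ, fun σ hσ j l' hadj => ⟨fun _ hl' => ?_, fun _ hl' => ?_⟩,
      Or.inr ⟨hm, l, rfl⟩⟩
    · exact absurd hl'.1 (not_adj_of_common_adj hG hum hmx)
    · have hux : u ≠ x := by
        rintro rfl
        exact hx hudom
      obtain rfl : j = i := huniq j (eq_of_common_adj hG hux hl'.1 hadj.symm hum hmx)
      rw [← hl.unique hn hl']
      exact hσ

theorem exists_perm_apply_mem {i j : ι} {S T : Set ι} (h : ∃ a ∈ S, ∃ b ∈ T, (a = b ↔ i = j)) :
    ∃ σ : Equiv.Perm ι, σ i ∈ S ∧ σ j ∈ T := by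
  classical
  obtain ⟨a, ha, b, hb, hab⟩ := h
  obtain ⟨σ, hi, hj⟩ : ∃ σ : Equiv.Perm ι, σ i = a ∧ σ j = b := by
    by_cases hij : i = j
    · obtain rfl := hab.2 hij
      subst hij
      exact ⟨Equiv.swap i a, Equiv.swap_apply_left i a, Equiv.swap_apply_left i a⟩
    · exact MulAction.is_two_pretransitive_iff.1
        (Equiv.Perm.isMultiplyPretransitive ι 2) hij (mt hab.1 hij)
  exact ⟨σ, hi ▸ ha, hj ▸ hb⟩

theorem exists_admissibleFrom_and (hG : G.IsAcyclic) (hn : IsNeighborEnum G n)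
    (hι : 3 ≤ ENat.card ι) (hτ : Function.Injective τ) (hℓ : IsCoherent G n τ ℓ)
    (hx : x ∉ labelled ℓ) {u₁ u₂ : V} (hne : u₁ ≠ u₂) (hu₁ : Influences G ℓ u₁ x)
    (hu₂ : Influences G ℓ u₂ x) :
    ∃ σ, AdmissibleFrom G n τ ℓ u₁ x σ ∧ AdmissibleFrom G n τ ℓ u₂ x σ := by
  obtain ⟨i, S, hS, hiS⟩ := exists_admissibleFrom (τ := τ) hG hn hx hu₁
  obtain ⟨j, T, hT, hjT⟩ := exists_admissibleFrom (τ := τ) hG hn hx hu₂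
  suffices h : ∃ a ∈ S, ∃ b ∈ T, (a = b ↔ i = j) by
    obtain ⟨σ, hσi, hσj⟩ := exists_perm_apply_mem h
    exact ⟨σ, hS σ hσi, hT σ hσj⟩
  rcases hiS with ⟨rfl, l, hl, rfl⟩ | ⟨hi, l, rfl⟩ <;>
    rcases hjT with ⟨rfl, l', hl', rfl⟩ | ⟨hj, l', rfl⟩
  · refine ⟨τ l, rfl, τ l', rfl, iff_of_false (fun h => hne ?_) (by grind)⟩
    obtain rfl := hτ h
    exact hℓ.target _ _ _ _ hx hl hl'
  · obtain ⟨b, hb, hbl⟩ := ENat.exists_ne_ne_of_three_le hι (τ l) l'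
    exact ⟨τ l, rfl, b, hbl, iff_of_false hb.symm (by grind [hu₁.1])⟩
  · obtain ⟨a, ha, hal⟩ := ENat.exists_ne_ne_of_three_le hι (τ l') l
    exact ⟨a, hal, τ l', rfl, iff_of_false ha (by grind [hu₂.1])⟩
  · obtain ⟨a, hal, hal'⟩ := ENat.exists_ne_ne_of_three_le hι l l'
    obtain ⟨b, hba, hbl'⟩ := ENat.exists_ne_ne_of_three_le hι a l'
    by_cases hij : i = j
    · exact ⟨a, hal, a, hal', iff_of_true rfl hij⟩
    · exact ⟨a, hal, b, hbl', iff_of_false hba.symm hij⟩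

theorem exists_forall_admissibleFrom_of_encard_le_two (hG : G.IsAcyclic) (hn : IsNeighborEnum G n)
    (hι : 3 ≤ ENat.card ι) (hτ : Function.Injective τ) (hℓ : IsCoherent G n τ ℓ)
    (hx : x ∉ labelled ℓ) (hinfl : {u | Influences G ℓ u x}.encard ≤ 2) :
    ∃ σ, ∀ u, AdmissibleFrom G n τ ℓ u x σ := by
  suffices h : ∃ σ, ∀ u, Influences G ℓ u x → AdmissibleFrom G n τ ℓ u x σ by
    obtain ⟨σ, hσ⟩ := h
    exact ⟨σ, fun u => (em _).elim (hσ u) admissibleFrom_of_not_influences⟩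
  rcases hinfl.eq_or_lt with h | h
  · obtain ⟨u₁, u₂, hne, heq⟩ := encard_eq_two.1 h
    have hu : ∀ u, Influences G ℓ u x ↔ u = u₁ ∨ u = u₂ := Set.ext_iff.1 heq
    obtain ⟨σ, h₁, h₂⟩ := exists_admissibleFrom_and hG hn hι hτ hℓ hx hne
      ((hu u₁).2 (Or.inl rfl)) ((hu u₂).2 (Or.inr rfl))
    refine ⟨σ, fun u hux => ?_⟩
    rcases (hu u).1 hux with rfl | rfl <;> assumption
  · rcases encard_le_one_iff_eq.1 (Order.le_of_lt_add_one (h.trans_eq one_add_one_eq_two.symm))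
      with h | ⟨u, h⟩
    · exact ⟨1, fun u hux => absurd hux (Set.ext_iff.1 h u).1⟩
    · have hu : ∀ v, Influences G ℓ v x ↔ v = u := Set.ext_iff.1 h
      obtain ⟨i, S, hS, hiS⟩ := exists_admissibleFrom (τ := τ) hG hn hx ((hu u).2 rfl)
      obtain ⟨a, ha⟩ : S.Nonempty := by
        rcases hiS with ⟨-, l, -, rfl⟩ | ⟨-, l, rfl⟩
        · exact singleton_nonempty _
        · exact (ENat.exists_ne_ne_of_three_le hι l l).imp fun _ h => h.1
      obtain ⟨σ, hσ, -⟩ := exists_perm_apply_mem (i := i) (j := i) ⟨a, ha, a, ha, by simp⟩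
      exact ⟨σ, fun v hv => (hu v).1 hv ▸ hS σ hσ⟩

open Classical in
/-- The labelling `ℓ`, overwritten by `f` on `T`. -/
noncomputable def extend (ℓ : V → Part (Equiv.Perm ι)) (T : Set V) (f : V → Equiv.Perm ι) :
    V → Part (Equiv.Perm ι) :=
  T.piecewise (fun x => Part.some (f x)) ℓ

theorem mem_extend_of_mem (hx : x ∈ T) : σ ∈ extend ℓ T f x ↔ σ = f x := by
  simp [extend, hx]

theorem mem_extend_of_notMem (hx : x ∉ T) : σ ∈ extend ℓ T f x ↔ σ ∈ ℓ x := by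
  simp [extend, hx]

theorem labelled_extend : labelled (extend ℓ T f) = labelled ℓ ∪ T := by
  ext x
  by_cases hx : x ∈ T <;> simp [labelled, extend, hx]

theorem le_extend (hT : Disjoint (labelled ℓ) T) : ℓ ≤ extend ℓ T f := fun _ σ hσ =>
  (mem_extend_of_notMem (disjoint_left.1 hT (mem_labelled.2 ⟨σ, hσ⟩))).2 hσ

theorem edgeLabel_extend_of_mem (hx : x ∈ T) :
    EdgeLabel G n (extend ℓ T f) x y l ↔ G.Adj x y ∧ ∃ i, n i x = y ∧ f x i = l := by
  simp [EdgeLabel, mem_extend_of_mem hx]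

theorem edgeLabel_extend_of_notMem (hx : x ∉ T) :
    EdgeLabel G n (extend ℓ T f) x y l ↔ EdgeLabel G n ℓ x y l := by
  simp [EdgeLabel, mem_extend_of_notMem hx]

theorem isCoherent_extend (hℓ : IsCoherent G n τ ℓ) (hτ : Function.Involutive τ)
    (hindep : ∀ x ∈ T, ∀ y ∈ T, ¬G.Adj x y)
    (hshare : ∀ x ∈ T, ∀ y ∈ T, ∀ m ∉ labelled ℓ, G.Adj x m → G.Adj y m → x = y)
    (hadm : ∀ x ∈ T, ∀ u, AdmissibleFrom G n τ ℓ u x (f x)) :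
    IsCoherent G n τ (extend ℓ T f) where
  reverse x y l l' hl hl' := by
    by_cases hx : x ∈ T
    · have hy : y ∉ T := fun hy => hindep x hx y hy hl.1
      rw [edgeLabel_extend_of_notMem hy] at hl'
      obtain ⟨hxy, i, rfl, rfl⟩ := (edgeLabel_extend_of_mem hx).1 hl
      rw [(hadm x hx _ i l' hxy).1 rfl hl', hτ]
    · rw [edgeLabel_extend_of_notMem hx] at hl
      by_cases hy : y ∈ T
      · obtain ⟨hyx, i, rfl, rfl⟩ := (edgeLabel_extend_of_mem hy).1 hl'
        exact (hadm y hy _ i l hyx).1 rfl hl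
      · rw [edgeLabel_extend_of_notMem hy] at hl'
        exact hℓ.reverse x y l l' hl hl'
  target x x' y l hy hl hl' := by
    rw [labelled_extend, mem_union, not_or] at hy
    have conflict : ∀ x ∈ T, ∀ x' ∉ T, EdgeLabel G n (extend ℓ T f) x y l →
        ¬EdgeLabel G n (extend ℓ T f) x' y l := by
      intro x hx x' hx' hl hl'
      rw [edgeLabel_extend_of_notMem hx'] at hl'
      obtain ⟨hxy, i, rfl, rfl⟩ := (edgeLabel_extend_of_mem hx).1 hl
      exact (hadm x hx x' i _ hxy).2 hy.1 hl' rfl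
    by_cases hx : x ∈ T <;> by_cases hx' : x' ∈ T
    · exact hshare x hx x' hx' y hy.1 hl.1 hl'.1
    · exact absurd hl' (conflict x hx x' hx' hl)
    · exact absurd hl (conflict x' hx' x hx hl')
    · rw [edgeLabel_extend_of_notMem hx] at hl
      rw [edgeLabel_extend_of_notMem hx'] at hl'
      exact hℓ.target x x' y l hy.1 hl hl'

end Labelling

section Layers

variable {V ι : Type*} {G : SimpleGraph V} {D A : Set V} {r t : ℕ} {u x x' y m : V}
  {ℓ : V → Part (Equiv.Perm ι)}

/-- The points at distance less than `t` from `y` in the hull of some `y ∈ A`. -/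
def hullBall (G : SimpleGraph V) (r : ℕ) (D A : Set V) (t : ℕ) : Set V :=
  {x | ∃ y ∈ A, x ∈ hull G r D y ∧ G.dist y x < t}

/-- The points at distance `t` from `y` in the hull of some `y ∈ A`. -/
def hullSphere (G : SimpleGraph V) (r : ℕ) (D A : Set V) (t : ℕ) : Set V :=
  {x | ∃ y ∈ A, x ∈ hull G r D y ∧ G.dist y x = t}

theorem hullBall_zero : hullBall G r D A 0 = ∅ := by
  simp [hullBall]

theorem hullBall_add_one :
    hullBall G r D A (t + 1) = hullBall G r D A t ∪ hullSphere G r D A t := by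
  ext x
  simp only [hullBall, hullSphere, Order.lt_add_one_iff, le_iff_lt_or_eq, mem_ofPred_eq, mem_union,
    and_or_left, exists_or]

theorem reachable_of_mem_hull (hx : x ∈ hull G r D y) : G.Reachable y x :=
  hx.mono restrict_le

theorem exists_hullBall_eq (hD : IsScattered G r D) (A : Set V) :
    ∃ t, hullBall G r D A t = ⋃ y ∈ A, hull G r D y := by
  obtain ⟨b, hb⟩ := hD.bounded
  refine ⟨b + 1, ext fun x => ?_⟩
  simp only [hullBall, mem_ofPred_eq, mem_iUnion₂, exists_prop]
  refine exists_congr fun y => and_congr_right fun _ => and_iff_left_of_imp fun hx => ?_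
  have hyx := hb y x hx
  rw [← (reachable_of_mem_hull hx).coe_dist_eq_edist] at hyx
  exact Order.lt_add_one_iff.2 (mod_cast hyx)

theorem dist_eq_add_one_of_notMem_hullBall (hG : G.IsAcyclic) (hy : y ∈ A)
    (hx : x ∈ hull G r D y) (hxm : G.Adj x m) (hm : m ∉ hullBall G r D A (G.dist y x)) :
    G.dist y m = G.dist y x + 1 := by
  rcases hG.dist_eq_dist_add_one_of_adj_of_reachable y hxm (reachable_of_mem_hull hx) with h | h
  · have hlt : G.dist y m < G.dist y x := by omega
    have hmhull : m ∈ hull G r D y :=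
      mem_of_reachable_restrict_of_dist_lt hG (reachable_restrict_hull hx) hxm.symm hlt
    exact absurd ⟨y, hy, hmhull, hlt⟩ hm
  · exact h

theorem edist_le_two_of_adj_of_adj (hum : G.Adj u m) (hmx : G.Adj m x) : G.edist u x ≤ (2 : ℕ) :=
  edist_le_of_le_of_le (edist_eq_one_iff_adj.2 hum).le (edist_eq_one_iff_adj.2 hmx).le

variable (hG : G.IsAcyclic)
  (hsep : ∀ y ∈ A, ∀ z ∈ A, ∀ u ∈ hull G r D y, ∀ v ∈ hull G r D z, G.edist u v ≤ (2 : ℕ) → y = z)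
include hG hsep

theorem not_adj_of_mem_hullSphere (hx : x ∈ hullSphere G r D A t)
    (hx' : x' ∈ hullSphere G r D A t) : ¬G.Adj x x' := by
  obtain ⟨y, hy, hxy, rfl⟩ := hx
  obtain ⟨y', hy', hxy', hdist⟩ := hx'
  intro hadj
  obtain rfl := hsep y hy y' hy' x hxy x' hxy'
    ((edist_eq_one_iff_adj.2 hadj).trans_le (by norm_num))
  have := hG.dist_eq_dist_add_one_of_adj_of_reachable y hadj (reachable_of_mem_hull hxy)
  omega

theorem eq_of_mem_hullSphere_of_common_adj (hx : x ∈ hullSphere G r D A t)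
    (hx' : x' ∈ hullSphere G r D A t) (hm : m ∉ hullBall G r D A t) (hxm : G.Adj x m)
    (hxm' : G.Adj x' m) : x = x' := by
  obtain ⟨y, hy, hxy, rfl⟩ := hx
  obtain ⟨y', hy', hxy', hdist⟩ := hx'
  obtain rfl := hsep y hy y' hy' x hxy x' hxy' (edist_le_two_of_adj_of_adj hxm hxm'.symm)
  have hym : G.dist y m = G.dist y x + 1 := dist_eq_add_one_of_notMem_hullBall hG hy hxy hxm hm
  exact eq_of_adj_of_dist_lt hG ((reachable_of_mem_hull hxy).trans hxm.reachable) hxm hxm'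
    (by omega) (by omega)

theorem adj_and_dist_lt_of_influences (hdom : labelled ℓ = D ∪ hullBall G r D A t) (hy : y ∈ A)
    (hx : x ∈ hull G r D y) (ht : G.dist y x = t) (hu : Influences G ℓ u x) (huD : u ∉ D) :
    G.Adj u x ∧ G.dist y u < G.dist y x := by
  obtain ⟨hudom, hux⟩ := hu
  rw [hdom] at hudom hux
  obtain ⟨y', hy', huy, hut⟩ := hudom.resolve_left huD
  have hclose : G.edist u x ≤ (2 : ℕ) := by
    rcases hux with hux | ⟨m, -, hum, hmx⟩
    · exact (edist_eq_one_iff_adj.2 hux).trans_le (by norm_num)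
    · exact edist_le_two_of_adj_of_adj hum hmx
  obtain rfl := hsep y' hy' y hy u huy x hx hclose
  refine ⟨hux.resolve_right ?_, ht ▸ hut⟩
  rintro ⟨m, hm, hum, hmx⟩
  rw [mem_union, not_or, ← ht] at hm
  have hym := dist_eq_add_one_of_notMem_hullBall hG hy hx hmx.symm hm.2
  have := hG.dist_eq_dist_add_one_of_adj_of_reachable y' hum (reachable_of_mem_hull huy)
  omega

theorem encard_influences_le_two
    (hD : ∀ u ∈ D, ∀ v ∈ D, G.edist u v ≤ (4 : ℕ) → (G ↾ D).Reachable u v)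
    (hdom : labelled ℓ = D ∪ hullBall G r D A t) (hx : x ∈ hullSphere G r D A t) (hxD : x ∉ D) :
    {u | Influences G ℓ u x}.encard ≤ 2 := by
  obtain ⟨y, hy, hxy, ht⟩ := hx
  -- From `u ∈ D` a path leaves `D` at once and arrives at `x`.
  have exit_of_mem : ∀ u ∈ D, Influences G ℓ u x → G.edist u x ≤ (2 : ℕ) ∧
      ∃ u' ∉ D, G.Adj u u' ∧ (G ↾ Dᶜ).Reachable u' x := by
    rintro u - ⟨-, hux | ⟨m, hm, hum, hmx⟩⟩
    · exact ⟨(edist_eq_one_iff_adj.2 hux).trans_le (by norm_num), x, hxD, hux, .rfl⟩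
    · have hmD : m ∉ D := fun h => hm (hdom ▸ Or.inl h)
      exact ⟨edist_le_two_of_adj_of_adj hum hmx, m, hmD, hum,
        (restrict_adj.2 ⟨hmx, hmD, hxD⟩).reachable⟩
  have hold : {u ∈ D | Influences G ℓ u x}.Subsingleton := by
    rintro u ⟨hu, hux⟩ v ⟨hv, hvx⟩
    obtain ⟨hux, u', hu', huu', hreach⟩ := exit_of_mem u hu hux
    obtain ⟨hvx, v', hv', hvv', hreach'⟩ := exit_of_mem v hv hvx
    exact eq_of_boundary_reachable hG hu hu' hv' huu' hvv'
      (hD u hu v hv (edist_le_of_le_of_le hux (edist_comm.trans_le hvx)))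
      (hreach.trans hreach'.symm)
  have hparent : {u | G.Adj u x ∧ G.dist y u < G.dist y x}.Subsingleton :=
    fun u hu v hv =>
      eq_of_adj_of_dist_lt hG (reachable_of_mem_hull hxy) hu.1 hv.1 hu.2 hv.2
  calc {u | Influences G ℓ u x}.encard
      ≤ ({u ∈ D | Influences G ℓ u x} ∪ {u | G.Adj u x ∧ G.dist y u < G.dist y x}).encard :=
        encard_le_encard fun u hu => or_iff_not_imp_left.2 fun h =>
          adj_and_dist_lt_of_influences hG hsep hdom hy hxy ht hu fun huD => h ⟨huD, hu⟩
    _ ≤ 1 + 1 := (encard_union_le _ _).trans (add_le_add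
        (encard_le_one_iff_subsingleton.2 hold) (encard_le_one_iff_subsingleton.2 hparent))
    _ = 2 := one_add_one_eq_two

end Layers

section Follow

variable {V ι : Type*} {G : SimpleGraph V} {n : ι → V → V} {k : ℕ} {x y : V}

/-- The endpoint of the walk that starts at `x` and follows the indices in `w`. -/
def follow (n : ι → V → V) (w : List ι) (x : V) : V :=
  w.foldl (fun z i => n i z) x

theorem IsNeighborEnum.exists_walk_follow (hn : IsNeighborEnum G n) (w : List ι) (x : V) :
    ∃ p : G.Walk x (follow n w x), p.length ≤ w.length := by
  induction w generalizing x with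
  | nil => exact ⟨.nil, le_rfl⟩
  | cons i w ih =>
    obtain ⟨p, hp⟩ := ih (n i x)
    rcases hn.adj_or_eq x i with h | h
    · exact ⟨.cons h p, Nat.succ_le_succ hp⟩
    · exact ⟨p.copy h rfl, (p.length_copy h rfl).trans_le (hp.trans (Nat.le_succ _))⟩

theorem IsNeighborEnum.exists_follow_eq (hn : IsNeighborEnum G n) (p : G.Walk x y) :
    ∃ w : List ι, w.length = p.length ∧ follow n w x = y := by
  induction p with
  | nil => exact ⟨[], rfl, rfl⟩
  | cons h p ih =>
    obtain ⟨i, rfl, -⟩ := hn.existsUnique _ _ h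
    obtain ⟨w, hw, rfl⟩ := ih
    exact ⟨i :: w, congrArg (· + 1) hw, rfl⟩

theorem IsNeighborEnum.reachable_follow (hn : IsNeighborEnum G n) (w : List ι) (x : V) :
    G.Reachable x (follow n w x) :=
  (hn.exists_walk_follow w x).choose.reachable

theorem IsNeighborEnum.exists_follow_eq_iff_reachable (hn : IsNeighborEnum G n) :
    (∃ w, follow n w x = y) ↔ G.Reachable x y :=
  ⟨fun ⟨w, hw⟩ => hw ▸ hn.reachable_follow w x,
    fun ⟨p⟩ => (hn.exists_follow_eq p).imp fun _ => And.right⟩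

theorem IsNeighborEnum.exists_follow_eq_iff_edist_le (hn : IsNeighborEnum G n) :
    (∃ w : List ι, w.length ≤ k ∧ follow n w x = y) ↔ G.edist x y ≤ k := by
  constructor
  · rintro ⟨w, hw, rfl⟩
    obtain ⟨p, hp⟩ := hn.exists_walk_follow w x
    exact (edist_le p).trans (mod_cast hp.trans hw)
  · intro h
    obtain ⟨p, hp⟩ := exists_walk_of_edist_ne_top (ne_top_of_le_ne_top (ENat.natCast_ne_top k) h)
    obtain ⟨w, hw, hwy⟩ := hn.exists_follow_eq p
    exact ⟨w, by exact_mod_cast hw ▸ hp.trans_le h, hwy⟩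

theorem IsNeighborEnum.adj_iff (hn : IsNeighborEnum G n) : G.Adj x y ↔ x ≠ y ∧ ∃ i, n i x = y := by
  refine ⟨fun h => ⟨h.ne, (hn.existsUnique x y h).exists⟩, ?_⟩
  rintro ⟨hne, i, rfl⟩
  exact (hn.adj_or_eq x i).resolve_right hne.symm

open Classical in
theorem IsNeighborEnum.restrict (hn : IsNeighborEnum G n) (N : Set V) :
    IsNeighborEnum (G ↾ N) fun i x => if x ∈ N ∧ n i x ∈ N then n i x else x where
  adj_or_eq x i := by
    by_cases h : x ∈ N ∧ n i x ∈ N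
    · simp only [h, and_self, if_true, restrict_adj, and_true]
      exact hn.adj_or_eq x i
    · simp only [h, if_false, or_true]
  existsUnique x y hxy := by
    obtain ⟨hadj, hx, hy⟩ := restrict_adj.1 hxy
    obtain ⟨i, rfl, huniq⟩ := hn.existsUnique x y hadj
    refine ⟨i, if_pos ⟨hx, hy⟩, fun j hj => huniq j ?_⟩
    beta_reduce at hj
    by_cases h : x ∈ N ∧ n j x ∈ N
    · rwa [if_pos h] at hj
    · rw [if_neg h] at hj
      exact absurd hj hadj.ne

end Follow

section Measurability

variable {X Y ι : Type*} [MeasurableSpace X] [MeasurableSpace Y] {G : SimpleGraph X}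
  {n : ι → X → X} {D A N T : Set X} {r k t : ℕ} {f g : Y → X} {ℓ : X → Part (Equiv.Perm ι)}
  {τ : ι → ι} {σ : Equiv.Perm ι}

theorem measurable_follow (hmeas : ∀ i, Measurable (n i)) (w : List ι) :
    Measurable (follow n w) := by
  induction w with
  | nil => exact measurable_id
  | cons i w ih => exact ih.comp (hmeas i)

theorem measurableSet_exists_of_reachable [Countable ι] (hn : IsNeighborEnum G n)
    {R : X → X → Prop} (hR : ∀ x y, R x y → G.Reachable y x)
    (hRmeas : ∀ w : List ι, Measurable fun x => R (follow n w x) x) :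
    MeasurableSet {x | ∃ y, R y x} := by
  have heq : {x | ∃ y, R y x} = {x | ∃ w : List ι, R (follow n w x) x} := by
    ext x
    constructor
    · rintro ⟨y, hy⟩
      obtain ⟨w, rfl⟩ := hn.exists_follow_eq_iff_reachable.2 (hR y x hy)
      exact ⟨w, hy⟩
    · exact fun ⟨w, hw⟩ => ⟨_, hw⟩
  rw [heq]
  exact measurableSet_setOfPred.2 (.exists hRmeas)

section Countable

variable [MeasurableEq X] [Countable ι] (hn : IsNeighborEnum G n) (hmeas : ∀ i, Measurable (n i))
include hn hmeas

theorem measurable_adj (hf : Measurable f) (hg : Measurable g) :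
    Measurable fun z => G.Adj (f z) (g z) := by
  simp only [hn.adj_iff]
  exact (hf.eq hg).not.and (.exists fun i => ((hmeas i).comp hf).eq hg)

theorem measurable_edist_le (hf : Measurable f) (hg : Measurable g) :
    Measurable fun z => G.edist (f z) (g z) ≤ k := by
  simp only [← hn.exists_follow_eq_iff_edist_le]
  exact .exists fun w => measurable_const.and (((measurable_follow hmeas w).comp hf).eq hg)

theorem measurable_reachable_restrict (hN : MeasurableSet N) (hf : Measurable f)
    (hg : Measurable g) : Measurable fun z => (G ↾ N).Reachable (f z) (g z) := by
  classical
  have hmeasN (i : ι) : Measurable fun x => if x ∈ N ∧ n i x ∈ N then n i x else x :=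
    (hmeas i).ite (hN.inter (hmeas i hN)) measurable_id
  simp only [← (hn.restrict N).exists_follow_eq_iff_reachable]
  exact .exists fun w => ((measurable_follow hmeasN w).comp hf).eq hg

theorem measurableSet_thickening (hD : MeasurableSet D) : MeasurableSet (thickening G r D) := by
  refine measurableSet_exists_of_reachable hn (R := fun d u => d ∈ D ∧ G.edist u d ≤ r)
    (fun d u h => reachable_of_edist_ne_top (ne_top_of_le_ne_top (ENat.natCast_ne_top r) h.2))
    fun w => ?_
  have hw := measurable_follow hmeas w
  exact (hw hD).mem.and (measurable_edist_le hn hmeas measurable_id hw)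

theorem measurableSet_hullBall (hD : MeasurableSet D) (hA : MeasurableSet A) :
    MeasurableSet (hullBall G r D A t) := by
  cases t with
  | zero => exact hullBall_zero ▸ .empty
  | succ t =>
    have hdist : ∀ y x, x ∈ hull G r D y → (G.dist y x < t + 1 ↔ G.edist y x ≤ t) := by
      intro y x hx
      rw [← (reachable_of_mem_hull hx).coe_dist_eq_edist, Nat.cast_le, Order.lt_add_one_iff]
    have hmeas_ball (w : List ι) : Measurable fun x =>
        follow n w x ∈ A ∧ x ∈ hull G r D (follow n w x) ∧ G.edist (follow n w x) x ≤ t := by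
      have hw := measurable_follow hmeas w
      exact (hw hA).mem.and
        ((measurable_reachable_restrict hn hmeas (measurableSet_thickening hn hmeas hD) hw
          measurable_id).and (measurable_edist_le hn hmeas hw measurable_id))
    exact measurableSet_exists_of_reachable hn
      (fun y x h => (reachable_of_mem_hull h.2.1).symm)
      fun w => by simpa only [and_congr_right (hdist _ _)] using hmeas_ball w

end Countable

/-- A partial labelling is measurable if every permutation labels a measurable set of points. -/
def IsMeasurableLabelling (ℓ : X → Part (Equiv.Perm ι)) : Prop :=
  ∀ σ, MeasurableSet {x | σ ∈ ℓ x}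

theorem IsMeasurableLabelling.extend {f : X → Equiv.Perm ι} (hℓ : IsMeasurableLabelling ℓ)
    (hT : MeasurableSet T) (hf : ∀ σ, MeasurableSet (f ⁻¹' {σ})) :
    IsMeasurableLabelling (extend ℓ T f) := by
  intro σ
  convert hT.ite (hf σ) (hℓ σ) using 1
  ext x
  by_cases hx : x ∈ T
  · simp [mem_extend_of_mem, Set.ite, hx, eq_comm]
  · simp [mem_extend_of_notMem, Set.ite, hx]

variable [Finite ι]

theorem IsMeasurableLabelling.measurableSet_labelled (hℓ : IsMeasurableLabelling ℓ) :
    MeasurableSet (labelled ℓ) := by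
  have hdom : labelled ℓ = ⋃ σ, {x | σ ∈ ℓ x} := by
    ext x
    simpa only [mem_iUnion, mem_ofPred_eq] using mem_labelled (ℓ := ℓ)
  exact hdom ▸ .iUnion hℓ

variable [MeasurableEq X] (hn : IsNeighborEnum G n) (hmeas : ∀ i, Measurable (n i))
  (hℓ : IsMeasurableLabelling ℓ)
include hn hmeas hℓ

theorem measurable_edgeLabel (hf : Measurable f) (hg : Measurable g) (l : ι) :
    Measurable fun z => EdgeLabel G n ℓ (f z) (g z) l :=
  (measurable_adj hn hmeas hf hg).and <| .exists fun σ => (hf (hℓ σ)).mem.and <|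
    .exists fun i => (((hmeas i).comp hf).eq hg).and measurable_const

theorem measurable_admissibleFrom (hf : Measurable f) (hg : Measurable g) :
    Measurable fun z => AdmissibleFrom G n τ ℓ (f z) (g z) σ := by
  refine .forall fun i => .forall fun l => ?_
  have hi := (hmeas i).comp hg
  refine (measurable_adj hn hmeas hg hi).imp (.and ?_ ?_)
  · exact (hi.eq hf).imp ((measurable_edgeLabel hn hmeas hℓ hf hg l).imp measurable_const)
  · exact (hi hℓ.measurableSet_labelled).mem.not.imp
      ((measurable_edgeLabel hn hmeas hℓ hf hi l).imp measurable_const)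

theorem measurableSet_forall_admissibleFrom (σ : Equiv.Perm ι) :
    MeasurableSet {x | ∀ u, AdmissibleFrom G n τ ℓ u x σ} := by
  have hreach (u x : X) (h : ¬AdmissibleFrom G n τ ℓ u x σ) : G.Reachable x u := by
    obtain ⟨-, hux | ⟨m, -, hum, hmx⟩⟩ := not_imp_comm.1 admissibleFrom_of_not_influences h
    · exact hux.symm.reachable
    · exact hmx.symm.reachable.trans hum.symm.reachable
  have hex : MeasurableSet {x | ∃ u, ¬AdmissibleFrom G n τ ℓ u x σ} :=
    measurableSet_exists_of_reachable hn hreach fun w =>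
      (measurable_admissibleFrom hn hmeas hℓ (measurable_follow hmeas w) measurable_id).not
  simpa only [← not_forall, compl_ofPred, not_not] using hex.compl

end Measurability

section Stage

theorem exists_measurable_choice {X β : Type*} [MeasurableSpace X] [Countable β] [Nonempty β]
    {p : X → β → Prop} (hp : ∀ b, MeasurableSet {x | p x b}) :
    ∃ f : X → β, (∀ b, MeasurableSet (f ⁻¹' {b})) ∧ ∀ x, (∃ b, p x b) → p x (f x) := by
  classical
  obtain ⟨e, he⟩ := exists_surjective_nat β
  have hex (x : X) : ∃ k, p x (e k) ∨ ¬∃ b, p x b := by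
    by_cases h : ∃ b, p x b
    · obtain ⟨b, hb⟩ := h
      obtain ⟨k, rfl⟩ := he b
      exact ⟨k, Or.inl hb⟩
    · exact ⟨0, Or.inr h⟩
  have hnone : MeasurableSet {x | ¬∃ b, p x b} :=
    measurableSet_setOfPred.2 (Measurable.exists fun b => (hp b).mem).not
  have hfind : Measurable fun x => Nat.find (hex x) :=
    measurable_find hex fun k => (hp (e k)).union hnone
  exact ⟨fun x => e (Nat.find (hex x)), fun b => hfind (.of_discrete (s := e ⁻¹' {b})),
    fun x hx => (Nat.find_spec (hex x)).resolve_right (not_not_intro hx)⟩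

theorem exists_countable_sparse_cover {X ι : Type*} [TopologicalSpace X] [T2Space X]
    [SecondCountableTopology X] [MeasurableSpace X] [BorelSpace X] [Finite ι] {G : SimpleGraph X}
    {n : ι → X → X} (hn : IsNeighborEnum G n) (hmeas : ∀ i, Measurable (n i)) (s : ℕ) :
    ∃ 𝒜 : Set (Set X), 𝒜.Countable ∧ (∀ A ∈ 𝒜, MeasurableSet A ∧ IsSparse G s A) ∧
      ⋃₀ 𝒜 = univ := by
  let A (U : Set X) : Set X :=
    U ∩ {x | ∀ w : List ι, w.length ≤ s → follow n w x ∈ U → follow n w x = x}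
  refine ⟨A '' countableBasis X, (countable_countableBasis X).image A, ?_, ?_⟩
  · rintro _ ⟨U, hU, rfl⟩
    have hUmeas : MeasurableSet U := (isOpen_of_mem_countableBasis hU).measurableSet
    refine ⟨hUmeas.inter (measurableSet_setOfPred.2 ?_), fun u hu v hv huv => ?_⟩
    · refine .forall fun w => measurable_const.imp ?_
      have hw := measurable_follow hmeas w
      exact (hw hUmeas).mem.imp (hw.eq measurable_id)
    · obtain ⟨w, hws, rfl⟩ := hn.exists_follow_eq_iff_edist_le.2 huv
      exact (hu.2 w hws hv.1).symm
  · refine eq_univ_of_forall fun x => ?_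
    have hfinite : ({y | ∃ w : List ι, w.length ≤ s ∧ follow n w x = y} \ {x}).Finite :=
      ((List.finite_length_le ι s).image fun w => follow n w x).sdiff
    obtain ⟨U, hU, hxU, hUsub⟩ := (isBasis_countableBasis X).exists_subset_of_mem_open
      (fun hx => hx.2 rfl) hfinite.isClosed.isOpen_compl
    refine ⟨A U, mem_image_of_mem A hU, hxU, fun w hws hwU => ?_⟩
    by_contra hne
    exact hUsub hwU ⟨⟨w, hws, rfl⟩, hne⟩

variable {X ι : Type*} [MeasurableSpace X] {G : SimpleGraph X} {n : ι → X → X} {τ : ι → ι}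
  {ℓ : X → Part (Equiv.Perm ι)} {D A : Set X} {r t : ℕ}

/-- The labellings which the construction extends step by step. The separation `4` ensures that the
edges leaving the labelled set can be treated independently. -/
structure IsStage (G : SimpleGraph X) (n : ι → X → X) (τ : ι → ι)
    (ℓ : X → Part (Equiv.Perm ι)) : Prop where
  coherent : IsCoherent G n τ ℓ
  measurable : IsMeasurableLabelling ℓ
  scattered : IsScattered G 4 (labelled ℓ)

theorem isStage_none (G : SimpleGraph X) (n : ι → X → X) (τ : ι → ι) :
    IsStage G n τ fun _ => Part.none := by
  have hdom : labelled (fun _ : X => (Part.none : Part (Equiv.Perm ι))) = ∅ := by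
    ext x
    exact iff_of_false not_false not_false
  have hlabel (x y : X) (l : ι) : ¬EdgeLabel G n (fun _ => Part.none) x y l :=
    fun h => Part.notMem_none _ h.2.choose_spec.1
  exact ⟨⟨fun x y l _ h => absurd h (hlabel x y l), fun x _ y l _ h => absurd h (hlabel x y l)⟩,
    fun σ => by simp, hdom ▸ isScattered_empty G 4⟩

variable [MeasurableEq X] [Finite ι] (hG : G.IsAcyclic) (hn : IsNeighborEnum G n)
  (hmeas : ∀ i, Measurable (n i)) (hι : 3 ≤ ENat.card ι) (hτ : Function.Involutive τ)
include hG hn hmeas hι hτ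

theorem exists_extension_hullBall_add_one (hDmeas : MeasurableSet D) (hA : MeasurableSet A)
    (hD : ∀ u ∈ D, ∀ v ∈ D, G.edist u v ≤ (4 : ℕ) → (G ↾ D).Reachable u v)
    (hsep : ∀ y ∈ A, ∀ z ∈ A, ∀ u ∈ hull G r D y, ∀ v ∈ hull G r D z,
      G.edist u v ≤ (2 : ℕ) → y = z)
    (hℓ : IsCoherent G n τ ℓ) (hℓmeas : IsMeasurableLabelling ℓ)
    (hdom : labelled ℓ = D ∪ hullBall G r D A t) :
    ∃ ℓ' ≥ ℓ, IsCoherent G n τ ℓ' ∧ IsMeasurableLabelling ℓ' ∧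
      labelled ℓ' = D ∪ hullBall G r D A (t + 1) := by
  obtain ⟨f, hfmeas, hf⟩ := exists_measurable_choice
    (measurableSet_forall_admissibleFrom (τ := τ) hn hmeas hℓmeas)
  let T : Set X := hullBall G r D A (t + 1) \ labelled ℓ
  have hT : T ⊆ hullSphere G r D A t := by
    rintro x ⟨hx, hxℓ⟩
    exact (hullBall_add_one ▸ hx).resolve_left fun h => hxℓ (hdom ▸ Or.inr h)
  have hnotball : ∀ m ∉ labelled ℓ, m ∉ hullBall G r D A t :=
    fun m hm h => hm (hdom ▸ Or.inr h)
  have hadm : ∀ x ∈ T, ∀ u, AdmissibleFrom G n τ ℓ u x (f x) := fun x hx =>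
    hf x <| exists_forall_admissibleFrom_of_encard_le_two hG hn hι hτ.injective hℓ hx.2 <|
      encard_influences_le_two hG hsep hD hdom (hT hx) fun h => hx.2 (hdom ▸ Or.inl h)
  refine ⟨extend ℓ T f, le_extend disjoint_sdiff_right, ?_, ?_, ?_⟩
  · exact isCoherent_extend hℓ hτ
      (fun x hx y hy => not_adj_of_mem_hullSphere hG hsep (hT hx) (hT hy))
      (fun x hx y hy m hm => eq_of_mem_hullSphere_of_common_adj hG hsep (hT hx) (hT hy)
        (hnotball m hm))
      hadm
  · have hTmeas : MeasurableSet T :=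
      (measurableSet_hullBall hn hmeas hDmeas hA).diff hℓmeas.measurableSet_labelled
    exact hℓmeas.extend hTmeas hfmeas
  · rw [labelled_extend, union_sdiff_self, hdom, hullBall_add_one]
    grind

theorem exists_extension_hullBall (hA : MeasurableSet A) (hℓ : IsStage G n τ ℓ)
    (hsep : ∀ y ∈ A, ∀ z ∈ A, ∀ u ∈ hull G r (labelled ℓ) y, ∀ v ∈ hull G r (labelled ℓ) z,
      G.edist u v ≤ (2 : ℕ) → y = z) (t : ℕ) :
    ∃ ℓ' ≥ ℓ, IsCoherent G n τ ℓ' ∧ IsMeasurableLabelling ℓ' ∧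
      labelled ℓ' = labelled ℓ ∪ hullBall G r (labelled ℓ) A t := by
  induction t with
  | zero => exact ⟨ℓ, le_rfl, hℓ.coherent, hℓ.measurable, by rw [hullBall_zero, union_empty]⟩
  | succ t ih =>
    obtain ⟨ℓ₁, hle, hcoh, hℓ₁, hdom⟩ := ih
    obtain ⟨ℓ₂, hle', h⟩ := exists_extension_hullBall_add_one hG hn hmeas hι hτ
      hℓ.measurable.measurableSet_labelled hA hℓ.scattered.reachable hsep hcoh hℓ₁ hdom
    exact ⟨ℓ₂, hle.trans hle', h⟩

theorem IsStage.exists_extension (hℓ : IsStage G n τ ℓ) :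
    ∃ s, ∀ A, MeasurableSet A → IsSparse G s A →
      ∃ ℓ' ≥ ℓ, IsStage G n τ ℓ' ∧ A ⊆ labelled ℓ' := by
  obtain ⟨s, hs⟩ := hℓ.scattered.exists_union_hulls
  refine ⟨s, fun A hA hsparse => ?_⟩
  obtain ⟨hscattered, hsep⟩ := hs A hsparse
  obtain ⟨t, ht⟩ := exists_hullBall_eq hℓ.scattered A
  obtain ⟨ℓ', hle, hcoh, hℓ', hdom⟩ := exists_extension_hullBall hG hn hmeas hι hτ hA hℓ
    (fun y hy z hz u hu v hv huv =>
      hsep y hy z hz u hu v hv (huv.trans (by norm_num))) t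
  rw [ht] at hdom
  refine ⟨ℓ', hle, ⟨hcoh, hℓ', hdom ▸ hscattered⟩, fun y hy => ?_⟩
  exact hdom ▸ Or.inr (mem_biUnion hy mem_hull_self)

end Stage

section Baire

theorem mem_residual_of_forall_not_isMeagre_inter {X : Type*} [TopologicalSpace X]
    [SecondCountableTopology X] [MeasurableSpace X] [BorelSpace X] {B : Set X}
    (hB : MeasurableSet B) (h : ∀ U ∈ countableBasis X, ¬IsMeagre (U ∩ B)) : B ∈ residual X := by
  obtain ⟨V, hV, hBV⟩ := hB.residualEq_isOpen
  have hdense : Dense V := by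
    rw [dense_iff_inter_open]
    rintro W hW ⟨x, hx⟩
    obtain ⟨U, hU, -, hUW⟩ := (isBasis_countableBasis X).exists_subset_of_mem_open hx hW
    by_contra hempty
    refine h U hU ?_
    filter_upwards [hBV] with y hy hyUB
    exact hempty ⟨y, hUW hyUB.1, hy.mp hyUB.2⟩
  filter_upwards [hBV, residual_of_dense_open hV hdense] with y hy hyV
  exact hy.mpr hyV

variable {X ι : Type*} {G : SimpleGraph X} {n : ι → X → X} {τ : ι → ι}

section Limit

open OmegaCompletePartialOrder

variable {ℓ : X → Part (Equiv.Perm ι)} {c : Chain (X → Part (Equiv.Perm ι))} {x y : X} {l : ι}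

theorem mem_ωSup_apply {σ : Equiv.Perm ι} : σ ∈ ωSup c x ↔ ∃ k, σ ∈ c k x :=
  (Part.mem_ωSup _ _).trans (exists_congr fun _ => Part.eq_some_iff.symm.trans eq_comm).symm

theorem mem_labelled_ωSup : x ∈ labelled (ωSup c) ↔ ∃ k, x ∈ labelled (c k) := by
  simp only [mem_labelled, mem_ωSup_apply]
  exact exists_comm

theorem edgeLabel_ωSup : EdgeLabel G n (ωSup c) x y l ↔ ∃ k, EdgeLabel G n (c k) x y l := by
  simp only [EdgeLabel, mem_ωSup_apply]
  grind

theorem EdgeLabel.mono {ℓ' : X → Part (Equiv.Perm ι)} (hle : ℓ ≤ ℓ') (h : EdgeLabel G n ℓ x y l) :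
    EdgeLabel G n ℓ' x y l :=
  ⟨h.1, h.2.imp fun σ hσ => ⟨hle x σ hσ.1, hσ.2⟩⟩

theorem isCoherent_ωSup (hc : ∀ k, IsCoherent G n τ (c k)) : IsCoherent G n τ (ωSup c) where
  reverse x y l l' h h' := by
    obtain ⟨k, hk⟩ := edgeLabel_ωSup.1 h
    obtain ⟨m, hm⟩ := edgeLabel_ωSup.1 h'
    exact (hc (k ⊔ m)).reverse x y l l' (hk.mono (c.monotone le_sup_left))
      (hm.mono (c.monotone le_sup_right))
  target x x' y l hy h h' := by
    obtain ⟨k, hk⟩ := edgeLabel_ωSup.1 h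
    obtain ⟨m, hm⟩ := edgeLabel_ωSup.1 h'
    exact (hc (k ⊔ m)).target x x' y l (fun hy' => hy (mem_labelled_ωSup.2 ⟨_, hy'⟩))
      (hk.mono (c.monotone le_sup_left)) (hm.mono (c.monotone le_sup_right))

theorem isMeasurableLabelling_ωSup [MeasurableSpace X] (hc : ∀ k, IsMeasurableLabelling (c k)) :
    IsMeasurableLabelling (ωSup c) := fun σ => by
  simp only [mem_ωSup_apply, ofPred_exists]
  exact .iUnion fun k => hc k σ

end Limit

variable [TopologicalSpace X] [T2Space X] [SecondCountableTopology X] [BaireSpace X]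
  [MeasurableSpace X] [BorelSpace X] [Finite ι] (hG : G.IsAcyclic) (hn : IsNeighborEnum G n)
  (hmeas : ∀ i, Measurable (n i)) (hι : 3 ≤ ENat.card ι) (hτ : Function.Involutive τ)
include hG hn hmeas hι hτ

theorem IsStage.exists_extension_not_isMeagre {ℓ : X → Part (Equiv.Perm ι)}
    (hℓ : IsStage G n τ ℓ) {U : Set X} (hU : IsOpen U) (hne : U.Nonempty) (w : List ι) :
    ∃ ℓ' ≥ ℓ, IsStage G n τ ℓ' ∧ ¬IsMeagre (U ∩ follow n w ⁻¹' labelled ℓ') := by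
  obtain ⟨s, hs⟩ := hℓ.exists_extension hG hn hmeas hι hτ
  obtain ⟨𝒜, hcount, h𝒜, hcover⟩ := exists_countable_sparse_cover hn hmeas s
  obtain ⟨A, hA, hmeagre⟩ : ∃ A ∈ 𝒜, ¬IsMeagre (U ∩ follow n w ⁻¹' A) := by
    apply exists_of_not_isMeagre_biUnion hcount
    rw [← inter_iUnion₂, ← preimage_iUnion₂, ← sUnion_eq_biUnion, hcover, preimage_univ, inter_univ]
    exact not_isMeagre_of_isOpen hU hne
  obtain ⟨ℓ', hle, hℓ', hAℓ'⟩ := hs A (h𝒜 A hA).1 (h𝒜 A hA).2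
  exact ⟨ℓ', hle, hℓ', fun h => hmeagre (h.mono (inter_subset_inter_right U (preimage_mono hAℓ')))⟩

theorem exists_chain_isStage :
    ∃ c : OmegaCompletePartialOrder.Chain (X → Part (Equiv.Perm ι)), (∀ k, IsStage G n τ (c k)) ∧
      ∀ U ∈ countableBasis X, ∀ w : List ι, ∃ k, ¬IsMeagre (U ∩ follow n w ⁻¹' labelled (c k)) := by
  have := (countable_countableBasis X).toEncodable
  have := Encodable.ofCountable ι
  let 𝒟 (q : countableBasis X × List ι) : Order.Cofinal {ℓ // IsStage G n τ ℓ} :=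
    { carrier := {ℓ | ¬IsMeagre (q.1 ∩ follow n q.2 ⁻¹' labelled ℓ.1)}
      isCofinal := fun ℓ => by
        obtain ⟨ℓ', hle, hℓ', hU⟩ := ℓ.2.exists_extension_not_isMeagre hG hn hmeas hι hτ
          (isOpen_of_mem_countableBasis q.1.2) (nonempty_of_mem_countableBasis q.1.2) q.2
        exact ⟨⟨ℓ', hℓ'⟩, hU, hle⟩ }
  let c : ℕ → {ℓ // IsStage G n τ ℓ} :=
    Order.sequenceOfCofinals ⟨fun _ => Part.none, isStage_none G n τ⟩ 𝒟
  exact ⟨⟨fun k => (c k).1, Order.sequenceOfCofinals.monotone _ 𝒟⟩, fun k => (c k).2,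
    fun U hU w => ⟨_, Order.sequenceOfCofinals.encode_mem _ 𝒟 (⟨U, hU⟩, w)⟩⟩

theorem exists_coherent_labelling_residual : ∃ ℓ : X → Part (Equiv.Perm ι),
    IsCoherent G n τ ℓ ∧ IsMeasurableLabelling ℓ ∧
      ∀ w, follow n w ⁻¹' labelled ℓ ∈ residual X := by
  obtain ⟨c, hc, hcU⟩ := exists_chain_isStage hG hn hmeas hι hτ
  let ℓ := OmegaCompletePartialOrder.ωSup c
  have hℓ : IsMeasurableLabelling ℓ := isMeasurableLabelling_ωSup fun k => (hc k).measurable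
  refine ⟨ℓ, isCoherent_ωSup fun k => (hc k).coherent, hℓ, fun w =>
    mem_residual_of_forall_not_isMeagre_inter (measurable_follow hmeas w hℓ.measurableSet_labelled)
      fun U hU h => ?_⟩
  obtain ⟨k, hk⟩ := hcU U hU w
  exact hk (h.mono (inter_subset_inter_right U
    (preimage_mono fun x hx => mem_labelled_ωSup.2 ⟨k, hx⟩)))

end Baire

section Free

variable {V α : Type*} {G : SimpleGraph V} {F : α × Bool → Equiv.Perm V}
  {L : List (α × Bool)}

theorem reachable_and_dist_prod_eq_length (hG : G.IsAcyclic) (hadj : ∀ l x, G.Adj x (F l x))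
    (hinj : ∀ x, Function.Injective fun l => F l x) (hinv : ∀ a b, F (a, !b) = (F (a, b))⁻¹)
    (x : V) (hL : FreeGroup.IsReduced L) :
    G.Reachable x ((L.map F).prod x) ∧ G.dist x ((L.map F).prod x) = L.length := by
  induction L using List.twoStepInduction with
  | nil => simp
  | singleton a => simpa using ⟨(hadj a x).reachable, hadj a x⟩
  | cons_cons a b L ih ih' =>
    obtain ⟨hab, hbL⟩ := FreeGroup.isReduced_cons_cons.1 hL
    obtain ⟨hxy, hdisty⟩ := ih' b hbL
    obtain ⟨-, hdistz⟩ := ih hbL.tail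
    simp only [List.map_cons, List.prod_cons, Equiv.Perm.mul_apply, List.length_cons]
      at hxy hdisty hdistz ⊢
    set z := (L.map F).prod x
    refine ⟨hxy.trans (hadj a _).reachable, ?_⟩
    rcases hG.dist_eq_dist_add_one_of_adj_of_reachable x (hadj a _) hxy with h | h
    · have hback : F a (F b z) = z :=
        eq_of_adj_of_dist_lt hG hxy (hadj a _).symm (hadj b z) (by omega) (by omega)
      have hcancel : a = (b.1, !b.2) := hinj (F b z) <|
        calc F a (F b z) = (F b)⁻¹ (F b z) := hback.trans ((F b).symm_apply_apply z).symm
          _ = F (b.1, !b.2) (F b z) := by rw [hinv]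
      simp [hcancel] at hab
    · omega

theorem lift_apply_ne_self_of_isAcyclic (hG : G.IsAcyclic) (hadj : ∀ l x, G.Adj x (F l x))
    (hinj : ∀ x, Function.Injective fun l => F l x) (hinv : ∀ a b, F (a, !b) = (F (a, b))⁻¹)
    {w : FreeGroup α} (hw : w ≠ 1) (x : V) : FreeGroup.lift (fun a => F (a, true)) w x ≠ x := by
  classical
  have hF : (fun l : α × Bool => cond l.2 (F (l.1, true)) (F (l.1, true))⁻¹) = F := by
    funext ⟨a, b⟩
    cases b
    · exact (hinv a true).symm
    · rfl
  have hdist := (reachable_and_dist_prod_eq_length hG hadj hinj hinv x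
    (FreeGroup.isReduced_toWord (x := w))).2
  intro hx
  rw [← FreeGroup.mk_toWord (x := w), FreeGroup.lift_mk, hF] at hx
  rw [hx, dist_self] at hdist
  exact hw (FreeGroup.toWord_eq_nil_iff.1 (List.length_eq_zero_iff.1 hdist.symm))

end Free

section Enumeration

theorem exists_strictMono_range_eq {β : Type*} [LinearOrder β] {d : ℕ} {S : Set β}
    (hS : S.encard = d) : ∃ f : Fin d → β, StrictMono f ∧ range f = S := by
  have hfin : S.Finite := finite_of_encard_eq_coe hS
  have hcard : hfin.toFinset.card = d := by
    rw [hfin.encard_eq_coe_toFinset_card] at hS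
    exact_mod_cast hS
  exact ⟨_, (hfin.toFinset.orderEmbOfFin hcard).strictMono, by simp⟩

theorem exists_measurable_of_injOn_fst {X Y : Type*} [MeasurableSpace X] [StandardBorelSpace X]
    [MeasurableSpace Y] [StandardBorelSpace Y] [Nonempty Y] {S : Set (X × Y)}
    (hS : MeasurableSet S) (hinj : InjOn Prod.fst S) :
    ∃ g : X → Y, Measurable g ∧ ∀ p ∈ S, g p.1 = p.2 := by
  have := hS.standardBorel
  have hfst : MeasurableEmbedding fun p : S => p.1.1 :=
    (measurable_fst.comp measurable_subtype_coe).measurableEmbedding (injOn_iff_injective.1 hinj)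
  obtain ⟨g, hg, hgS⟩ := hfst.exists_measurable_extend
    (measurable_snd.comp measurable_subtype_coe) fun _ => ‹Nonempty Y›
  exact ⟨g, hg, fun p hp => congrFun hgS ⟨p, hp⟩⟩

variable {X ι : Type*} [MeasurableSpace X] [StandardBorelSpace X] {C : Set X} {G : SimpleGraph X}

theorem exists_measurable_injective_range_eq_neighborSet {d : ℕ} (hC : MeasurableSet C)
    (hGmeas : MeasurableSet {p : X × X | G.Adj p.1 p.2})
    (hreg : ∀ x ∈ C, (G.neighborSet x).encard = d) :
    ∃ g : X → Fin d → X, Measurable g ∧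
      ∀ x ∈ C, (g x).Injective ∧ range (g x) = G.neighborSet x := by
  rcases isEmpty_or_nonempty X with hX | hX
  · exact ⟨isEmptyElim, measurable_of_empty _, isEmptyElim⟩
  obtain ⟨e, he⟩ := exists_measurableEmbedding_real X
  let S : Set (X × (Fin d → X)) :=
    {p | p.1 ∈ C ∧ (∀ i, G.Adj p.1 (p.2 i)) ∧ ∀ i j, i < j → e (p.2 i) < e (p.2 j)}
  have hS : MeasurableSet S := by
    refine measurableSet_setOfPred.2 ((measurable_fst hC).mem.and (.and (.forall fun i => ?_)
      (.forall fun i => .forall fun j => measurable_const.imp ?_)))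
    · have hpair : Measurable fun p : X × (Fin d → X) => (p.1, p.2 i) :=
        measurable_fst.prodMk ((measurable_pi_apply i).comp measurable_snd)
      exact (hpair hGmeas).mem
    · have heval (i : Fin d) : Measurable fun p : X × (Fin d → X) => e (p.2 i) :=
        he.measurable.comp ((measurable_pi_apply i).comp measurable_snd)
      exact measurableSet_setOfPred.1 (measurableSet_lt (heval i) (heval j))
  have hrange : ∀ p ∈ S, p.2.Injective ∧ range p.2 = G.neighborSet p.1 := by
    rintro ⟨x, y⟩ ⟨hx, hadj, hmono⟩
    have hyinj : y.Injective := (StrictMono.injective fun i j => hmono i j).of_comp (f := e)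
    refine ⟨hyinj, (finite_range y).eq_of_subset_of_encard_le (range_subset_iff.2 hadj) ?_⟩
    rw [hreg x hx, ← image_univ, hyinj.encard_image, encard_univ, ENat.card_eq_coe_natCard,
      Nat.card_fin]
  have hinj : InjOn Prod.fst S := by
    rintro ⟨x, y⟩ hp ⟨_, y'⟩ hp' rfl
    have hey : e ∘ y = e ∘ y' := by
      refine (StrictMono.range_inj (fun i j => hp.2.2 i j) fun i j => hp'.2.2 i j).1 ?_
      change range (e ∘ y) = range (e ∘ y')
      rw [range_comp, range_comp, (hrange _ hp).2, (hrange _ hp').2]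
    exact congrArg (Prod.mk x) (he.injective.comp_left hey)
  obtain ⟨g, hg, hgS⟩ := exists_measurable_of_injOn_fst hS hinj
  refine ⟨g, hg, fun x hx => ?_⟩
  obtain ⟨f, hf, hfrange⟩ := exists_strictMono_range_eq
    ((he.injective.encard_image _).trans (hreg x hx))
  have hmem (i : Fin d) : ∃ y, G.Adj x y ∧ e y = f i := hfrange.subset (mem_range_self i)
  choose y hadj hy using hmem
  have hxy : (x, y) ∈ S := ⟨hx, hadj, fun i j hij => by simpa only [hy] using hf hij⟩
  exact hgS _ hxy ▸ hrange _ hxy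

theorem exists_measurable_neighborEnum [Finite ι] (hC : MeasurableSet C)
    (hsupp : ∀ x y, G.Adj x y → x ∈ C) (hGmeas : MeasurableSet {p : X × X | G.Adj p.1 p.2})
    (hreg : ∀ x ∈ C, (G.neighborSet x).encard = ENat.card ι) :
    ∃ n : ι → X → X, (∀ i, Measurable (n i)) ∧ IsNeighborEnum G n ∧
      ∀ x ∈ C, ∀ i, G.Adj x (n i x) := by
  classical
  obtain ⟨g, hg, hgC⟩ := exists_measurable_injective_range_eq_neighborSet (d := Nat.card ι)
    hC hGmeas (by simpa only [ENat.card_eq_coe_natCard] using hreg)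
  let e : ι ≃ Fin (Nat.card ι) := Finite.equivFin ι
  let n (i : ι) (x : X) : X := if x ∈ C then g x (e i) else x
  have hn {x : X} (hx : x ∈ C) (i : ι) : n i x = g x (e i) := if_pos hx
  have hadj : ∀ x ∈ C, ∀ i, G.Adj x (n i x) := fun x hx i =>
    (hgC x hx).2.subset ⟨e i, (hn hx i).symm⟩
  refine ⟨n, fun i => ((measurable_pi_apply (e i)).comp hg).ite hC measurable_id,
    ⟨fun x i => ?_, fun x y hxy => ?_⟩, hadj⟩
  · exact (em (x ∈ C)).imp (fun hx => hadj x hx i) fun hx => if_neg hx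
  · have hx := hsupp x y hxy
    obtain ⟨k, rfl⟩ := (hgC x hx).2.superset hxy
    refine ⟨e.symm k, by simp [hn hx], fun i hi => e.eq_symm_apply.2 ((hgC x hx).1 ?_)⟩
    exact (hn hx i).symm.trans hi

end Enumeration

section Permutation

variable {V ι : Type*} {G : SimpleGraph V} {n : ι → V → V} {τ : ι → ι}
  {ℓ : V → Part (Equiv.Perm ι)} {A : Set V} {x y z : V} {l : ι}

theorem EdgeLabel.right_unique (h : EdgeLabel G n ℓ x y l) (h' : EdgeLabel G n ℓ x z l) :
    y = z := by
  obtain ⟨-, σ, hσ, i, rfl, rfl⟩ := h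
  obtain ⟨-, σ', hσ', j, rfl, hij⟩ := h'
  obtain rfl := Part.mem_unique hσ hσ'
  rw [σ.injective hij]

theorem exists_perm_forall_edgeLabel (hn : IsNeighborEnum G n) (hτ : Function.Involutive τ)
    (hℓ : IsCoherent G n τ ℓ) (hA : ∀ x y, G.Adj x y → x ∈ A → y ∈ A) (hAℓ : A ⊆ labelled ℓ)
    (hadj : ∀ x ∈ A, ∀ i, G.Adj x (n i x)) :
    ∃ F : ι → Equiv.Perm A,
      (∀ l (x : A), EdgeLabel G n ℓ x (F l x) l) ∧ ∀ l, F (τ l) = (F l)⁻¹ := by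
  have hex (l : ι) (x : A) : ∃ y : A, EdgeLabel G n ℓ x y l := by
    obtain ⟨σ, hσ⟩ := mem_labelled.1 (hAℓ x.2)
    have hxi := hadj x x.2 (σ.symm l)
    exact ⟨⟨_, hA _ _ hxi x.2⟩, hxi, σ, hσ, _, rfl, σ.apply_symm_apply l⟩
  choose φ hφ using hex
  have hback (l : ι) (x : A) : φ (τ l) (φ l x) = x := by
    obtain ⟨l', hl'⟩ := exists_edgeLabel hn (hAℓ (φ l x).2) (hφ l x).1.symm
    obtain rfl := hℓ.reverse _ _ _ _ (hφ l x) hl'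
    exact Subtype.ext ((hφ _ _).right_unique hl')
  refine ⟨fun l => ⟨φ l, φ (τ l), hback l, fun x => ?_⟩, hφ, fun l => Equiv.ext fun x => rfl⟩
  simpa only [hτ l] using hback (τ l) x

theorem measurable_of_edgeLabel {X Y : Type*} [MeasurableSpace X] [MeasurableEq X]
    [MeasurableSpace Y] [Finite ι] {G : SimpleGraph X} {n : ι → X → X}
    {ℓ : X → Part (Equiv.Perm ι)} {f g : Y → X} (hn : IsNeighborEnum G n)
    (hmeas : ∀ i, Measurable (n i)) (hℓ : IsMeasurableLabelling ℓ) (hf : Measurable f)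
    (hfg : ∀ z, EdgeLabel G n ℓ (f z) (g z) l) : Measurable g := by
  intro B hB
  have hpre : g ⁻¹' B = {z | ∃ i, EdgeLabel G n ℓ (f z) (n i (f z)) l ∧ n i (f z) ∈ B} := by
    ext z
    constructor
    · intro hz
      obtain ⟨i, hi, -⟩ := hn.existsUnique _ _ (hfg z).1
      exact ⟨i, hi ▸ hfg z, hi ▸ hz⟩
    · rintro ⟨i, hi, hiB⟩
      rwa [mem_preimage, (hfg z).right_unique hi]
  rw [hpre]
  refine measurableSet_setOfPred.2 (.exists fun i => ?_)
  have hi := (hmeas i).comp hf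
  exact (measurable_edgeLabel hn hmeas hℓ hf hi l).and (hi hB).mem

end Permutation

section Schreier

variable {X ι : Type*} [TopologicalSpace X] [MeasurableSpace X] [BorelSpace X] [Finite ι]
  {G : SimpleGraph X} {n : ι → X → X} {C : Set X} {τ : ι → ι}

theorem exists_invariant_coherent_labelling [T2Space X] [SecondCountableTopology X] [BaireSpace X]
    (hG : G.IsAcyclic) (hn : IsNeighborEnum G n) (hmeas : ∀ i, Measurable (n i))
    (hι : 3 ≤ ENat.card ι) (hτ : Function.Involutive τ) (hC : MeasurableSet C)
    (hCres : C ∈ residual X) (hCinv : ∀ x y, G.Adj x y → y ∈ C) :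
    ∃ A ⊆ C, MeasurableSet A ∧ A ∈ residual X ∧ (∀ x y, G.Adj x y → x ∈ A → y ∈ A) ∧
      ∃ ℓ, IsCoherent G n τ ℓ ∧ IsMeasurableLabelling ℓ ∧ A ⊆ labelled ℓ := by
  obtain ⟨ℓ, hcoh, hℓ, hres⟩ := exists_coherent_labelling_residual hG hn hmeas hι hτ
  refine ⟨C ∩ ⋂ w, follow n w ⁻¹' labelled ℓ, inter_subset_left, ?_, ?_, ?_, ℓ, hcoh, hℓ, ?_⟩
  · exact hC.inter (.iInter fun w => measurable_follow hmeas w hℓ.measurableSet_labelled)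
  · exact Filter.inter_mem hCres (countable_iInter_mem.2 hres)
  · rintro x y hxy ⟨-, hx⟩
    obtain ⟨i, rfl, -⟩ := hn.existsUnique x y hxy
    exact ⟨hCinv x _ hxy, mem_iInter.2 fun w => mem_iInter.1 hx (i :: w)⟩
  · exact fun x hx => mem_iInter.1 hx.2 []

theorem exists_measurable_perm_generating [PolishSpace X] (hG : G.IsAcyclic)
    (hC : MeasurableSet C) (hCres : C ∈ residual X) (hsupp : ∀ x y, G.Adj x y → x ∈ C)
    (hGmeas : MeasurableSet {p : X × X | G.Adj p.1 p.2})
    (hreg : ∀ x ∈ C, (G.neighborSet x).encard = ENat.card ι) (hι : 3 ≤ ENat.card ι)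
    (hτ : Function.Involutive τ) :
    ∃ A ⊆ C, MeasurableSet A ∧ A ∈ residual X ∧ (∀ x y, G.Adj x y → x ∈ A → y ∈ A) ∧
      ∃ F : ι → Equiv.Perm A, (∀ l, Measurable (F l)) ∧ (∀ l, F (τ l) = (F l)⁻¹) ∧
        (∀ x, Function.Injective fun l => F l x) ∧
        ∀ x y : A, G.Adj x y ↔ ∃ l, F l x = y := by
  obtain ⟨n, hmeas, hn, hadj⟩ := exists_measurable_neighborEnum hC hsupp hGmeas hreg
  obtain ⟨A, hAC, hA, hAres, hAinv, ℓ, hcoh, hℓ, hAℓ⟩ := exists_invariant_coherent_labelling hG hn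
    hmeas hι hτ hC hCres fun x y hxy => hsupp y x hxy.symm
  obtain ⟨F, hF, hFτ⟩ := exists_perm_forall_edgeLabel hn hτ hcoh hAinv hAℓ fun x hx =>
    hadj x (hAC hx)
  refine ⟨A, hAC, hA, hAres, hAinv, F, fun l => ?_, hFτ, fun x l l' h => ?_, fun x y => ?_⟩
  · exact (measurable_of_edgeLabel hn hmeas hℓ measurable_subtype_coe (hF l)).subtype_mk
  · exact (hF l x).unique hn ((congrArg Subtype.val h : (F l x : X) = F l' x) ▸ hF l' x)
  · refine ⟨fun hxy => ?_, fun ⟨l, hl⟩ => hl ▸ (hF l x).1⟩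
    obtain ⟨l, hl⟩ := exists_edgeLabel hn (hAℓ x.2) hxy
    exact ⟨l, Subtype.ext ((hF l x).right_unique hl)⟩

end Schreier

end TreeLabelling

open TreeLabelling in
theorem free_F2_action_on_four_regular_tree_general {X α : Type*} [TopologicalSpace X]
    [PolishSpace X] [MeasurableSpace X] [BorelSpace X] [Finite α] [Nontrivial α] (C : Set X)
    (hCBorel : MeasurableSet C) (hCcomeager : C ∈ residual X) (G : SimpleGraph X)
    (hsupp : ∀ x y, G.Adj x y → x ∈ C) (hGBorel : MeasurableSet {p : X × X | G.Adj p.1 p.2})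
    (hreg : ∀ x ∈ C, (G.neighborSet x).encard = 2 * ENat.card α) (hacyclic : G.IsAcyclic) :
    ∃ A : Set X, A ⊆ C ∧ MeasurableSet A ∧ A ∈ residual X ∧
      (∀ x y, G.Adj x y → (x ∈ A ↔ y ∈ A)) ∧
      ∃ f : α → Equiv.Perm A, (∀ a, Measurable (f a)) ∧ (∀ a, Measurable (f a).symm) ∧
        (∀ x, Function.Injective fun a => f a x) ∧
        (∀ w ≠ 1, ∀ x, FreeGroup.lift f w x ≠ x) ∧
        ∀ x y : A, G.Adj x y ↔ ∃ a, f a x = y ∨ f a y = x := by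
  have hcard : ENat.card (α × Bool) = 2 * ENat.card α := by
    simp [ENat.card_prod, mul_comm]
  have hι : 3 ≤ ENat.card (α × Bool) := by
    have hα : 2 ≤ ENat.card α := Order.add_one_le_of_lt ENat.one_lt_card
    calc
      3 ≤ 2 * 2 := by norm_num
      _ ≤ 2 * ENat.card α := by gcongr
      _ = ENat.card (α × Bool) := hcard.symm
  obtain ⟨A, hAC, hA, hAres, hAinv, F, hF, hFinv, hinj, hadj⟩ :=
    exists_measurable_perm_generating hacyclic hCBorel hCcomeager hsupp hGBorel (hcard ▸ hreg)
      hι (τ := Prod.map id not) fun l => Prod.ext rfl l.2.not_not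
  have hinv (a : α) (b : Bool) : F (a, !b) = (F (a, b))⁻¹ := hFinv (a, b)
  refine ⟨A, hAC, hA, hAres, fun x y hxy => ⟨hAinv x y hxy, hAinv y x hxy.symm⟩,
    fun a => F (a, true), fun a => hF _, fun a => ?_, fun x a a' h => ?_, fun w hw x => ?_,
    fun x y => ?_⟩
  · have hsymm : (F (a, true)).symm = F (a, false) := (hinv a true).symm
    exact hsymm ▸ hF (a, false)
  · exact congrArg Prod.fst (hinj x h)
  · exact lift_apply_ne_self_of_isAcyclic (hacyclic.induce A) (fun l x => (hadj x _).2 ⟨l, rfl⟩)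
      hinj hinv hw x
  · have hfalse (a : α) : F (a, false) x = y ↔ F (a, true) y = x := by
      rw [← Bool.not_true, hinv, Equiv.Perm.inv_eq_iff_eq, eq_comm]
    simp only [hadj, Prod.exists, Bool.exists_bool, hfalse, or_comm]

/-- **Lemma (Marks–Unger).** Suppose `G` is an acyclic `4`-regular Borel graph on a comeager
Borel subset `C` of a Polish space `X`. Then there is a `G`-invariant comeager Borel set
`A ⊆ C` and a free Borel action of `F₂` on `A` generating `G ↾ A`: there are Borel
automorphisms `f₁, f₂` of `A` with `f₁ x ≠ f₂ x` for all `x ∈ A`, generating a free action of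
`F₂`, such that the edges of `G ↾ A` are exactly the pairs `{x, f₁ x}` and `{x, f₂ x}`. -/
theorem free_F2_action_on_four_regular_tree {X : Type*} [TopologicalSpace X] [PolishSpace X]
    [MeasurableSpace X] [BorelSpace X]
    (C : Set X) (hCBorel : MeasurableSet C) (hCcomeager : C ∈ residual X)
    (G : SimpleGraph X)
    (hsupp : ∀ x y : X, G.Adj x y → x ∈ C ∧ y ∈ C)
    (hGBorel : MeasurableSet {p : X × X | G.Adj p.1 p.2})
    (hreg : ∀ x ∈ C, (G.neighborSet x).ncard = 4)
    (hacyclic : G.IsAcyclic) :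
    ∃ A : Set X, A ⊆ C ∧ MeasurableSet A ∧ A ∈ residual X ∧
      (∀ x y : X, G.Adj x y → (x ∈ A ↔ y ∈ A)) ∧
      ∃ f₁ f₂ : Equiv.Perm A,
        -- `f₁`, `f₂` and their inverses are Borel
        Measurable (fun x : A => (f₁ x : X)) ∧ Measurable (fun x : A => (f₁.symm x : X)) ∧
        Measurable (fun x : A => (f₂ x : X)) ∧ Measurable (fun x : A => (f₂.symm x : X)) ∧
        -- `f₁ x` and `f₂ x` are distinct `G`-neighbors of `x`
        (∀ x : A, f₁ x ≠ f₂ x) ∧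
        (∀ x : A, G.Adj (x : X) (f₁ x : X)) ∧
        (∀ x : A, G.Adj (x : X) (f₂ x : X)) ∧
        -- the action of `F₂` generated by `f₁` and `f₂` is free
        (∀ w : FreeGroup (Fin 2), w ≠ 1 → ∀ x : A, (FreeGroup.lift ![f₁, f₂]) w x ≠ x) ∧
        -- the edges of `G ↾ A` are exactly the pairs `{x, f₁ x}` and `{x, f₂ x}` for `x ∈ A`
        (∀ x y : A, G.Adj (x : X) (y : X) ↔
          (f₁ x = y ∨ f₂ x = y ∨ f₁ y = x ∨ f₂ y = x)) := by
  have hsupp' : ∀ x y, G.Adj x y → x ∈ C := fun x y hxy => (hsupp x y hxy).1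
  have hreg' : ∀ x ∈ C, (G.neighborSet x).encard = 2 * ENat.card (Fin 2) := fun x hx => by
    have hfin : (G.neighborSet x).Finite := Set.finite_of_ncard_ne_zero (by simp [hreg x hx])
    rw [← hfin.cast_ncard_eq, hreg x hx]
    norm_num
  obtain ⟨A, hAC, hA, hAres, hAinv, f, hf, hfsymm, hinj, hfree, hadj⟩ :=
    free_F2_action_on_four_regular_tree_general (α := Fin 2) C hCBorel hCcomeager G hsupp' hGBorel
      hreg' hacyclic
  have hGf (i : Fin 2) (x : A) : G.Adj (x : X) (f i x : X) := (hadj _ _).2 ⟨i, Or.inl rfl⟩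
  have hvec : ![f 0, f 1] = f := List.ofFn_inj.1 rfl
  refine ⟨A, hAC, hA, hAres, hAinv, f 0, f 1, (hf 0).subtype_val, (hfsymm 0).subtype_val,
    (hf 1).subtype_val, (hfsymm 1).subtype_val, fun x h => zero_ne_one (hinj x h), hGf 0, hGf 1,
    fun w hw x => hvec ▸ hfree w hw x, fun x y => ?_⟩
  rw [hadj, Fin.exists_fin_two]
  tauto
end
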